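/- (Sharpness of the fixed point bound) Let d ≥ 2 and 1 ≤ n ≤ d be integers and let μ₁, …, μ_n be positive integers with μ₁ + ⋯ + μ_n = d. Then there exist distinct points z₁, …, z_n ∈ ℂ and a polynomial p ∈ ℂ[z] with deg p ≤ d that is coprime to q := ∏_{j=1}^n (z − z_j)^{μ_j} (so the rational function r = p/q has degree d, satisfies r(∞) ≠ ∞, and has exactly n poles, of multiplicities μ₁, …, μ_n), such that the set {z ∈ ℂ : q(z) ≠ 0 and p(z) = conj(z)·q(z)} is finite with exactly min(3d + 2n − 3, 5d − 5) elements. -/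

import Mathlib

open Polynomial

/-- The set of finite fixed points of `z ↦ conj(r(z))` for the rational function
`r = p/q`: points `z` with `q(z) ≠ 0` and `p(z) = conj(z)·q(z)`. -/
def fixedPts (p q : Polynomial ℂ) : Set ℂ :=
  {z | q.eval z ≠ 0 ∧ p.eval z = (starRingEnd ℂ) z * q.eval z}

/-!
Write `q = ∏ (v - x_j) ^ μ_j` and `D = ∑ μ_j`. For `t > 0` the nonzero zeros of
`F_t(v) = q(v) (1 - t|v|²) - q(0)` are the solutions of `r(v) = conj v`, where
`r = (q - q(0)) / (t v q)`. As `t → 0`, `2 D` of these zeros escape to infinity along the circle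
`|v| = t^(-1/2)`, and the others approach the level set `q = q(0)`. A simple point of this level set
contributes one zero. A point `ω` of multiplicity `m + 1` contributes `m + 3` of them, as the
equation `a Z^(m+1) = b conj Z` does, provided that the poles are moved along with `t` so that the
holomorphic part of `F_t` stays flat near `ω`; by the implicit function theorem this is possible
when all critical points of `q` other than the poles lie on the level. With `n - 1` simple critical
points this gives `3 D + 2 n - 3` fixed points. Such poles exist when `2 n ≤ D + 1`, because they
are the solutions of an underdetermined system of polynomial equations.

If `2 n > D + 1`, then some pole is simple. Realize the other multiplicities by a function with a
single critical point of multiplicity `n - 2`, hence with a fixed point `w` where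
`r - conj w` vanishes to order `n - 1`, and add `ε / (z - w)` for small `ε`: the fixed point `w` is
replaced by `2 n` new ones on a circle of radius about `√|ε|`. This needs a multiple pole. If all
poles are simple, split a double pole of a function with `n - 1` poles instead.
-/

namespace FixedPointCount

open Filter Topology Function

/-! ### Nondegenerate zeros -/

section ZeroCount

variable {V : Type*} [NormedAddCommGroup V] [NormedSpace ℝ V]

/-- `f` is real differentiable at `z` with injective derivative. In finite dimension such a zero of
`f` is isolated and persists under `C¹` perturbations. -/
def NondegenerateAt (f : V → V) (z : V) : Prop :=
  ∃ f' : V →L[ℝ] V, HasFDerivAt f f' z ∧ Injective f'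

/-- `f` has exactly `N` zeros in `S`, all of them nondegenerate. -/
def HasZeroCount (f : V → V) (S : Set V) (N : ℕ) : Prop :=
  {z ∈ S | f z = 0}.encard = N ∧ ∀ z ∈ S, f z = 0 → NondegenerateAt f z

namespace HasZeroCount

variable {f : V → V} {S T : Set V} {M N : ℕ}

theorem union (hS : HasZeroCount f S M) (hT : HasZeroCount f T N) (hST : Disjoint S T) :
    HasZeroCount f (S ∪ T) (M + N) := by
  refine ⟨?_, fun z hz hz0 => hz.elim (hS.2 z · hz0) (hT.2 z · hz0)⟩
  have hunion : {z ∈ S ∪ T | f z = 0} = {z ∈ S | f z = 0} ∪ {z ∈ T | f z = 0} :=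
    Set.sep_union
  rw [hunion, Set.encard_union_eq (hST.mono (Set.sep_subset ..) (Set.sep_subset ..)), hS.1, hT.1,
    Nat.cast_add]

theorem biUnion {ι : Type*} {S : ι → Set V} {N : ι → ℕ} (h : ∀ i, HasZeroCount f (S i) (N i))
    (hS : Pairwise (Disjoint on S)) (s : Finset ι) :
    HasZeroCount f (⋃ i ∈ s, S i) (∑ i ∈ s, N i) := by
  classical
  induction s using Finset.induction_on with
  | empty => exact ⟨by simp, by simp⟩
  | insert a s ha ih =>
    rw [Finset.set_biUnion_insert, Finset.sum_insert ha]
    refine (h a).union ih (Set.disjoint_iUnion₂_right.2 fun i hi => hS ?_)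
    rintro rfl
    exact ha hi

theorem congr_set (h : HasZeroCount f S N) (hST : ∀ z, f z = 0 → (z ∈ S ↔ z ∈ T)) :
    HasZeroCount f T N := by
  refine ⟨?_, fun z hz hz0 => h.2 z ((hST z hz0).2 hz) hz0⟩
  rw [← h.1]
  congr 1
  ext z
  exact and_congr_left fun hz0 => (hST z hz0).symm

theorem diff_singleton {z₀ : V} (h : HasZeroCount f S (N + 1)) (hz₀ : z₀ ∈ S) (h0 : f z₀ = 0) :
    HasZeroCount f (S \ {z₀}) N := by
  refine ⟨?_, fun z hz => h.2 z hz.1⟩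
  have hinsert : {z ∈ S | f z = 0} = insert z₀ {z ∈ S \ {z₀} | f z = 0} := by
    ext z
    by_cases hz : z = z₀ <;> simp [hz, h0, hz₀]
  have hcard := h.1
  rw [hinsert, Set.encard_insert_of_notMem (by simp)] at hcard
  apply ENat.add_left_injective_of_ne_top ENat.one_ne_top
  simpa using hcard

end HasZeroCount

variable {E : Type*} [NormedAddCommGroup E] [NormedSpace ℝ E] {G : E × V → V} {π₀ : E} {z : V}

theorem NondegenerateAt.injective_fderiv_comp_inr (hz : NondegenerateAt (fun v => G (π₀, v)) z)
    (hG : ContDiffAt ℝ 1 G (π₀, z)) :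
    Injective (fderiv ℝ G (π₀, z) ∘L .inr ℝ E V) := by
  obtain ⟨f', hf', hinj⟩ := hz
  have hpartial : HasFDerivAt (fun v => G (π₀, v)) (fderiv ℝ G (π₀, z) ∘L .inr ℝ E V) z :=
    (hG.differentiableAt one_ne_zero).hasFDerivAt.comp z (hasFDerivAt_prodMk_right π₀ z)
  rwa [hf'.unique hpartial] at hinj

variable [FiniteDimensional ℝ V]

theorem isInvertible_of_injective {A : V →L[ℝ] V} (hA : Injective A) : A.IsInvertible := by
  refine ⟨(LinearEquiv.ofInjectiveEndo (A : V →ₗ[ℝ] V) hA).toContinuousLinearEquiv, ?_⟩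
  ext
  rfl

theorem NondegenerateAt.exists_zero_branch [CompleteSpace E]
    (hz : NondegenerateAt (fun v => G (π₀, v)) z) (hz0 : G (π₀, z) = 0)
    (hG : ContDiffAt ℝ 1 G (π₀, z)) :
    ∃ ψ : E → V, Tendsto ψ (𝓝 π₀) (𝓝 z) ∧ (∀ᶠ π in 𝓝 π₀, G (π, ψ π) = 0) ∧
      ∀ᶠ u in 𝓝 (π₀, z), G u = 0 → ψ u.1 = u.2 := by
  have : CompleteSpace V := FiniteDimensional.complete ℝ V
  have hstrict := hG.hasStrictFDerivAt one_ne_zero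
  have hinv := isInvertible_of_injective (hz.injective_fderiv_comp_inr hG)
  refine ⟨hstrict.implicitFunctionOfProdDomain hinv,
    hstrict.tendsto_implicitFunctionOfProdDomain hinv, ?_, ?_⟩
  · simpa only [hz0] using hstrict.eventually_apply_implicitFunctionOfProdDomain hinv
  · filter_upwards [hstrict.eventually_apply_eq_iff_implicitFunctionOfProdDomain hinv]
      with u hu hu0
    exact hu.1 (hu0.trans hz0.symm)

theorem NondegenerateAt.eventually (hz : NondegenerateAt (fun v => G (π₀, v)) z)
    (hG : ContDiffAt ℝ 1 G (π₀, z)) :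
    ∀ᶠ u in 𝓝 (π₀, z), NondegenerateAt (fun v => G (u.1, v)) u.2 := by
  have hdiff : ∀ᶠ u in 𝓝 (π₀, z), DifferentiableAt ℝ G u :=
    (hG.eventually (by simp)).mono fun u hu => hu.differentiableAt one_ne_zero
  have hcont : ContinuousAt (fun u => fderiv ℝ G u ∘L .inr ℝ E V) (π₀, z) :=
    (hG.continuousAt_fderiv one_ne_zero).clm_comp continuousAt_const
  have hinj := hcont.eventually
    (ContinuousLinearMap.isOpen_injective.mem_nhds (hz.injective_fderiv_comp_inr hG))
  filter_upwards [hdiff, hinj] with u hu hu'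
  exact ⟨_, hu.hasFDerivAt.comp u.2 (hasFDerivAt_prodMk_right u.1 u.2), hu'⟩

theorem eventually_injOn_of_tendsto {P X Y : Type*} [TopologicalSpace Y] [T2Space Y]
    {l : Filter P} {Z : Set X} (hZ : Z.Finite) {ψ : X → P → Y} {y : X → Y} (hy : Z.InjOn y)
    (hψ : ∀ z ∈ Z, Tendsto (ψ z) l (𝓝 (y z))) : ∀ᶠ π in l, Z.InjOn fun z => ψ z π := by
  have hne : ∀ᶠ π in l, ∀ z ∈ Z, ∀ w ∈ Z, z ≠ w → ψ z π ≠ ψ w π := by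
    refine (hZ.eventually_all).2 fun z hz => (hZ.eventually_all).2 fun w hw => ?_
    by_cases hzw : z = w
    · exact Eventually.of_forall fun π h => absurd hzw h
    · filter_upwards [(hψ z hz).prodMk_nhds (hψ w hw) |>.eventually
        (isClosed_diagonal.isOpen_compl.mem_nhds (hy.ne hz hw hzw))] with π hπ _
      exact hπ
  filter_upwards [hne] with π hπ z hz w hw h
  exact by_contra fun hzw => hπ z hz w hw hzw h

theorem HasZeroCount.eventually_nhds [CompleteSpace E] {K : Set V} {N : ℕ} (hK : IsCompact K)
    (hcont : ∀ v ∈ K, ContinuousAt G (π₀, v))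
    (hzero : ∀ v ∈ K, G (π₀, v) = 0 → ContDiffAt ℝ 1 G (π₀, v) ∧ v ∈ interior K)
    (hN : HasZeroCount (fun v => G (π₀, v)) K N) :
    ∀ᶠ π in 𝓝 π₀, HasZeroCount (fun v => G (π, v)) K N ∧
      ∀ v ∈ K, G (π, v) = 0 → v ∈ interior K := by
  set Z := {z ∈ K | G (π₀, z) = 0}
  have hfin : Z.Finite := Set.finite_of_encard_eq_coe hN.1
  have hbranch : ∀ z : V, ∃ ψ : E → V, z ∈ Z → Tendsto ψ (𝓝 π₀) (𝓝 z) ∧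
      (∀ᶠ π in 𝓝 π₀, G (π, ψ π) = 0) ∧ ∀ᶠ u in 𝓝 (π₀, z), G u = 0 → ψ u.1 = u.2 := by
    intro z
    by_cases hz : z ∈ Z
    · obtain ⟨ψ, hψ⟩ := (hN.2 z hz.1 hz.2).exists_zero_branch hz.2 (hzero z hz.1 hz.2).1
      exact ⟨ψ, fun _ => hψ⟩
    · exact ⟨fun _ => 0, fun h => absurd h hz⟩
  choose ψ hψ using hbranch
  have hcapture : ∀ᶠ π in 𝓝 π₀, ∀ v ∈ K, G (π, v) = 0 →
      (∃ z ∈ Z, ψ z π = v) ∧ NondegenerateAt (fun v => G (π, v)) v ∧ v ∈ interior K := by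
    refine hK.eventually_forall_of_forall_eventually fun y hy => ?_
    by_cases h0 : G (π₀, y) = 0
    · obtain ⟨hG, hint⟩ := hzero y hy h0
      filter_upwards [(hψ y ⟨hy, h0⟩).2.2, (hN.2 y hy h0).eventually hG,
        continuous_snd.continuousAt.eventually (isOpen_interior.mem_nhds hint)] with u h1 h2 h3 hu
      exact ⟨⟨y, ⟨hy, h0⟩, h1 hu⟩, h2, h3⟩
    · exact ((hcont y hy).eventually_ne h0).mono fun u hu hu0 => absurd hu0 hu
  have hpersist : ∀ᶠ π in 𝓝 π₀, ∀ z ∈ Z, G (π, ψ z π) = 0 ∧ ψ z π ∈ interior K :=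
    hfin.eventually_all.2 fun z hz => (hψ z hz).2.1.and ((hψ z hz).1.eventually
      (isOpen_interior.mem_nhds (hzero z hz.1 hz.2).2))
  filter_upwards [hcapture, hpersist,
    eventually_injOn_of_tendsto hfin (Set.injOn_id Z) fun z hz => (hψ z hz).1] with π hcap hper hinj
  refine ⟨⟨?_, fun z hz h0 => (hcap z hz h0).2.1⟩, fun z hz h0 => (hcap z hz h0).2.2⟩
  have himage : {z ∈ K | G (π, z) = 0} = (ψ · π) '' Z := by
    ext v
    refine ⟨fun ⟨hv, h0⟩ => (hcap v hv h0).1, ?_⟩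
    rintro ⟨z, hz, rfl⟩
    exact ⟨interior_subset (hper z hz).2, (hper z hz).1⟩
  rw [himage, hinj.encard_image, hN.1]

end ZeroCount

section Transfer

variable {f g a ψ : ℂ → ℂ} {z : ℂ} {S T : Set ℂ} {N : ℕ}

theorem NondegenerateAt.transfer (hg : NondegenerateAt g z) (hg0 : g z = 0) (ha0 : a z ≠ 0)
    (ha : DifferentiableAt ℝ a z) (hψ : DifferentiableAt ℝ ψ z)
    (hf : DifferentiableAt ℝ f (ψ z)) (hgf : g =ᶠ[𝓝 z] fun w => a w * f (ψ w)) :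
    NondegenerateAt f (ψ z) := by
  have hf0 : f (ψ z) = 0 := (mul_eq_zero.1 (hgf.self_of_nhds.symm.trans hg0)).resolve_left ha0
  obtain ⟨g', hg', hinj⟩ := hg
  set A : ℂ →ₗ[ℝ] ℂ := (fderiv ℝ ψ z).toLinearMap
  set B : ℂ →ₗ[ℝ] ℂ := (fderiv ℝ f (ψ z)).toLinearMap
  have hg'_eq : ∀ x, g' x = a z * B (A x) := by
    intro x
    have hprod := ha.hasFDerivAt.mul (hf.hasFDerivAt.comp z hψ.hasFDerivAt)
    rw [← (hprod.congr_of_eventuallyEq hgf).unique hg']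
    simp [hf0, A, B]
  have hBA : Injective (B ∘ₗ A) := by
    intro x y hxy
    refine hinj ?_
    rw [hg'_eq, hg'_eq]
    exact congrArg (a z * ·) hxy
  have hB : Surjective B := fun y =>
    (LinearMap.injective_iff_surjective.1 hBA y).imp' A fun _ hx => hx
  exact ⟨_, hf.hasFDerivAt, LinearMap.injective_iff_surjective.2 hB⟩

theorem HasZeroCount.transfer (h : HasZeroCount g T N) (a ψ : ℂ → ℂ)
    (hinj : Set.InjOn ψ {z ∈ T | g z = 0}) (hmaps : Set.MapsTo ψ {z ∈ T | g z = 0} S)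
    (hsurj : Set.SurjOn ψ T {w ∈ S | f w = 0}) (ha0 : ∀ z ∈ T, a z ≠ 0)
    (ha : ∀ z ∈ T, DifferentiableAt ℝ a z) (hψ : ∀ z ∈ T, DifferentiableAt ℝ ψ z)
    (hf : ∀ z ∈ T, DifferentiableAt ℝ f (ψ z))
    (hgf : ∀ z ∈ T, g =ᶠ[𝓝 z] fun w => a w * f (ψ w)) : HasZeroCount f S N := by
  have hzero : ∀ z ∈ T, (g z = 0 ↔ f (ψ z) = 0) := fun z hz => by
    rw [(hgf z hz).self_of_nhds, mul_eq_zero, or_iff_right (ha0 z hz)]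
  refine ⟨?_, fun w hw hw0 => ?_⟩
  · have himage : {z ∈ S | f z = 0} = ψ '' {z ∈ T | g z = 0} := by
      ext w
      constructor
      · intro hw
        obtain ⟨z, hz, rfl⟩ := hsurj hw
        exact ⟨z, ⟨hz, (hzero z hz).2 hw.2⟩, rfl⟩
      · rintro ⟨z, hz, rfl⟩
        exact ⟨hmaps hz, (hzero z hz.1).1 hz.2⟩
    rw [himage, hinj.encard_image, h.1]
  · obtain ⟨z, hz, rfl⟩ := hsurj ⟨hw, hw0⟩
    have hz0 := (hzero z hz).2 hw0
    exact (h.2 z hz hz0).transfer hz0 (ha0 z hz) (ha z hz) (hψ z hz) (hf z hz) (hgf z hz)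

end Transfer

/-! ### Zeros near a circle -/

section CircleModel

variable {c : ℝ} {N : ℕ}

/-- The model `(θ, y) ↦ y - c e^{iNθ}` of the zero count near a circle, written in the single
complex variable `z = θ + iy`. -/
noncomputable def circleModel (c : ℝ) (N : ℕ) (z : ℂ) : ℂ :=
  z.im - c * Complex.exp (N * z.re * Complex.I)

/-- The rectangle `[-π/2N, 2π - π/2N] × [-Y, Y]`, one period of `circleModel c N`. The shift by
half a step keeps the zeros of the model off the boundary. -/
noncomputable def periodRect (N : ℕ) (Y : ℝ) : Set ℂ :=
  Set.Icc (-(Real.pi / (2 * N))) (-(Real.pi / (2 * N)) + 2 * Real.pi) ×ℂ Set.Icc (-Y) Y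

/-- The zeros of `circleModel c N`, those with index `j < 2 * N` lying in one period. -/
noncomputable def circleModelZero (c : ℝ) (N j : ℕ) : ℂ :=
  ⟨Real.pi * j / N, c * Real.cos (Real.pi * j)⟩

theorem isCompact_periodRect (N : ℕ) (Y : ℝ) : IsCompact (periodRect N Y) :=
  isCompact_Icc.reProdIm isCompact_Icc

theorem interior_periodRect (N : ℕ) (Y : ℝ) : interior (periodRect N Y) =
    Set.Ioo (-(Real.pi / (2 * N))) (-(Real.pi / (2 * N)) + 2 * Real.pi) ×ℂ Set.Ioo (-Y) Y := by
  rw [periodRect, Complex.interior_reProdIm, interior_Icc, interior_Icc]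

theorem circleModel_eq_zero_iff (hc : c ≠ 0) {z : ℂ} : circleModel c N z = 0 ↔
    Real.sin (N * z.re) = 0 ∧ z.im = c * Real.cos (N * z.re) := by
  have hexp : Complex.exp (N * z.re * Complex.I) =
      (Real.cos (N * z.re) : ℂ) + Real.sin (N * z.re) * Complex.I := by
    rw [Complex.ofReal_cos, Complex.ofReal_sin, ← Complex.exp_mul_I]
    push_cast
    rfl
  rw [circleModel, hexp, Complex.ext_iff]
  generalize Real.cos (N * z.re) = a
  generalize Real.sin (N * z.re) = b
  simp [hc, sub_eq_zero, and_comm]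

theorem nondegenerateAt_circleModel (hc : c ≠ 0) (hN : N ≠ 0) {z : ℂ}
    (hz : circleModel c N z = 0) : NondegenerateAt (circleModel c N) z := by
  obtain ⟨hsin, him⟩ := (circleModel_eq_zero_iff hc).1 hz
  have him0 : z.im ≠ 0 := by
    have hcos : Real.cos (N * z.re) ≠ 0 := fun h => by
      have := Real.sin_sq_add_cos_sq (N * z.re)
      norm_num [hsin, h] at this
    exact him ▸ mul_ne_zero hc hcos
  have hderiv_im : HasFDerivAt (fun z : ℂ => (z.im : ℂ))
      (Complex.ofRealCLM ∘L Complex.imCLM) z := (Complex.ofRealCLM ∘L Complex.imCLM).hasFDerivAt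
  have hderiv_re : HasFDerivAt (fun z : ℂ => (z.re : ℂ))
      (Complex.ofRealCLM ∘L Complex.reCLM) z := (Complex.ofRealCLM ∘L Complex.reCLM).hasFDerivAt
  refine ⟨_, hderiv_im.sub
    (((hderiv_re.const_mul (N : ℂ)).mul_const Complex.I).cexp.const_mul (c : ℂ)), ?_⟩
  rw [injective_iff_map_eq_zero]
  intro w hw
  have hw0 : (w.im : ℂ) - z.im * (N * w.re * Complex.I) = 0 := by
    rw [sub_eq_zero.1 hz, ← hw]
    simp only [sub_apply, smul_apply, ContinuousLinearMap.comp_apply, Complex.ofRealCLM_apply,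
      Complex.imCLM_apply, Complex.reCLM_apply, smul_eq_mul]
    ring
  have hre := congrArg Complex.re hw0
  have him := congrArg Complex.im hw0
  simp only [Complex.sub_re, Complex.ofReal_re, Complex.mul_re, Complex.natCast_re,
    Complex.natCast_im, Complex.ofReal_im, Complex.I_re, Complex.I_im, Complex.mul_im,
    Complex.sub_im, Complex.zero_re, Complex.zero_im] at hre him
  refine Complex.ext ?_ (by simpa using hre)
  simpa [him0, hN] using him

theorem circleModel_circleModelZero (hc : c ≠ 0) (hN : N ≠ 0) (j : ℕ) :
    circleModel c N (circleModelZero c N j) = 0 := by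
  have hN0 : (N : ℝ) ≠ 0 := Nat.cast_ne_zero.2 hN
  rw [circleModel_eq_zero_iff hc]
  simp only [circleModelZero, mul_div_cancel₀ _ hN0, and_true]
  rw [mul_comm, Real.sin_nat_mul_pi]

theorem injective_circleModelZero (hN : N ≠ 0) : Injective (circleModelZero c N) := by
  intro i j hij
  have hre := congrArg Complex.re hij
  simp only [circleModelZero] at hre
  field_simp at hre
  exact_mod_cast hre

theorem circleModelZero_mem_interior {Y : ℝ} (hc : 0 < c) (hY : c < Y) {j : ℕ}
    (hj : j < 2 * N) : circleModelZero c N j ∈ interior (periodRect N Y) := by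
  have hN : (0 : ℝ) < N := by exact_mod_cast (show 0 < N by omega)
  have hj' : (j : ℝ) + 1 ≤ 2 * N := by exact_mod_cast hj
  have hpi := Real.pi_pos
  have hcos := abs_le.1 (Real.abs_cos_le_one (Real.pi * j))
  rw [interior_periodRect]
  refine Complex.mem_reProdIm.2 ⟨⟨?_, ?_⟩, ?_, ?_⟩ <;> simp only [circleModelZero]
  · have : 0 ≤ Real.pi * j / N := by positivity
    have : 0 < Real.pi / (2 * N) := by positivity
    linarith
  · rw [show -(Real.pi / (2 * N)) + 2 * Real.pi = Real.pi * (2 * N - 1 / 2) / N by field_simp; ring,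
      div_lt_div_iff_of_pos_right hN]
    exact mul_lt_mul_of_pos_left (by linarith) hpi
  · nlinarith
  · nlinarith

theorem exists_eq_circleModelZero {Y : ℝ} (hc : c ≠ 0) (hN : N ≠ 0) {z : ℂ}
    (hz : z ∈ periodRect N Y) (hz0 : circleModel c N z = 0) :
    ∃ j < 2 * N, circleModelZero c N j = z := by
  have hN0 : (0 : ℝ) < N := by exact_mod_cast Nat.pos_of_ne_zero hN
  obtain ⟨hsin, him⟩ := (circleModel_eq_zero_iff hc).1 hz0
  obtain ⟨m, hm⟩ := Real.sin_eq_zero_iff.1 hsin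
  have hre : z.re = Real.pi * m / N := by
    field_simp
    linarith
  obtain ⟨hlo, hhi⟩ := (Complex.mem_reProdIm.1 hz).1
  have hm_lo : (-1 : ℝ) < m := by
    rw [hre, show -(Real.pi / (2 * N)) = Real.pi * (-(1 / 2)) / N by field_simp,
      div_le_div_iff_of_pos_right hN0] at hlo
    linarith [le_of_mul_le_mul_left hlo Real.pi_pos]
  have hm_hi : (m : ℝ) < 2 * N := by
    rw [hre, show -(Real.pi / (2 * N)) + 2 * Real.pi = Real.pi * (2 * N - 1 / 2) / N by
      field_simp; ring, div_le_div_iff_of_pos_right hN0] at hhi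
    linarith [le_of_mul_le_mul_left hhi Real.pi_pos]
  have hm_nonneg : 0 ≤ m := by
    have : -1 < m := by exact_mod_cast hm_lo
    omega
  lift m to ℕ using hm_nonneg
  refine ⟨m, by exact_mod_cast hm_hi, Complex.ext (by simpa [circleModelZero] using hre.symm) ?_⟩
  rw [him, ← hm, circleModelZero, mul_comm Real.pi]
  simp

theorem mem_interior_periodRect_of_circleModel_eq_zero {Y : ℝ} (hc : 0 < c) (hY : c < Y)
    (hN : N ≠ 0) {z : ℂ} (hz : z ∈ periodRect N Y) (hz0 : circleModel c N z = 0) :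
    z ∈ interior (periodRect N Y) := by
  obtain ⟨j, hj, rfl⟩ := exists_eq_circleModelZero hc.ne' hN hz hz0
  exact circleModelZero_mem_interior hc hY hj

theorem hasZeroCount_circleModel {Y : ℝ} (hc : 0 < c) (hY : c < Y) (hN : N ≠ 0) :
    HasZeroCount (circleModel c N) (periodRect N Y) (2 * N) := by
  refine ⟨?_, fun z _ hz0 => nondegenerateAt_circleModel hc.ne' hN hz0⟩
  have himage : {z ∈ periodRect N Y | circleModel c N z = 0} =
      circleModelZero c N '' (Finset.range (2 * N) : Set ℕ) := by
    ext z
    constructor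
    · rintro ⟨hz, hz0⟩
      obtain ⟨j, hj, rfl⟩ := exists_eq_circleModelZero hc.ne' hN hz hz0
      exact ⟨j, by simpa using hj, rfl⟩
    · rintro ⟨j, hj, rfl⟩
      have hj : j < 2 * N := by simpa using hj
      exact ⟨interior_subset (circleModelZero_mem_interior hc hY hj),
        circleModel_circleModelZero hc.ne' hN j⟩
  rw [himage, (injective_circleModelZero hN).encard_image, Set.encard_coe_eq_coe_finsetCard,
    Finset.card_range]

end CircleModel

section PolarBlowup

variable {β s : ℝ}

/-- Blown-up polar coordinates around the unit circle: `z = θ + iy` is sent to the point of argument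
`θ + β` and squared modulus `1 + s y`. -/
noncomputable def polarBlowup (β s : ℝ) (z : ℂ) : ℂ :=
  Real.sqrt (1 + s * z.im) * Complex.exp ((z.re + β) * Complex.I)

theorem normSq_polarBlowup {z : ℂ} (hz : 0 ≤ 1 + s * z.im) :
    Complex.normSq (polarBlowup β s z) = 1 + s * z.im := by
  have harg : ((z.re : ℂ) + β) * Complex.I = ((z.re + β : ℝ) : ℂ) * Complex.I := by push_cast; rfl
  rw [Complex.normSq_eq_norm_sq, polarBlowup, norm_mul, Complex.norm_real, harg,
    Complex.norm_exp_ofReal_mul_I, mul_one, Real.norm_eq_abs, sq_abs, Real.sq_sqrt hz]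

theorem polarBlowup_zero (z : ℂ) :
    polarBlowup β 0 z = Complex.exp ((z.re + β) * Complex.I) := by
  simp [polarBlowup]

theorem normSq_polarBlowup_zero (z : ℂ) : Complex.normSq (polarBlowup β 0 z) = 1 := by
  rw [normSq_polarBlowup (by simp)]
  simp

theorem contDiffAt_polarBlowup {u : ℝ × ℂ} (hu : 1 + u.1 * u.2.im ≠ 0) :
    ContDiffAt ℝ 1 (fun u : ℝ × ℂ => polarBlowup β u.1 u.2) u := by
  have him : ContDiffAt ℝ 1 (fun u : ℝ × ℂ => u.2.im) u :=
    Complex.imCLM.contDiff.contDiffAt.comp u contDiffAt_snd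
  have hre : ContDiffAt ℝ 1 (fun u : ℝ × ℂ => (u.2.re : ℂ)) u :=
    (Complex.ofRealCLM ∘L Complex.reCLM).contDiff.contDiffAt.comp u contDiffAt_snd
  have hsqrt : ContDiffAt ℝ 1 (fun u : ℝ × ℂ => ((Real.sqrt (1 + u.1 * u.2.im) : ℝ) : ℂ)) u :=
    Complex.ofRealCLM.contDiff.contDiffAt.comp u
      ((contDiffAt_const.add (contDiffAt_fst.mul him)).sqrt hu)
  exact hsqrt.mul ((hre.add contDiffAt_const).mul contDiffAt_const).cexp

theorem injOn_polarBlowup (hs : s ≠ 0) (a : ℝ) :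
    Set.InjOn (polarBlowup β s) {z | z.re ∈ Set.Ioo a (a + 2 * Real.pi) ∧ 0 < 1 + s * z.im} := by
  rintro z ⟨hzre, hzim⟩ w ⟨hwre, hwim⟩ hzw
  have him : z.im = w.im := by
    have hnorm := congrArg Complex.normSq hzw
    rw [normSq_polarBlowup hzim.le, normSq_polarBlowup hwim.le] at hnorm
    exact mul_left_cancel₀ hs (add_left_cancel hnorm)
  have hexp : Complex.exp ((z.re + β) * Complex.I) = Complex.exp ((w.re + β) * Complex.I) := by
    rw [polarBlowup, polarBlowup, him] at hzw
    exact mul_left_cancel₀ (Complex.ofReal_ne_zero.2 (Real.sqrt_ne_zero'.2 hwim)) hzw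
  obtain ⟨k, hk⟩ := Complex.exp_eq_exp_iff_exists_int.1 hexp
  have hre : z.re = w.re + k * (2 * Real.pi) := by
    have him_eq : z.re + β = w.re + β + k * (2 * Real.pi) := by simpa using congrArg Complex.im hk
    linarith
  have hk0 : k = 0 := by
    have hpi := Real.pi_pos
    have hlt : (k : ℝ) < 1 := by nlinarith [hzre.2, hwre.1]
    have hgt : (-1 : ℝ) < k := by nlinarith [hzre.1, hwre.2]
    have : k < 1 := by exact_mod_cast hlt
    have : -1 < k := by exact_mod_cast hgt
    omega
  exact Complex.ext (by simpa [hk0] using hre) him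

theorem exists_polarBlowup_eq (hs : s ≠ 0) (a : ℝ) (w : ℂ) :
    ∃ z : ℂ, z.re ∈ Set.Ico a (a + 2 * Real.pi) ∧ z.im = (Complex.normSq w - 1) / s ∧
      polarBlowup β s z = w := by
  set k := toIcoDiv Real.two_pi_pos a (Complex.arg w - β)
  set θ := toIcoMod Real.two_pi_pos a (Complex.arg w - β)
  have hθ : (θ : ℂ) + β = Complex.arg w - k * (2 * Real.pi) := by
    have := self_sub_toIcoMod_eq_mul Real.two_pi_pos a (Complex.arg w - β)
    have : θ + β = Complex.arg w - k * (2 * Real.pi) := by linarith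
    exact_mod_cast congrArg Complex.ofReal this
  refine ⟨⟨θ, (Complex.normSq w - 1) / s⟩, toIcoMod_mem_Ico Real.two_pi_pos a _, rfl, ?_⟩
  rw [polarBlowup, mul_div_cancel₀ _ hs, add_sub_cancel, Complex.normSq_eq_norm_sq,
    Real.sqrt_sq (norm_nonneg w), hθ, sub_mul, Complex.exp_sub, mul_assoc (k : ℂ),
    Complex.exp_int_mul_two_pi_mul_I, div_one, Complex.norm_mul_exp_arg_mul_I]

end PolarBlowup

/-- The closed annulus `1/2 ≤ |ζ|² ≤ 3/2` around the unit circle. -/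
def unitAnnulus : Set ℂ := {ζ | 1 / 2 ≤ Complex.normSq ζ ∧ Complex.normSq ζ ≤ 3 / 2}

theorem isCompact_unitAnnulus : IsCompact unitAnnulus := by
  refine Metric.isCompact_of_isClosed_isBounded
    ((isClosed_le continuous_const Complex.continuous_normSq).inter
      (isClosed_le Complex.continuous_normSq continuous_const)) ?_
  refine (Metric.isBounded_iff_subset_closedBall 0).2 ⟨2, fun ζ hζ => ?_⟩
  have hle := hζ.2
  rw [Complex.normSq_eq_norm_sq] at hle
  rw [mem_closedBall_zero_iff]
  nlinarith [norm_nonneg ζ]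

theorem differentiable_normSq : Differentiable ℝ fun ζ : ℂ => (Complex.normSq ζ : ℂ) := by
  simp_rw [← Complex.mul_conj]
  exact differentiable_id.mul Complex.conjCLE.differentiable

theorem exists_eventually_forall_norm_lt {E V W : Type*} [TopologicalSpace E] [TopologicalSpace V]
    [SeminormedAddGroup W] {K : Set V} (hK : IsCompact K) {G : E × V → W} {π₀ : E}
    (hG : ∀ v ∈ K, ContinuousAt G (π₀, v)) (r : ℝ) :
    ∃ Y > r, ∀ᶠ π in 𝓝 π₀, ∀ v ∈ K, ‖G (π, v)‖ < Y := by
  have hcont : ContinuousOn (fun v => G (π₀, v)) K := fun v hv =>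
    ((hG v hv).comp (Continuous.prodMk_right π₀).continuousAt).continuousWithinAt
  obtain ⟨Y, hY⟩ := hK.exists_bound_of_continuousOn hcont
  refine ⟨max (Y + 1) (r + 1), lt_max_of_lt_right (by linarith),
    hK.eventually_forall_of_forall_eventually fun v hv => ?_⟩
  exact (hG v hv).norm.eventually_lt continuousAt_const
    ((hY v hv).trans_lt (lt_max_of_lt_left (by linarith)))

theorem eventually_forall_differentiableAt {E V W : Type*} [NormedAddCommGroup E]
    [NormedSpace ℝ E] [NormedAddCommGroup V] [NormedSpace ℝ V] [NormedAddCommGroup W]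
    [NormedSpace ℝ W] {K : Set V} (hK : IsCompact K) {G : E × V → W} {π₀ : E}
    (hG : ∀ v ∈ K, ContDiffAt ℝ 1 G (π₀, v)) :
    ∀ᶠ π in 𝓝 π₀, ∀ v ∈ K, DifferentiableAt ℝ (fun v => G (π, v)) v := by
  refine hK.eventually_forall_of_forall_eventually fun v hv => ?_
  filter_upwards [(hG v hv).eventually (by simp)] with u hu
  exact (hu.differentiableAt one_ne_zero).comp u.2
    (hasFDerivAt_prodMk_right u.1 u.2).differentiableAt

theorem exists_mem_periodRect_polarBlowup_eq {s : ℝ} (hs : s ≠ 0) (β : ℝ) {Y : ℝ} (N : ℕ)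
    {w a : ℂ} (ha : ‖a‖ < Y) (hw : (Complex.normSq w : ℂ) - 1 - s * a = 0) :
    ∃ z ∈ periodRect N Y, polarBlowup β s z = w := by
  obtain ⟨z, hzre, hzim, hzw⟩ := exists_polarBlowup_eq (β := β) hs (-(Real.pi / (2 * N))) w
  have hsc : (s : ℂ) ≠ 0 := Complex.ofReal_ne_zero.2 hs
  have haz : a = z.im := by
    rw [hzim]
    push_cast
    field_simp
    linear_combination -hw
  rw [haz, Complex.norm_real] at ha
  exact ⟨z, Complex.mem_reProdIm.2 ⟨Set.Ico_subset_Icc_self hzre, abs_le.1 ha.le⟩, hzw⟩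

theorem HasZeroCount.of_polarBlowup {s β Y : ℝ} {N M : ℕ} {A : ℂ → ℂ} (hs : 0 < s)
    (hsY : s * Y < 1 / 2) (hA : ∀ ζ ∈ unitAnnulus, DifferentiableAt ℝ A ζ)
    (hAY : ∀ ζ ∈ unitAnnulus, ‖A ζ‖ < Y)
    (hcount : HasZeroCount (fun z => (z.im : ℂ) - A (polarBlowup β s z)) (periodRect N Y) M)
    (hint : ∀ z ∈ periodRect N Y, (z.im : ℂ) - A (polarBlowup β s z) = 0 →
      z ∈ interior (periodRect N Y)) :
    HasZeroCount (fun ζ => (Complex.normSq ζ : ℂ) - 1 - s * A ζ) unitAnnulus M := by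
  have hsc : (s : ℂ) ≠ 0 := Complex.ofReal_ne_zero.2 hs.ne'
  have hrange : ∀ z ∈ periodRect N Y, 1 / 2 ≤ 1 + s * z.im ∧ 1 + s * z.im ≤ 3 / 2 := by
    intro z hz
    obtain ⟨hlo, hhi⟩ := (Complex.mem_reProdIm.1 hz).2
    constructor <;> nlinarith
  have hpos : ∀ z ∈ periodRect N Y, 0 < 1 + s * z.im := fun z hz => by linarith [hrange z hz]
  have hmaps : ∀ z ∈ periodRect N Y, polarBlowup β s z ∈ unitAnnulus := fun z hz => by
    simpa only [unitAnnulus, Set.mem_ofPred_eq, normSq_polarBlowup (hpos z hz).le] using hrange z hz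
  refine hcount.transfer (fun _ => (s : ℂ)⁻¹) (polarBlowup β s) ?_ (fun z hz => hmaps z hz.1) ?_
    (fun _ _ => inv_ne_zero hsc) (fun _ _ => differentiableAt_const _) ?_ ?_ ?_
  · refine (injOn_polarBlowup hs.ne' (-(Real.pi / (2 * N)))).mono ?_
    refine fun z hz => ⟨?_, hpos z hz.1⟩
    have hzint := hint z hz.1 hz.2
    rw [interior_periodRect] at hzint
    exact (Complex.mem_reProdIm.1 hzint).1
  · rintro w ⟨hw, hw0⟩
    exact exists_mem_periodRect_polarBlowup_eq hs.ne' β N (hAY w hw) hw0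
  · intro z hz
    have hdiff : DifferentiableAt ℝ (fun u : ℝ × ℂ => polarBlowup β u.1 u.2) (s, z) :=
      (contDiffAt_polarBlowup (hpos z hz).ne').differentiableAt one_ne_zero
    exact hdiff.comp z (hasFDerivAt_prodMk_right s z).differentiableAt
  · intro z hz
    exact ((differentiable_normSq _).sub_const 1).sub ((hA _ (hmaps z hz)).const_mul _)
  · intro z hz
    have hcont : ContinuousAt (fun w : ℂ => 1 + s * w.im) z := by fun_prop
    filter_upwards [hcont.eventually (lt_mem_nhds (hpos z hz))] with w hw
    rw [normSq_polarBlowup hw.le]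
    push_cast
    field_simp
    ring

section EventuallyAnnulus

variable {E : Type*} [NormedAddCommGroup E] [NormedSpace ℝ E]
  {s : E → ℝ} {A : E × ℂ → ℂ} {π₀ : E} {N : ℕ} {b : ℂ}

theorem exists_exp_mul_eq_norm (hN : N ≠ 0) (b : ℂ) :
    ∃ β : ℝ, b * Complex.exp (N * β * Complex.I) = ‖b‖ := by
  refine ⟨-(Complex.arg b) / N, ?_⟩
  have hN0 : (N : ℂ) ≠ 0 := Nat.cast_ne_zero.2 hN
  nth_rewrite 1 [← Complex.norm_mul_exp_arg_mul_I b]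
  push_cast
  rw [mul_div_cancel₀ _ hN0, mul_assoc, ← Complex.exp_add, neg_mul, add_neg_cancel,
    Complex.exp_zero, mul_one]

theorem contDiffAt_im_sub_comp_polarBlowup (hs : ContDiffAt ℝ 1 s π₀) (hs0 : s π₀ = 0) {β : ℝ}
    (hA : ∀ ζ ∈ unitAnnulus, ContDiffAt ℝ 1 A (π₀, ζ)) (z : ℂ) :
    ContDiffAt ℝ 1 (fun u : E × ℂ => (u.2.im : ℂ) - A (u.1, polarBlowup β (s u.1) u.2))
      (π₀, z) := by
  have him : ContDiffAt ℝ 1 (fun u : E × ℂ => (u.2.im : ℂ)) (π₀, z) :=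
    (Complex.ofRealCLM ∘L Complex.imCLM).contDiff.contDiffAt.comp _ contDiffAt_snd
  have hpolar : ContDiffAt ℝ 1 (fun u : E × ℂ => polarBlowup β (s u.1) u.2) (π₀, z) := by
    refine ContDiffAt.comp (f := fun u : E × ℂ => (s u.1, u.2)) (π₀, z)
      (contDiffAt_polarBlowup (by simp [hs0])) ?_
    exact (ContDiffAt.comp (π₀, z) hs contDiffAt_fst).prodMk contDiffAt_snd
  have hmem : polarBlowup β (s π₀) z ∈ unitAnnulus := by
    rw [hs0, unitAnnulus, Set.mem_ofPred_eq, normSq_polarBlowup_zero]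
    norm_num
  exact him.sub (ContDiffAt.comp (f := fun u : E × ℂ => (u.1, polarBlowup β (s u.1) u.2)) _
    (hA _ hmem) (contDiffAt_fst.prodMk hpolar))

theorem eventually_hasZeroCount_unitAnnulus [CompleteSpace E] (hs : ContDiffAt ℝ 1 s π₀)
    (hs0 : s π₀ = 0) (hN : N ≠ 0) (hb : b ≠ 0)
    (hA : ∀ ζ ∈ unitAnnulus, ContDiffAt ℝ 1 A (π₀, ζ))
    (hAb : ∀ ζ, Complex.normSq ζ = 1 → A (π₀, ζ) = b * ζ ^ N) :
    ∀ᶠ π in 𝓝 π₀, 0 < s π →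
      HasZeroCount (fun ζ => (Complex.normSq ζ : ℂ) - 1 - s π * A (π, ζ)) unitAnnulus (2 * N) := by
  obtain ⟨Y, hbY, hAY⟩ := exists_eventually_forall_norm_lt isCompact_unitAnnulus
    (fun ζ hζ => (hA ζ hζ).continuousAt) ‖b‖
  obtain ⟨β, hβ⟩ := exists_exp_mul_eq_norm hN b
  have hmodel : ∀ z : ℂ,
      (z.im : ℂ) - A (π₀, polarBlowup β (s π₀) z) = circleModel ‖b‖ N z := by
    intro z
    rw [hs0, hAb _ (normSq_polarBlowup_zero z), polarBlowup_zero, circleModel, ← hβ,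
      ← Complex.exp_nat_mul, mul_assoc b, ← Complex.exp_add]
    ring_nf
  have hcontDiff := contDiffAt_im_sub_comp_polarBlowup (β := β) hs hs0 hA
  have hblowup := HasZeroCount.eventually_nhds
    (G := fun u : E × ℂ => (u.2.im : ℂ) - A (u.1, polarBlowup β (s u.1) u.2)) (π₀ := π₀)
    (isCompact_periodRect N Y) (fun z _ => (hcontDiff z).continuousAt)
    (fun z hz hz0 => ⟨hcontDiff z, mem_interior_periodRect_of_circleModel_eq_zero
      (norm_pos_iff.2 hb) hbY hN hz ((hmodel z).symm.trans hz0)⟩)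
    ((funext hmodel : (fun z : ℂ => (z.im : ℂ) - A (π₀, polarBlowup β (s π₀) z)) = _) ▸
      hasZeroCount_circleModel (norm_pos_iff.2 hb) hbY hN)
  have hsmall : ∀ᶠ π in 𝓝 π₀, s π * Y < 1 / 2 :=
    (hs.continuousAt.mul continuousAt_const).eventually_lt continuousAt_const (by simp [hs0])
  filter_upwards [hblowup, eventually_forall_differentiableAt isCompact_unitAnnulus hA, hsmall, hAY]
    with π hcount hdiff hsY hbound hpos
  exact hcount.1.of_polarBlowup hpos hsY hdiff hbound hcount.2

end EventuallyAnnulus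

/-! ### The harmonic model `a Z ^ (m + 1) = b conj Z` -/

section HarmonicModel

open scoped ComplexConjugate

variable {a b c Z : ℂ} {m : ℕ}

theorem norm_pow_eq_of_mul_pow_eq_mul_conj (ha : a ≠ 0) (hZ : Z ≠ 0)
    (h : a * Z ^ (m + 1) = b * conj Z) : ‖Z‖ ^ m = ‖b / a‖ := by
  have hnorm := congrArg norm h
  rw [norm_mul, norm_mul, norm_pow, RCLike.norm_conj, pow_succ, ← mul_assoc] at hnorm
  rw [norm_div, eq_div_iff (norm_ne_zero_iff.2 ha), mul_comm]
  exact mul_right_cancel₀ (norm_ne_zero_iff.2 hZ) hnorm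

theorem mul_pow_eq_mul_conj_iff (ha : a ≠ 0) (hm : m ≠ 0) (hZ : Z ≠ 0) {ρ : ℝ} (hρ : 0 ≤ ρ)
    (hρm : ρ ^ m = ‖b / a‖) :
    a * Z ^ (m + 1) = b * conj Z ↔ Z ^ (m + 2) = b / a * ρ ^ 2 := by
  have hconj : Z * conj Z = (‖Z‖ : ℂ) ^ 2 := Complex.mul_conj' Z
  constructor
  · intro h
    have hnorm : ‖Z‖ = ρ := (pow_left_inj₀ (norm_nonneg Z) hρ hm).1
      ((norm_pow_eq_of_mul_pow_eq_mul_conj ha hZ h).trans hρm.symm)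
    rw [← hnorm, ← hconj]
    field_simp
    linear_combination Z * h
  · intro h
    have hnorm : ‖Z‖ = ρ := by
      refine (pow_left_inj₀ (norm_nonneg Z) hρ (show m + 2 ≠ 0 by omega)).1 ?_
      rw [← norm_pow, h, norm_mul, ← hρm, norm_pow, Complex.norm_of_nonneg hρ, ← pow_add]
    rw [← hnorm, ← hconj] at h
    field_simp at h
    exact mul_left_cancel₀ hZ (by linear_combination h)

theorem encard_setOf_pow_eq {n : ℕ} (hn : n ≠ 0) (hc : c ≠ 0) :
    {z : ℂ | z ^ n = c}.encard = n := by
  classical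
  have hroots : {z : ℂ | z ^ n = c} = (nthRootsFinset n c : Set ℂ) := by
    ext z
    simp [mem_nthRootsFinset (Nat.pos_of_ne_zero hn)]
  have hprim := Complex.isPrimitiveRoot_exp n hn
  have hcard : (nthRoots n c).card = n := by
    rw [hprim.card_nthRoots, if_pos (IsAlgClosed.exists_pow_nat_eq c (Nat.pos_of_ne_zero hn))]
  rw [hroots, Set.encard_coe_eq_coe_finsetCard, nthRootsFinset_def,
    Multiset.toFinset_card_of_nodup (hprim.nthRoots_nodup hc), hcard]

theorem nondegenerateAt_mul_pow_sub_mul_conj (ha : a ≠ 0) (hb : b ≠ 0) (hm : m ≠ 0)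
    (hZ : a * Z ^ (m + 1) - b * conj Z = 0) :
    NondegenerateAt (fun Z : ℂ => a * Z ^ (m + 1) - b * conj Z) Z := by
  have hpow : HasFDerivAt (fun Z : ℂ => Z ^ (m + 1))
      ((((m + 1 : ℕ) : ℂ) * Z ^ m) • (1 : ℂ →L[ℝ] ℂ)) Z :=
    (hasDerivAt_pow (m + 1) Z).complexToReal_fderiv
  have hconj : HasFDerivAt (fun Z : ℂ => conj Z) (Complex.conjCLE : ℂ →L[ℝ] ℂ) Z :=
    Complex.conjCLE.hasFDerivAt
  refine ⟨_, (hpow.const_mul a).sub (hconj.const_mul b), ?_⟩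
  rw [injective_iff_map_eq_zero]
  intro w hw
  by_contra hw0
  have hw' : a * (((m + 1 : ℕ) : ℂ) * Z ^ m * w) = b * conj w := by
    simpa [sub_eq_zero] using hw
  have hnorm : ‖a‖ * ((m + 1) * ‖Z‖ ^ m) = ‖b‖ := by
    have := congrArg norm hw'
    simp only [norm_mul, norm_pow, RCLike.norm_conj, Complex.norm_natCast] at this
    push_cast at this
    refine mul_right_cancel₀ (norm_ne_zero_iff.2 hw0) ?_
    linear_combination this
  have hb' := norm_pos_iff.2 hb
  rcases eq_or_ne Z 0 with rfl | hZ0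
  · rw [norm_zero, zero_pow hm, mul_zero, mul_zero] at hnorm
    exact hb'.ne hnorm
  · rw [norm_pow_eq_of_mul_pow_eq_mul_conj ha hZ0 (sub_eq_zero.1 hZ), norm_div] at hnorm
    have ha' := norm_ne_zero_iff.2 ha
    field_simp at hnorm
    have hm' : (0 : ℝ) < m := by exact_mod_cast Nat.pos_of_ne_zero hm
    nlinarith

theorem hasZeroCount_mul_pow_sub_mul_conj (ha : a ≠ 0) (hb : b ≠ 0) (hm : m ≠ 0) :
    HasZeroCount (fun Z : ℂ => a * Z ^ (m + 1) - b * conj Z) Set.univ (m + 3) := by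
  refine ⟨?_, fun Z _ => nondegenerateAt_mul_pow_sub_mul_conj ha hb hm⟩
  have hba : 0 < ‖b / a‖ := norm_pos_iff.2 (div_ne_zero hb ha)
  set ρ : ℝ := ‖b / a‖ ^ (m : ℝ)⁻¹
  have hρ : 0 < ρ := Real.rpow_pos_of_pos hba _
  have hρm : ρ ^ m = ‖b / a‖ := Real.rpow_inv_natCast_pow hba.le hm
  set c : ℂ := b / a * ρ ^ 2
  have hc : c ≠ 0 := mul_ne_zero (div_ne_zero hb ha) (by exact_mod_cast (pow_pos hρ 2).ne')
  have hzeros : {Z ∈ Set.univ | a * Z ^ (m + 1) - b * conj Z = 0} =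
      insert 0 {Z : ℂ | Z ^ (m + 2) = c} := by
    ext Z
    rcases eq_or_ne Z 0 with rfl | hZ
    · simp
    · simp [hZ, sub_eq_zero, mul_pow_eq_mul_conj_iff ha hm hZ hρ.le hρm, c]
  have hzero : (0 : ℂ) ∉ {Z : ℂ | Z ^ (m + 2) = c} := by simp [hc.symm]
  rw [hzeros, Set.encard_insert_of_notMem hzero, encard_setOf_pow_eq (by omega) hc]
  rfl

end HarmonicModel

/-! ### The deformed level set -/

/-- The denominator `∏ j, (X - x j) ^ μ j` with prescribed poles and multiplicities. -/
noncomputable def polePoly {ι R : Type*} [Fintype ι] [CommRing R] (μ : ι → ℕ) (x : ι → R) : R[X] :=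
  ∏ j, (X - C (x j)) ^ μ j

/-- The function `q(v) (1 - t|v|²) - q(0)` with `q = polePoly μ x`. At `t = 0` its zeros form the
level set of `q` through `0`; for `t ≠ 0` its zeros `v ≠ 0` are the solutions of `r(v) = conj v` for
`r(v) = (q(v) - q(0)) / (t v q(v))`. -/
noncomputable def levelDeformation {ι : Type*} [Fintype ι] (μ : ι → ℕ) (t : ℝ) (x : ι → ℂ)
    (v : ℂ) : ℂ :=
  (polePoly μ x).eval v * (1 - t * Complex.normSq v) - (polePoly μ x).eval 0

section LevelDeformation

variable {ι : Type*} [Fintype ι] (μ : ι → ℕ)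

theorem eval_polePoly {R : Type*} [CommRing R] (x : ι → R) (v : R) :
    (polePoly μ x).eval v = ∏ j, (v - x j) ^ μ j := by
  simp [polePoly, eval_prod]

theorem contDiff_eval_polePoly :
    ContDiff ℝ 1 fun u : (ι → ℂ) × ℂ => (polePoly μ u.1).eval u.2 := by
  simp_rw [eval_polePoly]
  exact contDiff_prod fun j _ => ContDiff.pow (by fun_prop) _

theorem contDiff_normSq : ContDiff ℝ 1 fun ζ : ℂ => (Complex.normSq ζ : ℂ) := by
  simp_rw [← Complex.mul_conj]
  exact contDiff_id.mul Complex.conjCLE.contDiff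

theorem contDiff_levelDeformation :
    ContDiff ℝ 1 fun u : (ℝ × (ι → ℂ)) × ℂ => levelDeformation μ u.1.1 u.1.2 u.2 := by
  have hq : ContDiff ℝ 1 fun u : (ℝ × (ι → ℂ)) × ℂ => (polePoly μ u.1.2).eval u.2 :=
    (contDiff_eval_polePoly μ).comp (by fun_prop :
      ContDiff ℝ 1 fun u : (ℝ × (ι → ℂ)) × ℂ => (u.1.2, u.2))
  have hq0 : ContDiff ℝ 1 fun u : (ℝ × (ι → ℂ)) × ℂ => (polePoly μ u.1.2).eval 0 :=
    (contDiff_eval_polePoly μ).comp (by fun_prop :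
      ContDiff ℝ 1 fun u : (ℝ × (ι → ℂ)) × ℂ => (u.1.2, (0 : ℂ)))
  have ht : ContDiff ℝ 1 fun u : (ℝ × (ι → ℂ)) × ℂ => (u.1.1 : ℂ) :=
    Complex.ofRealCLM.contDiff.comp (contDiff_fst.comp contDiff_fst)
  exact (hq.mul (contDiff_const.sub (ht.mul (contDiff_normSq.comp contDiff_snd)))).sub hq0

theorem differentiable_levelDeformation (t : ℝ) (x : ι → ℂ) :
    Differentiable ℝ (levelDeformation μ t x) := fun v =>
  ((contDiff_levelDeformation μ).differentiable one_ne_zero ((t, x), v)).comp v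
    (hasFDerivAt_prodMk_right (t, x) v).differentiableAt

theorem pow_le_norm_eval_polePoly {x : ι → ℂ} {r : ℝ} (hx : ∀ j, ‖x j‖ ≤ r) {z : ℂ}
    (hz : r ≤ ‖z‖) : (‖z‖ - r) ^ ∑ j, μ j ≤ ‖(polePoly μ x).eval z‖ := by
  have hr : 0 ≤ ‖z‖ - r := sub_nonneg.2 hz
  rw [eval_polePoly, norm_prod, ← Finset.prod_pow_eq_pow_sum]
  refine Finset.prod_le_prod (fun j _ => pow_nonneg hr _) fun j _ => ?_
  rw [norm_pow]
  exact pow_le_pow_left₀ hr (by linarith [norm_sub_norm_le z (x j), hx j]) _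

end LevelDeformation

/-! ### Zeros far away -/

section Outer

variable {ι : Type*} [Fintype ι] (μ : ι → ℕ)

/-- The reciprocal polynomial `∏ j, (1 - x j w) ^ μ j` of `polePoly μ x`, as a function of `w`. -/
def reciprocalPole (x : ι → ℂ) (w : ℂ) : ℂ := ∏ j, (1 - x j * w) ^ μ j

variable {μ} {x : ι → ℂ}

theorem eval_polePoly_inv_mul_pow {w : ℂ} (hw : w ≠ 0) :
    (polePoly μ x).eval w⁻¹ * w ^ ∑ j, μ j = reciprocalPole μ x w := by
  rw [eval_polePoly, reciprocalPole, ← Finset.prod_pow_eq_pow_sum, ← Finset.prod_mul_distrib]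
  refine Finset.prod_congr rfl fun j _ => ?_
  rw [← mul_pow, sub_mul, inv_mul_cancel₀ hw]

theorem contDiff_reciprocalPole :
    ContDiff ℝ 1 fun u : (ι → ℂ) × ℂ => reciprocalPole μ u.1 u.2 :=
  contDiff_prod fun j _ => ContDiff.pow (by fun_prop) _

theorem reciprocalPole_ne_zero {w : ℂ} (hw : ∀ j, ‖x j‖ * ‖w‖ < 1) :
    reciprocalPole μ x w ≠ 0 := by
  refine Finset.prod_ne_zero_iff.2 fun j _ => pow_ne_zero _ fun h => ?_
  have := hw j
  rw [← norm_mul, ← sub_eq_zero.1 h, norm_one] at this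
  exact lt_irrefl 1 this

variable (μ) in
/-- The angular term of `levelDeformation μ (τ ^ 2) x` in the coordinate `ζ = (τ v)⁻¹`, in which the
zeros of size `1 / τ` lie near the unit circle. -/
noncomputable def outerTerm (τ : ℝ) (x : ι → ℂ) (ζ : ℂ) : ℂ :=
  ζ ^ (∑ j, μ j) * ((polePoly μ x).eval 0 * Complex.normSq ζ / reciprocalPole μ x (τ * ζ))

theorem normSq_sub_one_sub_outerTerm {τ : ℝ} (hτ : τ ≠ 0) {ζ : ℂ} (hζ : ζ ≠ 0)
    (hrec : reciprocalPole μ x (τ * ζ) ≠ 0) :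
    (Complex.normSq ζ : ℂ) - 1 - (τ ^ (∑ j, μ j) : ℝ) * outerTerm μ τ x ζ =
      ((τ * ζ) ^ (∑ j, μ j) * Complex.normSq ζ / reciprocalPole μ x (τ * ζ)) *
        levelDeformation μ (τ ^ 2) x (τ * ζ)⁻¹ := by
  have hτ' : (τ : ℂ) ≠ 0 := Complex.ofReal_ne_zero.2 hτ
  have hq := eval_polePoly_inv_mul_pow (μ := μ) (x := x) (mul_ne_zero hτ' hζ)
  have hnormSq : (τ ^ 2 : ℂ) * Complex.normSq (τ * ζ)⁻¹ * Complex.normSq ζ = 1 := by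
    have : (Complex.normSq ζ : ℂ) ≠ 0 := by simpa using hζ
    rw [Complex.normSq_inv, Complex.normSq_mul, Complex.normSq_ofReal]
    push_cast
    field_simp
  rw [levelDeformation, outerTerm]
  push_cast
  generalize reciprocalPole μ x (τ * ζ) = S at *
  generalize (polePoly μ x).eval (τ * ζ)⁻¹ = qv at *
  generalize (Complex.normSq (τ * ζ)⁻¹ : ℂ) = nv at *
  field_simp
  linear_combination (Complex.normSq ζ : ℂ) * (τ ^ 2 * nv - 1) * hq + S * hnormSq

theorem inv_mem_unitAnnulus_of_levelDeformation_eq_zero {τ : ℝ} {v : ℂ}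
    (hq : 3 * ‖(polePoly μ x).eval 0‖ < ‖(polePoly μ x).eval v‖)
    (hv : levelDeformation μ (τ ^ 2) x v = 0) : (τ * v)⁻¹ ∈ unitAnnulus := by
  set y : ℝ := τ ^ 2 * Complex.normSq v
  have heq : ‖(polePoly μ x).eval v‖ * |1 - y| = ‖(polePoly μ x).eval 0‖ := by
    have : (polePoly μ x).eval v * ((1 - y : ℝ) : ℂ) = (polePoly μ x).eval 0 := by
      rw [← sub_eq_zero.1 hv]
      push_cast [y]
      ring
    rw [← this, norm_mul, Complex.norm_real, Real.norm_eq_abs]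
  have hy : |1 - y| < 1 / 3 := by
    by_contra! hge
    nlinarith [norm_nonneg ((polePoly μ x).eval 0), norm_nonneg ((polePoly μ x).eval v)]
  obtain ⟨hlo, hhi⟩ := abs_lt.1 hy
  have hy0 : 0 < y := by linarith
  have hinv : Complex.normSq (τ * v)⁻¹ = y⁻¹ := by
    rw [Complex.normSq_inv, Complex.normSq_mul, Complex.normSq_ofReal, ← sq]
  rw [unitAnnulus, Set.mem_ofPred_eq, hinv]
  exact ⟨(le_inv_comm₀ (by norm_num) hy0).2 (by linarith),
    (inv_le_comm₀ hy0 (by norm_num)).2 (by linarith)⟩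

theorem norm_lt_two_of_mem_unitAnnulus {ζ : ℂ} (hζ : ζ ∈ unitAnnulus) : ‖ζ‖ < 2 := by
  have := hζ.2
  rw [Complex.normSq_eq_norm_sq] at this
  nlinarith [norm_nonneg ζ]

theorem ne_zero_of_mem_unitAnnulus {ζ : ℂ} (hζ : ζ ∈ unitAnnulus) : ζ ≠ 0 := by
  rintro rfl
  have := hζ.1
  norm_num at this

theorem reciprocalPole_ofReal_mul_ne_zero {τ r : ℝ} (hτ : 0 < τ) (hx : ∀ j, ‖x j‖ ≤ r)
    (hτr : τ * (2 * r) < 1) {ζ : ℂ} (hζ : ‖ζ‖ < 2) : reciprocalPole μ x (τ * ζ) ≠ 0 := by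
  refine reciprocalPole_ne_zero fun j => ?_
  have hr : 0 ≤ r := (norm_nonneg (x j)).trans (hx j)
  rw [norm_mul, Complex.norm_of_nonneg hτ.le]
  calc ‖x j‖ * (τ * ‖ζ‖) ≤ r * (τ * 2) := by gcongr; exact hx j
    _ < 1 := by linarith

theorem HasZeroCount.levelDeformation_of_outerTerm {τ r V : ℝ} {N : ℕ} (hτ : 0 < τ) (hV : 0 < V)
    (hτV : τ * (2 * V) < 1) (hx : ∀ j, ‖x j‖ ≤ r) (hτr : τ * (2 * r) < 1)
    (hq : ∀ v, V < ‖v‖ → 3 * ‖(polePoly μ x).eval 0‖ < ‖(polePoly μ x).eval v‖)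
    (h : HasZeroCount (fun ζ => (Complex.normSq ζ : ℂ) - 1 -
      (τ ^ (∑ j, μ j) : ℝ) * outerTerm μ τ x ζ) unitAnnulus N) :
    HasZeroCount (levelDeformation μ (τ ^ 2) x) {v | V < ‖v‖} N := by
  have hτ' : (τ : ℂ) ≠ 0 := Complex.ofReal_ne_zero.2 hτ.ne'
  have hrec (ζ : ℂ) (hζ : ‖ζ‖ < 2) : reciprocalPole μ x (τ * ζ) ≠ 0 :=
    reciprocalPole_ofReal_mul_ne_zero hτ hx hτr hζ
  have hne : ∀ ζ ∈ unitAnnulus, (τ : ℂ) * ζ ≠ 0 := fun ζ hζ =>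
    mul_ne_zero hτ' (ne_zero_of_mem_unitAnnulus hζ)
  have hmul : Differentiable ℝ fun ζ : ℂ => (τ : ℂ) * ζ := differentiable_id.const_mul _
  have hdiff : Differentiable ℝ fun ζ : ℂ => reciprocalPole μ x (τ * ζ) := fun ζ =>
    ((contDiff_reciprocalPole.differentiable one_ne_zero (x, τ * ζ)).comp _
      (hasFDerivAt_prodMk_right x _).differentiableAt).comp ζ (hmul ζ)
  refine h.transfer (fun ζ => (τ * ζ) ^ (∑ j, μ j) * Complex.normSq ζ /
    reciprocalPole μ x (τ * ζ)) (fun ζ => (τ * ζ)⁻¹)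
    (fun z _ w _ hzw => mul_left_cancel₀ hτ' (inv_injective hzw)) ?_ ?_ ?_ ?_
    (fun ζ hζ => (hmul ζ).inv (hne ζ hζ)) (fun ζ _ => differentiable_levelDeformation μ _ _ _) ?_
  · rintro ζ ⟨hζ, -⟩
    have hpos := norm_pos_iff.2 (hne ζ hζ)
    rw [Set.mem_ofPred_eq, norm_inv, lt_inv_comm₀ hV hpos, inv_eq_one_div, lt_div_iff₀ hV, norm_mul,
      Complex.norm_of_nonneg hτ.le]
    nlinarith [mul_pos hτ hV, norm_lt_two_of_mem_unitAnnulus hζ]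
  · rintro v ⟨hv, hv0⟩
    refine ⟨_, inv_mem_unitAnnulus_of_levelDeformation_eq_zero (hq v hv) hv0, ?_⟩
    have : v ≠ 0 := norm_pos_iff.1 (hV.trans hv)
    field_simp
  · intro ζ hζ
    have : (Complex.normSq ζ : ℂ) ≠ 0 := by simpa using ne_zero_of_mem_unitAnnulus hζ
    exact div_ne_zero (mul_ne_zero (pow_ne_zero _ (hne ζ hζ)) this)
      (hrec ζ (norm_lt_two_of_mem_unitAnnulus hζ))
  · exact fun ζ hζ => (((hmul ζ).fun_pow _).fun_mul (differentiable_normSq ζ)).fun_mul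
      ((hdiff ζ).fun_inv (hrec ζ (norm_lt_two_of_mem_unitAnnulus hζ)))
  · intro ζ hζ
    filter_upwards [continuous_norm.continuousAt.eventually
      (gt_mem_nhds (norm_lt_two_of_mem_unitAnnulus hζ)),
      eventually_ne_nhds (ne_zero_of_mem_unitAnnulus hζ)] with w hw hw0
    exact normSq_sub_one_sub_outerTerm hτ.ne' hw0 (hrec w hw)

theorem eventually_hasZeroCount_outerTerm (hμ : ∑ j, μ j ≠ 0) (hx : (polePoly μ x).eval 0 ≠ 0) :
    ∀ᶠ P : ℝ × (ι → ℂ) in 𝓝 (0, x), 0 < P.1 → HasZeroCount (fun ζ => (Complex.normSq ζ : ℂ) - 1 -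
      (P.1 ^ (∑ j, μ j) : ℝ) * outerTerm μ P.1 P.2 ζ) unitAnnulus (2 * ∑ j, μ j) := by
  have hrec : ContDiff ℝ 1 fun u : (ℝ × (ι → ℂ)) × ℂ => reciprocalPole μ u.1.2 (u.1.1 * u.2) := by
    refine contDiff_reciprocalPole.comp (f := fun u : (ℝ × (ι → ℂ)) × ℂ => (u.1.2, u.1.1 * u.2))
      (ContDiff.prodMk (by fun_prop) (ContDiff.mul ?_ contDiff_snd))
    exact Complex.ofRealCLM.contDiff.comp (contDiff_fst.comp contDiff_fst)
  have hq0 : ContDiff ℝ 1 fun u : (ℝ × (ι → ℂ)) × ℂ => (polePoly μ u.1.2).eval 0 :=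
    (contDiff_eval_polePoly μ).comp (f := fun u : (ℝ × (ι → ℂ)) × ℂ => (u.1.2, (0 : ℂ)))
      (by fun_prop)
  refine (eventually_hasZeroCount_unitAnnulus (s := fun P : ℝ × (ι → ℂ) => P.1 ^ ∑ j, μ j)
    (A := fun u => outerTerm μ u.1.1 u.1.2 u.2) (contDiff_fst.pow _).contDiffAt (zero_pow hμ) hμ hx
    (fun ζ _ => ?_) fun ζ hζ => ?_).mono fun P hP hpos => hP (pow_pos hpos _)
  · have hne : reciprocalPole μ x ((0 : ℝ) * ζ) ≠ 0 := by simp [reciprocalPole]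
    exact (contDiff_snd.pow _).contDiffAt.mul
      ((hq0.mul (contDiff_normSq.comp contDiff_snd)).contDiffAt.mul (hrec.contDiffAt.inv hne))
  · simp [outerTerm, reciprocalPole, hζ, mul_comm]

theorem eventually_norm_le_sum_add_one (x : ι → ℂ) :
    ∀ᶠ y in 𝓝 x, ∀ j, ‖y j‖ ≤ ∑ i, ‖x i‖ + 1 := by
  refine eventually_all.2 fun j => ?_
  refine ((continuous_apply j).norm.continuousAt.eventually (gt_mem_nhds ?_)).mono
    fun _ h => le_of_lt h
  linarith [Finset.single_le_sum (fun i _ => norm_nonneg (x i)) (Finset.mem_univ j)]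

theorem eventually_hasZeroCount_levelDeformation_outer (hμ : ∑ j, μ j ≠ 0)
    (hx : (polePoly μ x).eval 0 ≠ 0) :
    ∀ᶠ V in atTop, ∀ᶠ P : ℝ × (ι → ℂ) in 𝓝 (0, x), 0 < P.1 →
      HasZeroCount (levelDeformation μ P.1 P.2) {v | V < ‖v‖} (2 * ∑ j, μ j) := by
  set r : ℝ := ∑ j, ‖x j‖ + 1
  set K : ℝ := ‖(polePoly μ x).eval 0‖ + 1
  have hr : 0 < r := by positivity
  have hK : 0 < K := by positivity
  filter_upwards [eventually_ge_atTop (r + 1 + 3 * K)] with V hV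
  have hsqrt : Tendsto (fun P : ℝ × (ι → ℂ) => (√P.1, P.2)) (𝓝 (0, x)) (𝓝 (0, x)) := by
    have : ContinuousAt (fun P : ℝ × (ι → ℂ) => (√P.1, P.2)) (0, x) := by fun_prop
    simpa only [ContinuousAt, Real.sqrt_zero] using this
  have hsmall : ∀ᶠ P : ℝ × (ι → ℂ) in 𝓝 (0, x), √P.1 * (2 * V) < 1 := by
    have : ContinuousAt (fun P : ℝ × (ι → ℂ) => √P.1 * (2 * V)) (0, x) := by fun_prop
    exact this.eventually_lt continuousAt_const (by simp)
  have hq0 : ∀ᶠ P : ℝ × (ι → ℂ) in 𝓝 (0, x), ‖(polePoly μ P.2).eval 0‖ < K := by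
    have : Continuous fun P : ℝ × (ι → ℂ) => (polePoly μ P.2).eval 0 :=
      (contDiff_eval_polePoly μ).continuous.comp (f := fun P : ℝ × (ι → ℂ) => (P.2, (0 : ℂ)))
        (by fun_prop)
    exact this.norm.continuousAt.eventually_lt continuousAt_const (lt_add_one _)
  filter_upwards [hsqrt.eventually (eventually_hasZeroCount_outerTerm hμ hx), hsmall, hq0,
    continuous_snd.continuousAt.eventually (eventually_norm_le_sum_add_one x)]
    with P hcount hτV hqK hPr hpos
  have hτ : 0 < √P.1 := Real.sqrt_pos.2 hpos
  rw [← Real.sq_sqrt hpos.le]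
  refine (hcount hτ).levelDeformation_of_outerTerm hτ (by linarith) hτV hPr (by nlinarith) ?_
  intro v hv
  calc 3 * ‖(polePoly μ P.2).eval 0‖ < 3 * K := by linarith
    _ ≤ ‖v‖ - r := by linarith
    _ ≤ (‖v‖ - r) ^ ∑ j, μ j := le_self_pow₀ (by linarith) hμ
    _ ≤ _ := pow_le_norm_eval_polePoly μ hPr (by linarith)

end Outer

/-! ### Antiholomorphic unfolding of a multiple zero -/

/-- The perturbation of the zero of order `m + 1` of `ζ ^ (m + 1) * h ζ` at the origin by
`t * g ζ * conj ζ`. For small `t > 0` it unfolds into `m + 3` nondegenerate zeros. -/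
noncomputable def conjUnfolding (m : ℕ) (h g : ℂ → ℂ) (t : ℝ) (ζ : ℂ) : ℂ :=
  ζ ^ (m + 1) * h ζ - t * g ζ * (starRingEnd ℂ) ζ

section ConjUnfolding

variable {m : ℕ}

theorem conjUnfolding_ofReal_mul (h g : ℂ → ℂ) {s t : ℝ} (hst : s ^ m = t) (Z : ℂ) :
    conjUnfolding m h g t (s * Z) =
      s ^ (m + 1) * conjUnfolding m (fun Z => h (s * Z)) (fun Z => g (s * Z)) 1 Z := by
  simp only [conjUnfolding, ← hst, map_mul, Complex.conj_ofReal, Complex.ofReal_pow,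
    Complex.ofReal_one]
  ring

theorem differentiable_conjUnfolding {h g : ℂ → ℂ} (hh : Differentiable ℝ h)
    (hg : Differentiable ℝ g) (t : ℝ) : Differentiable ℝ (conjUnfolding m h g t) :=
  ((differentiable_id.pow _).mul hh).sub
    (((differentiable_const _).mul hg).mul Complex.conjCLE.differentiable)

theorem norm_le_of_conjUnfolding_eq_zero (hm : m ≠ 0) {h g : ℂ → ℂ} {Z : ℂ} {α β : ℝ} (hα : 0 < α)
    (hh : α ≤ ‖h Z‖) (hg : ‖g Z‖ ≤ β) (hZ : conjUnfolding m h g 1 Z = 0) :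
    ‖Z‖ ≤ max 1 (β / α) := by
  rcases le_or_gt ‖Z‖ 1 with hZ1 | hZ1
  · exact le_max_of_le_left hZ1
  have hZ0 : Z ≠ 0 := norm_pos_iff.1 (one_pos.trans hZ1)
  have hpow : ‖Z‖ ^ m = ‖g Z‖ / ‖h Z‖ := by
    rw [← norm_div]
    refine norm_pow_eq_of_mul_pow_eq_mul_conj (norm_pos_iff.1 (hα.trans_le hh)) hZ0 ?_
    rw [conjUnfolding, Complex.ofReal_one, one_mul, sub_eq_zero] at hZ
    rw [mul_comm, hZ]
  refine le_max_of_le_right ?_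
  calc ‖Z‖ ≤ ‖Z‖ ^ m := le_self_pow₀ hZ1.le hm
    _ = ‖g Z‖ / ‖h Z‖ := hpow
    _ ≤ β / α := div_le_div₀ ((norm_nonneg _).trans hg) hg hα hh

theorem HasZeroCount.conjUnfolding_of_rescaled {h g : ℂ → ℂ} {s t R δ : ℝ} {c w : ℂ} {N : ℕ}
    (hs : 0 < s) (hst : s ^ m = t) (hh : Differentiable ℝ h) (hg : Differentiable ℝ g)
    (hcount : HasZeroCount (conjUnfolding m (fun Z => h (s * Z)) (fun Z => g (s * Z)) 1)
      (Metric.closedBall 0 R) N)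
    (hδ : ‖c - w‖ + s * R < δ)
    (hbound : ∀ Z : ℂ, ‖c + s * Z - w‖ < δ →
      conjUnfolding m (fun Z => h (s * Z)) (fun Z => g (s * Z)) 1 Z = 0 → ‖Z‖ ≤ R) :
    HasZeroCount (fun v => conjUnfolding m h g t (v - c)) (Metric.ball w δ) N := by
  have hsc : (s : ℂ) ≠ 0 := Complex.ofReal_ne_zero.2 hs.ne'
  have hrescale : ∀ Z : ℂ, conjUnfolding m h g t (c + s * Z - c) =
      s ^ (m + 1) * conjUnfolding m (fun Z => h (s * Z)) (fun Z => g (s * Z)) 1 Z := fun Z => by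
    rw [add_sub_cancel_left, conjUnfolding_ofReal_mul h g hst]
  refine hcount.transfer (fun _ => ((s : ℂ) ^ (m + 1))⁻¹) (fun Z => c + s * Z)
    (fun Z _ Z' _ hZ => mul_left_cancel₀ hsc (add_left_cancel hZ)) ?_ ?_
    (fun _ _ => inv_ne_zero (pow_ne_zero _ hsc)) (fun _ _ => differentiableAt_const _)
    (fun _ _ => by fun_prop)
    (fun _ _ => ((differentiable_conjUnfolding hh hg t).comp (by fun_prop)).differentiableAt)
    fun _ _ => Eventually.of_forall fun Z => ?_
  · rintro Z ⟨hZ, -⟩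
    rw [mem_closedBall_zero_iff] at hZ
    rw [mem_ball_iff_norm]
    calc ‖c + s * Z - w‖ = ‖(c - w) + s * Z‖ := by rw [add_sub_right_comm]
      _ ≤ ‖c - w‖ + s * ‖Z‖ := by
        simpa [abs_of_pos hs] using norm_add_le (c - w) (s * Z)
      _ ≤ ‖c - w‖ + s * R := by gcongr
      _ < δ := hδ
  · rintro v ⟨hv, hv0⟩
    have hvZ : c + s * ((v - c) / s) = v := by
      rw [mul_div_cancel₀ _ hsc, add_sub_cancel]
    refine ⟨(v - c) / s, mem_closedBall_zero_iff.2 (hbound _ ?_ ?_), hvZ⟩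
    · rwa [hvZ, ← mem_ball_iff_norm]
    · have := hrescale ((v - c) / s)
      rw [hvZ, hv0] at this
      exact (mul_eq_zero.1 this.symm).resolve_left (pow_ne_zero _ hsc)
  · simp only [hrescale, inv_mul_cancel_left₀ (pow_ne_zero _ hsc)]

variable {E : Type*} [NormedAddCommGroup E] [NormedSpace ℝ E] {h g : E × ℂ → ℂ} {P₀ : E}

theorem contDiff_rescaled (hh : ContDiff ℝ 1 h) :
    ContDiff ℝ 1 fun u : (ℝ × E) × ℂ => h (u.1.2, u.1.1 * u.2) := by
  have hs : ContDiff ℝ 1 fun u : (ℝ × E) × ℂ => (u.1.1 : ℂ) :=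
    Complex.ofRealCLM.contDiff.comp (contDiff_fst.comp contDiff_fst)
  exact hh.comp ((contDiff_snd.comp contDiff_fst).prodMk (hs.mul contDiff_snd))

theorem eventually_hasZeroCount_rescaled_conjUnfolding [CompleteSpace E] (hm : m ≠ 0)
    (hh : ContDiff ℝ 1 h) (hg : ContDiff ℝ 1 g) (hh0 : h (P₀, 0) ≠ 0) (hg0 : g (P₀, 0) ≠ 0)
    {R : ℝ} (hR : max 1 (‖g (P₀, 0)‖ / ‖h (P₀, 0)‖) < R) :
    ∀ᶠ π : ℝ × E in 𝓝 (0, P₀), HasZeroCount (conjUnfolding m (fun Z => h (π.2, π.1 * Z))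
      (fun Z => g (π.2, π.1 * Z)) 1) (Metric.closedBall 0 R) (m + 3) := by
  have hG : ContDiff ℝ 1 fun u : (ℝ × E) × ℂ => conjUnfolding m (fun Z => h (u.1.2, u.1.1 * Z))
      (fun Z => g (u.1.2, u.1.1 * Z)) 1 u.2 :=
    ((contDiff_snd.pow _).mul (contDiff_rescaled hh)).sub
      ((contDiff_const.mul (contDiff_rescaled hg)).mul
        (Complex.conjCLE.contDiff.comp contDiff_snd))
  have hlimit : (conjUnfolding m (fun Z => h (P₀, (0 : ℝ) * Z)) (fun Z => g (P₀, (0 : ℝ) * Z)) 1) =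
      fun Z => h (P₀, 0) * Z ^ (m + 1) - g (P₀, 0) * (starRingEnd ℂ) Z := by
    ext Z
    simp only [conjUnfolding, Complex.ofReal_zero, zero_mul, Complex.ofReal_one, one_mul]
    ring
  have hbound : ∀ Z : ℂ, conjUnfolding m (fun Z => h (P₀, (0 : ℝ) * Z))
      (fun Z => g (P₀, (0 : ℝ) * Z)) 1 Z = 0 → ‖Z‖ < R := fun Z hZ =>
    (norm_le_of_conjUnfolding_eq_zero hm (norm_pos_iff.2 hh0) (by simp) (by simp) hZ).trans_lt hR
  have hcount : HasZeroCount (conjUnfolding m (fun Z => h (P₀, (0 : ℝ) * Z))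
      (fun Z => g (P₀, (0 : ℝ) * Z)) 1) (Metric.closedBall 0 R) (m + 3) := by
    refine HasZeroCount.congr_set (S := Set.univ) ?_ fun Z hZ =>
      iff_of_true trivial (mem_closedBall_zero_iff.2 (hbound Z hZ).le)
    exact hlimit ▸ hasZeroCount_mul_pow_sub_mul_conj hh0 hg0 hm
  have hstable := HasZeroCount.eventually_nhds (isCompact_closedBall (0 : ℂ) R) (π₀ := (0, P₀))
    (fun _ _ => hG.continuous.continuousAt)
    (fun Z _ hZ => ⟨hG.contDiffAt, Metric.ball_subset_interior_closedBall
      (mem_ball_zero_iff.2 (hbound Z hZ))⟩) hcount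
  exact hstable.mono fun π hπ => hπ.1

theorem tendsto_rpow_inv_prodMk {E : Type*} [TopologicalSpace E] {P₀ : E} (hm : m ≠ 0)
    {t : E → ℝ} (ht : ContinuousAt t P₀) (ht0 : t P₀ = 0) :
    Tendsto (fun P => (t P ^ (m : ℝ)⁻¹, P)) (𝓝 P₀) (𝓝 (0, P₀)) := by
  have hm' : 0 < (m : ℝ)⁻¹ := inv_pos.2 (Nat.cast_pos.2 (Nat.pos_of_ne_zero hm))
  have hroot : Tendsto (fun P => t P ^ (m : ℝ)⁻¹) (𝓝 P₀) (𝓝 0) := by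
    simpa [ht0, Real.zero_rpow hm'.ne'] using (ht.rpow_const (Or.inr hm'.le)).tendsto
  exact hroot.prodMk_nhds tendsto_id

theorem eventually_hasZeroCount_conjUnfolding [CompleteSpace E] (hm : m ≠ 0)
    (hh : ContDiff ℝ 1 h) (hg : ContDiff ℝ 1 g) (hh0 : h (P₀, 0) ≠ 0) (hg0 : g (P₀, 0) ≠ 0)
    {t : E → ℝ} (ht : ContinuousAt t P₀) (ht0 : t P₀ = 0) {c : E → ℂ} (hc : ContinuousAt c P₀) :
    ∀ᶠ δ : ℝ in 𝓝[>] 0, ∀ᶠ P in 𝓝 P₀, 0 < t P →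
      HasZeroCount (fun v => conjUnfolding m (fun ζ => h (P, ζ)) (fun ζ => g (P, ζ)) (t P)
        (v - c P)) (Metric.ball (c P₀) δ) (m + 3) := by
  have hh0' := norm_pos_iff.2 hh0
  have hbounds : ∀ᶠ u in 𝓝 (P₀, (0 : ℂ)),
      ‖h (P₀, 0)‖ / 2 < ‖h u‖ ∧ ‖g u‖ < ‖g (P₀, 0)‖ + 1 :=
    (continuousAt_const.eventually_lt hh.continuous.norm.continuousAt (half_lt_self hh0')).and
      (hg.continuous.norm.continuousAt.eventually_lt continuousAt_const (lt_add_one _))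
  rw [nhds_prod_eq] at hbounds
  obtain ⟨pa, hpa, pb, hpb, hbounds⟩ := eventually_prod_iff.1 hbounds
  obtain ⟨δ₀, hδ₀, hball⟩ := Metric.eventually_nhds_iff.1 hpb
  obtain ⟨R, hR⟩ := exists_gt (max 1 ((‖g (P₀, 0)‖ + 1) / (‖h (P₀, 0)‖ / 2)))
  have hR0 : 0 < R := one_pos.trans_le (le_max_left _ _) |>.trans hR
  have hrescaled := eventually_hasZeroCount_rescaled_conjUnfolding hm hh hg hh0 hg0 (R := R)
    ((max_le_max le_rfl (div_le_div₀ (by positivity) (by linarith) (by positivity)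
      (by linarith))).trans_lt hR)
  have hroot := tendsto_rpow_inv_prodMk hm ht ht0
  filter_upwards [self_mem_nhdsWithin, mem_nhdsWithin_of_mem_nhds (Iio_mem_nhds (half_pos hδ₀))]
    with δ (hδ : 0 < δ) (hδδ₀ : δ < δ₀ / 2)
  have hclose : ∀ᶠ P in 𝓝 P₀, ‖c P - c P₀‖ + t P ^ (m : ℝ)⁻¹ * R < δ := by
    refine ((hc.sub continuousAt_const).norm.tendsto.add
      ((continuous_fst.continuousAt.tendsto.comp hroot).mul_const R)).eventually_lt_const ?_
    simpa using hδ
  filter_upwards [hroot.eventually hrescaled, hclose, hpa] with P hcount hP hPa htP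
  have hs : 0 < t P ^ (m : ℝ)⁻¹ := Real.rpow_pos_of_pos htP _
  refine HasZeroCount.conjUnfolding_of_rescaled hs (Real.rpow_inv_natCast_pow htP.le hm)
    ((hh.comp (contDiff_prodMk_right P)).differentiable one_ne_zero)
    ((hg.comp (contDiff_prodMk_right P)).differentiable one_ne_zero) hcount hP fun Z hZ hZ0 => ?_
  have hsmall : dist ((t P ^ (m : ℝ)⁻¹ : ℝ) * Z) 0 < δ₀ := by
    have := norm_sub_le (c P + (t P ^ (m : ℝ)⁻¹ : ℝ) * Z - c P₀) (c P - c P₀)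
    rw [sub_sub_sub_cancel_right, add_sub_cancel_left] at this
    rw [dist_zero_right]
    linarith [mul_pos hs hR0]
  obtain ⟨hhZ, hgZ⟩ := hbounds hPa (hball hsmall)
  exact (norm_le_of_conjUnfolding_eq_zero hm (half_pos hh0') hhZ.le hgZ.le hZ0).trans hR.le

end ConjUnfolding

/-! ### Polynomials with continuously differentiable coefficients -/

/-- A family of complex polynomials whose coefficients are `C¹` functions of the parameter. -/
def CoeffContDiff {E : Type*} [NormedAddCommGroup E] [NormedSpace ℝ E] (P : E → ℂ[X]) : Prop :=
  ∀ l, ContDiff ℝ 1 fun u => (P u).coeff l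

namespace CoeffContDiff

variable {E : Type*} [NormedAddCommGroup E] [NormedSpace ℝ E] {P Q : E → ℂ[X]}

theorem const (p : ℂ[X]) : CoeffContDiff fun _ : E => p := fun _ => contDiff_const

theorem C {f : E → ℂ} (hf : ContDiff ℝ 1 f) : CoeffContDiff fun u => Polynomial.C (f u) := by
  intro l
  simp only [coeff_C]
  split
  exacts [hf, contDiff_const]

theorem add (hP : CoeffContDiff P) (hQ : CoeffContDiff Q) : CoeffContDiff fun u => P u + Q u :=
  fun l => by simpa only [coeff_add] using (hP l).add (hQ l)

theorem sub (hP : CoeffContDiff P) (hQ : CoeffContDiff Q) : CoeffContDiff fun u => P u - Q u :=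
  fun l => by simpa only [coeff_sub] using (hP l).sub (hQ l)

theorem mul (hP : CoeffContDiff P) (hQ : CoeffContDiff Q) : CoeffContDiff fun u => P u * Q u :=
  fun l => by
    simp only [coeff_mul]
    exact ContDiff.sum fun i _ => (hP i.1).mul (hQ i.2)

theorem pow (hP : CoeffContDiff P) (n : ℕ) : CoeffContDiff fun u => P u ^ n := by
  induction n with
  | zero => simpa only [pow_zero] using const 1
  | succ n ih => simpa only [pow_succ] using ih.mul hP

theorem prod {ι : Type*} {P : ι → E → ℂ[X]} (s : Finset ι) (hP : ∀ i, CoeffContDiff (P i)) :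
    CoeffContDiff fun u => ∏ i ∈ s, P i u := by
  classical
  induction s using Finset.induction_on with
  | empty => simpa only [Finset.prod_empty] using const 1
  | insert a s ha ih => simpa only [Finset.prod_insert ha] using (hP a).mul ih

theorem polePoly {ι : Type*} [Fintype ι] (μ : ι → ℕ) {x : E → ι → ℂ} (hx : ContDiff ℝ 1 x) :
    CoeffContDiff fun u => polePoly μ (x u) :=
  prod _ fun j => ((const X).sub (.C (contDiff_pi.1 hx j))).pow _

end CoeffContDiff

/-! ### Expansion of the deformed level set at a point -/

section LevelTaylor

variable {ι : Type*} [Fintype ι] (μ : ι → ℕ)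

/-- The expansion at `w` of `q(v) (1 - t conj(w) v) - q(0)`, `q = polePoly μ x`; this is the
deformation `q(v) (1 - t|v|²) - q(0)` with `conj v` frozen at `conj w`. -/
noncomputable def levelTaylor (t : ℝ) (x : ι → ℂ) (w : ℂ) : ℂ[X] :=
  taylor w (polePoly μ x * (1 - C (t * (starRingEnd ℂ) w) * X) - C ((polePoly μ x).eval 0))

theorem monic_polePoly {R : Type*} [CommRing R] (x : ι → R) : (polePoly μ x).Monic :=
  monic_prod_of_monic _ _ fun _ _ => (monic_X_sub_C _).pow _

theorem natDegree_polePoly {R : Type*} [CommRing R] [Nontrivial R] (x : ι → R) :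
    (polePoly μ x).natDegree = ∑ j, μ j := by
  rw [polePoly, natDegree_prod_of_monic _ _ fun _ _ => (monic_X_sub_C _).pow _]
  simp_rw [(monic_X_sub_C _).natDegree_pow, natDegree_X_sub_C, mul_one]

theorem taylor_polePoly {R : Type*} [CommRing R] (x : ι → R) (w : R) :
    taylor w (polePoly μ x) = polePoly μ fun j => x j - w := by
  rw [polePoly, taylor_apply, Polynomial.prod_comp]
  refine Finset.prod_congr rfl fun j _ => ?_
  rw [pow_comp, sub_comp, X_comp, C_comp, C_sub, sub_sub_eq_add_sub]

theorem levelTaylor_eq (t : ℝ) (x : ι → ℂ) (w : ℂ) :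
    levelTaylor μ t x w = (polePoly μ fun j => x j - w) *
      (1 - C (t * (starRingEnd ℂ) w) * (X + C w)) - C ((polePoly μ x).eval 0) := by
  rw [levelTaylor, map_sub, taylor_mul, taylor_polePoly, map_sub, taylor_mul, taylor_one,
    taylor_C, taylor_C, taylor_X, C_1]

theorem natDegree_levelTaylor_le (t : ℝ) (x : ι → ℂ) (w : ℂ) :
    (levelTaylor μ t x w).natDegree ≤ ∑ j, μ j + 1 := by
  rw [levelTaylor, natDegree_taylor, natDegree_sub_C]
  refine natDegree_mul_le.trans (add_le_add (natDegree_polePoly μ x).le ?_)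
  compute_degree

theorem coeffContDiff_levelTaylor {E : Type*} [NormedAddCommGroup E] [NormedSpace ℝ E]
    {t : E → ℝ} {x : E → ι → ℂ} {w : E → ℂ} (ht : ContDiff ℝ 1 t) (hx : ContDiff ℝ 1 x)
    (hw : ContDiff ℝ 1 w) : CoeffContDiff fun u => levelTaylor μ (t u) (x u) (w u) := by
  simp_rw [levelTaylor_eq]
  have hxw : ContDiff ℝ 1 fun u j => x u j - w u :=
    contDiff_pi.2 fun j => (contDiff_pi.1 hx j).sub hw
  have htw : ContDiff ℝ 1 fun u => (t u : ℂ) * (starRingEnd ℂ) (w u) :=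
    (Complex.ofRealCLM.contDiff.comp ht).mul (Complex.conjCLE.contDiff.comp hw)
  exact ((CoeffContDiff.polePoly μ hxw).mul ((CoeffContDiff.const 1).sub
    ((CoeffContDiff.C htw).mul ((CoeffContDiff.const X).add (.C hw))))).sub
    (.C ((contDiff_eval_polePoly μ).comp (hx.prodMk contDiff_const)))

theorem levelDeformation_eq_eval_levelTaylor (t : ℝ) (x : ι → ℂ) (w v : ℂ) :
    levelDeformation μ t x v = (levelTaylor μ t x w).eval (v - w) -
      t * (v * (polePoly μ x).eval v) * (starRingEnd ℂ) (v - w) := by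
  simp only [levelTaylor, taylor_eval, levelDeformation, sub_add_cancel, eval_sub, eval_mul,
    eval_one, eval_C, eval_X, ← Complex.mul_conj, map_sub]
  ring

theorem eval_eq_pow_mul_sum_of_X_pow_dvd {R : Type*} [CommSemiring R] {p : R[X]} {k n : ℕ}
    (hp : X ^ k ∣ p) (hn : p.natDegree < k + n) (ζ : R) :
    p.eval ζ = ζ ^ k * ∑ l ∈ Finset.range n, p.coeff (k + l) * ζ ^ l := by
  have hlow : ∑ l ∈ Finset.range k, p.coeff l * ζ ^ l = 0 := Finset.sum_eq_zero fun l hl => by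
    rw [X_pow_dvd_iff.1 hp l (Finset.mem_range.1 hl), zero_mul]
  rw [eval_eq_sum_range' hn, Finset.sum_range_add, hlow, zero_add, Finset.mul_sum]
  refine Finset.sum_congr rfl fun l _ => ?_
  rw [pow_add]
  ring

theorem eventually_hasZeroCount_levelDeformation_ball {m : ℕ} (hm : m ≠ 0) {x₀ : ι → ℂ} {w₀ : ℂ}
    (hw₀ : w₀ ≠ 0) (hq : (polePoly μ x₀).eval w₀ ≠ 0)
    (hcoeff : (levelTaylor μ 0 x₀ w₀).coeff (m + 1) ≠ 0) :
    ∀ᶠ δ : ℝ in 𝓝[>] 0, ∀ᶠ P : ℝ × (ι → ℂ) × ℂ in 𝓝 (0, x₀, w₀), 0 < P.1 →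
      X ^ (m + 1) ∣ levelTaylor μ P.1 P.2.1 P.2.2 →
      HasZeroCount (levelDeformation μ P.1 P.2.1) (Metric.ball w₀ δ) (m + 3) := by
  set h : (ℝ × (ι → ℂ) × ℂ) × ℂ → ℂ := fun u => ∑ l ∈ Finset.range (∑ j, μ j + 2),
    (levelTaylor μ u.1.1 u.1.2.1 u.1.2.2).coeff (m + 1 + l) * u.2 ^ l with hh_def
  set g : (ℝ × (ι → ℂ) × ℂ) × ℂ → ℂ := fun u =>
    (u.2 + u.1.2.2) * (polePoly μ u.1.2.1).eval (u.2 + u.1.2.2) with hg_def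
  have hh : ContDiff ℝ 1 h := ContDiff.sum fun l _ =>
    (coeffContDiff_levelTaylor μ (E := (ℝ × (ι → ℂ) × ℂ) × ℂ) (by fun_prop) (by fun_prop)
      (by fun_prop) _).mul (contDiff_snd.pow l)
  have hg : ContDiff ℝ 1 g := by
    have hv : ContDiff ℝ 1 fun u : (ℝ × (ι → ℂ) × ℂ) × ℂ => u.2 + u.1.2.2 := by fun_prop
    exact hv.mul ((contDiff_eval_polePoly μ).comp ((by fun_prop :
      ContDiff ℝ 1 fun u : (ℝ × (ι → ℂ) × ℂ) × ℂ => u.1.2.1).prodMk hv))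
  have hh0 : h ((0, x₀, w₀), 0) ≠ 0 := by
    simpa [hh_def, Finset.sum_range_succ'] using hcoeff
  have hg0 : g ((0, x₀, w₀), 0) ≠ 0 := by simpa [hg_def] using ⟨hw₀, hq⟩
  filter_upwards [eventually_hasZeroCount_conjUnfolding hm hh hg hh0 hg0 continuousAt_fst rfl
    (c := fun P => P.2.2) (by fun_prop)] with δ hδ
  filter_upwards [hδ] with P hP htP hdvd
  convert hP htP using 1
  ext v
  rw [levelDeformation_eq_eval_levelTaylor μ P.1 P.2.1 P.2.2,
    eval_eq_pow_mul_sum_of_X_pow_dvd hdvd (n := ∑ j, μ j + 2)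
      (by linarith [natDegree_levelTaylor_le μ P.1 P.2.1 P.2.2])]
  simp only [conjUnfolding, hh_def, hg_def, sub_add_cancel]

end LevelTaylor

/-! ### Counting the zeros of the deformed level set -/

/-- A factorization of the level set through `0` of `q = polePoly μ x`: besides the simple roots of
`L` it consists of the points `ω i`, at which `q` has a critical point of multiplicity `m i`. -/
structure LevelFactorization {ι σ : Type*} [Fintype ι] [Fintype σ] (μ : ι → ℕ) (x : ι → ℂ)
    (L : ℂ[X]) (ω : σ → ℂ) (m : σ → ℕ) : Prop where
  eval_zero_ne : (polePoly μ x).eval 0 ≠ 0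
  sub_C_eq : polePoly μ x - C ((polePoly μ x).eval 0) = L * ∏ i, (X - C (ω i)) ^ (m i + 1)
  separable : L.Separable
  eval_ne_zero : ∀ i, L.eval (ω i) ≠ 0
  injective : Injective ω
  ne_zero : ∀ i, ω i ≠ 0
  multiplicity_ne_zero : ∀ i, m i ≠ 0

namespace LevelFactorization

variable {ι σ : Type*} [Fintype ι] [Fintype σ] {μ : ι → ℕ} {x : ι → ℂ} {L : ℂ[X]} {ω : σ → ℂ}
  {m : σ → ℕ}

theorem exists_eq_C_add_pow_mul (h : LevelFactorization μ x L ω m) (i : σ) :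
    ∃ B : ℂ[X], B.eval (ω i) ≠ 0 ∧
      polePoly μ x = C ((polePoly μ x).eval 0) + (X - C (ω i)) ^ (m i + 1) * B := by
  classical
  refine ⟨L * ∏ k ∈ Finset.univ.erase i, (X - C (ω k)) ^ (m k + 1), ?_, ?_⟩
  · rw [eval_mul, eval_prod]
    refine mul_ne_zero (h.eval_ne_zero i) (Finset.prod_ne_zero_iff.2 fun k hk => ?_)
    simpa [sub_eq_zero] using fun hik => Finset.ne_of_mem_erase hk (h.injective hik).symm
  · rw [mul_left_comm, Finset.mul_prod_erase _ (fun k => (X - C (ω k)) ^ (m k + 1))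
      (Finset.mem_univ i), ← h.sub_C_eq, add_sub_cancel]

theorem eval_eq (h : LevelFactorization μ x L ω m) (i : σ) :
    (polePoly μ x).eval (ω i) = (polePoly μ x).eval 0 := by
  obtain ⟨B, -, hB⟩ := h.exists_eq_C_add_pow_mul i
  simpa using congrArg (Polynomial.eval (ω i)) hB

theorem exists_levelTaylor_eq (h : LevelFactorization μ x L ω m) (i : σ) :
    ∃ B : ℂ[X], B.coeff 0 ≠ 0 ∧ levelTaylor μ 0 x (ω i) = X ^ (m i + 1) * B := by
  obtain ⟨B, hB0, hB⟩ := h.exists_eq_C_add_pow_mul i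
  refine ⟨taylor (ω i) B, by rwa [taylor_coeff_zero], ?_⟩
  rw [levelTaylor, Complex.ofReal_zero, zero_mul, C_0, zero_mul, sub_zero, mul_one,
    sub_eq_of_eq_add' hB, taylor_mul, taylor_pow, map_sub, taylor_X, taylor_C, add_sub_cancel_right]

theorem X_pow_dvd_levelTaylor (h : LevelFactorization μ x L ω m) (i : σ) :
    X ^ (m i + 1) ∣ levelTaylor μ 0 x (ω i) := by
  obtain ⟨B, -, hB⟩ := h.exists_levelTaylor_eq i
  exact Dvd.intro _ hB.symm

theorem coeff_levelTaylor_ne_zero (h : LevelFactorization μ x L ω m) (i : σ) :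
    (levelTaylor μ 0 x (ω i)).coeff (m i + 1) ≠ 0 := by
  obtain ⟨B, hB0, hB⟩ := h.exists_levelTaylor_eq i
  simpa [hB, coeff_X_pow_mul'] using hB0

end LevelFactorization

theorem NondegenerateAt.of_hasDerivAt {f : ℂ → ℂ} {f' z : ℂ} (hf : HasDerivAt f f' z)
    (hf' : f' ≠ 0) : NondegenerateAt f z := by
  refine ⟨_, hf.complexToReal_fderiv, fun a b hab => ?_⟩
  simpa [hf'] using hab

theorem hasZeroCount_eval_mul_of_separable {L M : ℂ[X]} {K : Set ℂ} (hL : L.Separable)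
    (hLK : ∀ v, L.eval v = 0 → v ∈ K) (hMK : ∀ v ∈ K, M.eval v ≠ 0) :
    HasZeroCount (fun v => (L * M).eval v) K L.natDegree := by
  have hzero : ∀ v ∈ K, ((L * M).eval v = 0 ↔ L.eval v = 0) := fun v hv => by
    rw [eval_mul, mul_eq_zero, or_iff_left (hMK v hv)]
  refine ⟨?_, fun v hv hv0 => .of_hasDerivAt (Polynomial.hasDerivAt _ v) ?_⟩
  · have hset : {v ∈ K | (L * M).eval v = 0} = L.rootSet ℂ := by
      ext v
      rw [mem_rootSet_of_ne hL.ne_zero, coe_aeval_eq_eval]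
      exact ⟨fun hv => (hzero v hv.1).1 hv.2, fun hv => ⟨hLK v hv, (hzero v (hLK v hv)).2 hv⟩⟩
    rw [hset, ← card_rootSet_eq_natDegree (K := ℂ) hL (IsAlgClosed.splits_domain _),
      Set.encard_eq_coe_toFinset_card, Set.toFinset_card]
  · have hLv := (hzero v hv).1 hv0
    rw [derivative_mul, eval_add, eval_mul, eval_mul, hLv, zero_mul, add_zero]
    exact mul_ne_zero (hL.eval₂_derivative_ne_zero (RingHom.id ℂ) hLv) (hMK v hv)

namespace LevelFactorization

variable {ι σ : Type*} [Fintype ι] [Fintype σ] {μ : ι → ℕ} {x : ι → ℂ} {L : ℂ[X]} {ω : σ → ℂ}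
  {m : σ → ℕ}

theorem eventually_hasZeroCount_middle (h : LevelFactorization μ x L ω m) {δ V : ℝ} (hδ0 : 0 < δ)
    (hδ : ∀ i, ∀ v ∈ Metric.closedBall (ω i) δ, L.eval v ≠ 0) (hV : ∀ v, L.eval v = 0 → ‖v‖ < V) :
    ∀ᶠ P : ℝ × (ι → ℂ) in 𝓝 (0, x), HasZeroCount (levelDeformation μ P.1 P.2)
      (Metric.closedBall 0 V \ ⋃ i, Metric.ball (ω i) δ) L.natDegree := by
  set K : Set ℂ := Metric.closedBall 0 V \ ⋃ i, Metric.ball (ω i) δ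
  have hK : IsCompact K :=
    (isCompact_closedBall 0 V).diff (isOpen_iUnion fun _ => Metric.isOpen_ball)
  have hlevel : levelDeformation μ 0 x =
      fun v => (L * ∏ i, (X - C (ω i)) ^ (m i + 1)).eval v := by
    ext v
    simp [← h.sub_C_eq, levelDeformation]
  have hroots : ∀ v, L.eval v = 0 → v ∈ interior K := fun v hv => by
    have hopen : IsOpen (Metric.ball (0 : ℂ) V \ ⋃ i, Metric.closedBall (ω i) δ) :=
      Metric.isOpen_ball.sdiff (isClosed_iUnion_of_finite fun _ => Metric.isClosed_closedBall)
    refine interior_maximal (Set.sdiff_subset_sdiff Metric.ball_subset_closedBall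
      (Set.iUnion_mono fun _ => Metric.ball_subset_closedBall)) hopen
      ⟨mem_ball_zero_iff.2 (hV v hv), fun hmem => ?_⟩
    obtain ⟨i, hi⟩ := Set.mem_iUnion.1 hmem
    exact hδ i v hi hv
  have hcofactor : ∀ v ∈ K, (∏ i, (X - C (ω i)) ^ (m i + 1)).eval v ≠ 0 := fun v hv => by
    rw [eval_prod]
    refine Finset.prod_ne_zero_iff.2 fun i _ => ?_
    rw [eval_pow, eval_sub, eval_X, eval_C]
    refine pow_ne_zero _ (sub_ne_zero.2 ?_)
    rintro rfl
    exact hv.2 (Set.mem_iUnion.2 ⟨i, Metric.mem_ball_self hδ0⟩)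
  have hcount : HasZeroCount (levelDeformation μ 0 x) K L.natDegree :=
    hlevel ▸ hasZeroCount_eval_mul_of_separable h.separable
      (fun v hv => interior_subset (hroots v hv)) hcofactor
  have hstable := HasZeroCount.eventually_nhds hK (π₀ := ((0 : ℝ), x))
    (fun _ _ => (contDiff_levelDeformation μ).continuous.continuousAt)
    (fun v hv hv0 => ⟨(contDiff_levelDeformation μ).contDiffAt, hroots v ?_⟩) hcount
  · exact hstable.mono fun P hP => hP.1
  · rw [show levelDeformation μ _ _ v = _ from congrFun hlevel v, eval_mul] at hv0
    exact (mul_eq_zero.1 hv0).resolve_right (hcofactor v hv)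

theorem eventually_disjoint_balls (h : LevelFactorization μ x L ω m) :
    ∀ᶠ δ : ℝ in 𝓝[>] 0, Pairwise (Disjoint on fun i => Metric.ball (ω i) δ) := by
  refine eventually_all.2 fun i => eventually_all.2 fun j => ?_
  by_cases hij : i = j
  · exact Eventually.of_forall fun _ hne => absurd hij hne
  have hdist : 0 < dist (ω i) (ω j) / 2 := half_pos (dist_pos.2 (h.injective.ne hij))
  filter_upwards [mem_nhdsWithin_of_mem_nhds (Iio_mem_nhds hdist)] with δ (hδ : δ < _) _
  exact Metric.ball_disjoint_ball (by linarith)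

theorem eventually_forall_closedBall_eval_ne_zero (h : LevelFactorization μ x L ω m) :
    ∀ᶠ δ : ℝ in 𝓝[>] 0, ∀ i, ∀ v ∈ Metric.closedBall (ω i) δ, L.eval v ≠ 0 := by
  refine eventually_all.2 fun i => ?_
  obtain ⟨ε, hε, hball⟩ := Metric.eventually_nhds_iff.1
    (L.continuous.continuousAt.eventually_ne (h.eval_ne_zero i))
  filter_upwards [mem_nhdsWithin_of_mem_nhds (Iio_mem_nhds hε)] with δ (hδ : δ < ε) v hv
  exact hball ((Metric.mem_closedBall.1 hv).trans_lt hδ)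

theorem eventually_forall_root_norm_lt (h : LevelFactorization μ x L ω m) :
    ∀ᶠ V : ℝ in atTop, ∀ v, L.eval v = 0 → ‖v‖ < V := by
  filter_upwards [(L.roots.toFinset.eventually_all (p := fun v V => ‖v‖ < V)).2
    fun v _ => eventually_gt_atTop _] with V hV v hv
  exact hV v (by simpa [h.separable.ne_zero] using hv)

theorem eventually_iUnion_ball_subset {σ : Type*} [Finite σ] (ω : σ → ℂ) (δ : ℝ) :
    ∀ᶠ V : ℝ in atTop, ⋃ i, Metric.ball (ω i) δ ⊆ Metric.closedBall 0 V := by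
  filter_upwards [eventually_all.2 fun i => eventually_ge_atTop (δ + dist (ω i) 0)] with V hV
  exact Set.iUnion_subset fun i => Metric.ball_subset_closedBall.trans
    (Metric.closedBall_subset_closedBall' (hV i))

theorem eventually_hasZeroCount_ball (h : LevelFactorization μ x L ω m) :
    ∀ᶠ δ : ℝ in 𝓝[>] 0, ∀ᶠ P : ℝ × (ι → ℂ) × (σ → ℂ) in 𝓝 (0, x, ω), 0 < P.1 →
      (∀ i, X ^ (m i + 1) ∣ levelTaylor μ P.1 P.2.1 (P.2.2 i)) →
      ∀ i, HasZeroCount (levelDeformation μ P.1 P.2.1) (Metric.ball (ω i) δ) (m i + 3) := by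
  have hball := eventually_all.2 fun i =>
    eventually_hasZeroCount_levelDeformation_ball μ (h.multiplicity_ne_zero i) (h.ne_zero i)
      (h.eval_eq i ▸ h.eval_zero_ne) (h.coeff_levelTaylor_ne_zero i)
  filter_upwards [hball] with δ hδ
  have hproj : ∀ i, Tendsto (fun P : ℝ × (ι → ℂ) × (σ → ℂ) => (P.1, P.2.1, P.2.2 i))
      (𝓝 (0, x, ω)) (𝓝 (0, x, ω i)) := fun i => Continuous.tendsto (by fun_prop) _
  filter_upwards [eventually_all.2 fun i => (hproj i).eventually (hδ i)] with P hP htP hdvd i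
  exact hP i htP (hdvd i)

theorem eventually_hasZeroCount_univ (h : LevelFactorization μ x L ω m) (hμ : ∑ j, μ j ≠ 0) :
    ∀ᶠ P : ℝ × (ι → ℂ) × (σ → ℂ) in 𝓝 (0, x, ω), 0 < P.1 →
      (∀ i, X ^ (m i + 1) ∣ levelTaylor μ P.1 P.2.1 (P.2.2 i)) →
      HasZeroCount (levelDeformation μ P.1 P.2.1) Set.univ
        (2 * ∑ j, μ j + ∑ i, (m i + 3) + L.natDegree) := by
  obtain ⟨δ, hinner, hdisj, hδ, hδ0 : 0 < δ⟩ := (h.eventually_hasZeroCount_ball.and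
    (h.eventually_disjoint_balls.and (h.eventually_forall_closedBall_eval_ne_zero.and
      self_mem_nhdsWithin))).exists
  obtain ⟨V, houter, hroots, hballs⟩ :=
    ((eventually_hasZeroCount_levelDeformation_outer hμ h.eval_zero_ne).and
      (h.eventually_forall_root_norm_lt.and (eventually_iUnion_ball_subset ω δ))).exists
  have hproj : Tendsto (fun P : ℝ × (ι → ℂ) × (σ → ℂ) => (P.1, P.2.1)) (𝓝 (0, x, ω))
      (𝓝 (0, x)) := Continuous.tendsto (by fun_prop) _
  filter_upwards [hproj.eventually houter, hinner,
    hproj.eventually (h.eventually_hasZeroCount_middle hδ0 hδ hroots)] with P hout hin hmid htP hdvd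
  have hin' := HasZeroCount.biUnion (hin htP hdvd) hdisj Finset.univ
  simp only [Finset.mem_univ, Set.iUnion_true] at hin'
  have hcompl : {v : ℂ | V < ‖v‖} = (Metric.closedBall 0 V)ᶜ := by
    ext v
    simp
  have hout' := (hcompl ▸ hout htP).union hin'
    (Set.disjoint_compl_left_iff_subset.2 hballs)
  refine (hout'.union hmid ?_).congr_set fun v _ => iff_of_true ?_ trivial
  · rw [Set.disjoint_left]
    rintro v (hv | hv) ⟨hv', hv''⟩
    exacts [hv hv', hv'' hv]
  · by_cases hv : v ∈ Metric.closedBall (0 : ℂ) V <;>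
      by_cases hv' : v ∈ ⋃ i, Metric.ball (ω i) δ <;> simp only [Set.mem_union, Set.mem_sdiff,
        Set.mem_compl_iff, hv, hv', not_true, not_false_iff, true_or, or_true, and_self]

end LevelFactorization

/-! ### Variation of the poles -/

section PoleNumerator

variable {ι R : Type*} [Fintype ι] [CommRing R] (μ : ι → ℕ) (x : ι → R)

open scoped Classical in
/-- The numerator of `∑ j, μ j * δ j / (X - x j)` over the common denominator `∏ j, (X - x j)`.
Up to sign it is the logarithmic derivative of `polePoly μ x` in the direction `δ`, and for `δ = 1`
it is the logarithmic derivative with respect to `X`. -/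
noncomputable def poleNumerator (δ : ι → R) : R[X] :=
  ∑ j, C (μ j * δ j) * Lagrange.nodal (Finset.univ.erase j) x

variable {μ} in
open scoped Classical in
theorem polePoly_pred_mul_poleNumerator (hμ : ∀ j, 0 < μ j) (δ : ι → R) :
    polePoly (fun j => μ j - 1) x * poleNumerator μ x δ =
      ∑ j, C (μ j * δ j) * ((X - C (x j)) ^ (μ j - 1) *
        ∏ k ∈ Finset.univ.erase j, (X - C (x k)) ^ μ k) := by
  rw [poleNumerator, Finset.mul_sum]
  refine Finset.sum_congr rfl fun j _ => ?_
  have hsplit : ∏ k ∈ Finset.univ.erase j, (X - C (x k)) ^ μ k =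
      (∏ k ∈ Finset.univ.erase j, (X - C (x k)) ^ (μ k - 1)) *
        Lagrange.nodal (Finset.univ.erase j) x := by
    rw [Lagrange.nodal, ← Finset.prod_mul_distrib]
    exact Finset.prod_congr rfl fun k _ => by rw [← pow_succ, Nat.sub_add_cancel (hμ k)]
  rw [polePoly, ← Finset.mul_prod_erase _ _ (Finset.mem_univ j), hsplit]
  ring

variable {μ} in
theorem derivative_polePoly (hμ : ∀ j, 0 < μ j) :
    derivative (polePoly μ x) =
      polePoly (fun j => μ j - 1) x * poleNumerator μ x (fun _ => 1) := by
  classical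
  rw [polePoly_pred_mul_poleNumerator x hμ, polePoly, derivative_prod_finset]
  refine Finset.sum_congr rfl fun j _ => ?_
  rw [derivative_X_sub_C_pow, mul_one]
  ring

theorem poleNumerator_const_sub (ν : R) (δ : ι → R) :
    poleNumerator μ x (fun j => ν - δ j) =
      C ν * poleNumerator μ x (fun _ => 1) - poleNumerator μ x δ := by
  simp only [poleNumerator, Finset.mul_sum, ← Finset.sum_sub_distrib]
  refine Finset.sum_congr rfl fun j _ => ?_
  simp only [C_mul, C_sub, C_1]
  ring

theorem poleNumerator_sub_const (ν : R) (δ : ι → R) :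
    poleNumerator μ x (fun j => δ j - ν) = -poleNumerator μ x (fun j => ν - δ j) := by
  rw [poleNumerator, poleNumerator, ← Finset.sum_neg_distrib]
  refine Finset.sum_congr rfl fun j _ => ?_
  rw [← neg_mul, ← C_neg, ← mul_neg, neg_sub]

theorem taylor_poleNumerator (w : R) (δ : ι → R) :
    taylor w (poleNumerator μ x δ) = poleNumerator μ (fun j => x j - w) δ := by
  rw [poleNumerator, map_sum, poleNumerator]
  refine Finset.sum_congr rfl fun j _ => ?_
  rw [taylor_mul, taylor_C, taylor_apply, Lagrange.nodal, Lagrange.nodal, Polynomial.prod_comp]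
  congr 1
  refine Finset.prod_congr rfl fun k _ => ?_
  rw [sub_comp, X_comp, C_comp, C_sub, sub_sub_eq_add_sub]

end PoleNumerator

theorem exists_poleNumerator_eq {ι K : Type*} [Fintype ι] [Field K] [CharZero K] {μ : ι → ℕ}
    {x : ι → K} (hμ : ∀ j, 0 < μ j) (hx : Injective x) {N : K[X]}
    (hN : N.degree < Fintype.card ι) : ∃ δ, poleNumerator μ x δ = N := by
  classical
  refine ⟨fun j => N.eval (x j) * Lagrange.nodalWeight Finset.univ x j / μ j, ?_⟩
  refine .trans ?_ (Lagrange.eq_interpolate (s := .univ) hx.injOn (by rwa [Finset.card_univ])).symm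
  rw [Lagrange.interpolate_apply, poleNumerator]
  refine Finset.sum_congr rfl fun j hj => ?_
  rw [Lagrange.basis_eq_prod_sub_inv_mul_nodal_div hj, ← Lagrange.nodal_erase_eq_nodal_div hj,
    mul_div_cancel₀ _ (Nat.cast_ne_zero.2 (hμ j).ne'), C_mul, mul_assoc]

theorem exists_forall_dvd_mul_sub {σ K : Type*} [Fintype σ] [Field K] {g : σ → K[X]} {W : K[X]}
    (hmonic : ∀ i, (g i).Monic) (hg : Pairwise (onFun IsCoprime g))
    (hW : ∀ i, IsCoprime W (g i)) (c : σ → K[X]) :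
    ∃ M : K[X], M.degree < (∑ i, (g i).natDegree : ℕ) ∧ ∀ i, g i ∣ W * M - c i := by
  choose a b hab using hW
  obtain ⟨M, hM⟩ := Ideal.exists_forall_sub_mem_ideal (I := fun i => Ideal.span {g i})
    (fun i j hij => (Ideal.isCoprime_span_singleton_iff _ _).2 (hg hij)) (fun i => c i * a i)
  have hprod : (∏ i, g i).Monic := monic_prod_of_monic _ _ fun i _ => hmonic i
  refine ⟨M %ₘ ∏ i, g i, ?_, fun i => ?_⟩
  · rw [← natDegree_prod_of_monic _ _ fun i _ => hmonic i, ← degree_eq_natDegree hprod.ne_zero]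
    exact degree_modByMonic_lt _ hprod
  · have hMi : g i ∣ M - c i * a i := Ideal.mem_span_singleton.1 (hM i)
    have hgi : g i ∣ ∏ i, g i := Finset.dvd_prod_of_mem _ (Finset.mem_univ i)
    have hsplit : W * (M %ₘ ∏ i, g i) - c i =
        W * (M - c i * a i) - (∏ i, g i) * (W * (M /ₘ ∏ i, g i)) - g i * (c i * b i) := by
      linear_combination W * modByMonic_add_div M (∏ i, g i) + c i * hab i
    rw [hsplit]
    exact ((hMi.mul_left _).sub (hgi.mul_right _)).sub (dvd_mul_right _ _)

theorem exists_derivative_C_add_pow_mul_eq {K : Type*} [Field K] [CharZero K] {B : K[X]} {w : K}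
    (hB : B.eval w ≠ 0) (κ : K) (m : ℕ) : ∃ A : K[X], A.eval w ≠ 0 ∧
      derivative (C κ + (X - C w) ^ (m + 1) * B) = (X - C w) ^ m * A := by
  refine ⟨C (m + 1 : K) * B + (X - C w) * derivative B, ?_, ?_⟩
  · simpa using ⟨Nat.cast_add_one_ne_zero m, hB⟩
  · rw [derivative_add, derivative_C, derivative_mul, derivative_X_sub_C_pow, Nat.add_sub_cancel]
    push_cast
    ring

theorem isCoprime_polePoly_of_ne {ι K : Type*} [Fintype ι] [Field K] (μ : ι → ℕ) {x : ι → K}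
    {w : K} (hw : ∀ j, x j ≠ w) : IsCoprime (polePoly μ x) (X - C w) :=
  IsCoprime.prod_left fun j _ => (isCoprime_X_sub_C_of_isUnit_sub
    (isUnit_iff_ne_zero.2 (sub_ne_zero.2 (hw j)))).pow_left

/-! ### Solvability of the linearized flatness conditions -/

section HasCoeffDerivAt

/-- `P'` is the derivative at `u`, coefficient by coefficient, of the family of polynomials `P`. -/
def HasCoeffDerivAt (P : ℝ → ℂ[X]) (P' : ℂ[X]) (u : ℝ) : Prop :=
  ∀ l, HasDerivAt (fun u => (P u).coeff l) (P'.coeff l) u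

namespace HasCoeffDerivAt

variable {P Q : ℝ → ℂ[X]} {P' Q' : ℂ[X]} {u : ℝ}

theorem const (p : ℂ[X]) : HasCoeffDerivAt (fun _ => p) 0 u := fun l => by
  simpa only [coeff_zero] using hasDerivAt_const _ _

theorem C {f : ℝ → ℂ} {f' : ℂ} (hf : HasDerivAt f f' u) :
    HasCoeffDerivAt (fun u => Polynomial.C (f u)) (Polynomial.C f') u := fun l => by
  simp only [coeff_C]
  split
  exacts [hf, hasDerivAt_const _ _]

theorem sub (hP : HasCoeffDerivAt P P' u) (hQ : HasCoeffDerivAt Q Q' u) :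
    HasCoeffDerivAt (fun u => P u - Q u) (P' - Q') u := fun l => by
  simpa only [coeff_sub] using (hP l).fun_sub (hQ l)

theorem mul (hP : HasCoeffDerivAt P P' u) (hQ : HasCoeffDerivAt Q Q' u) :
    HasCoeffDerivAt (fun u => P u * Q u) (P' * Q u + P u * Q') u := by
  intro l
  simp only [coeff_add, coeff_mul]
  rw [← Finset.sum_add_distrib]
  exact HasDerivAt.fun_sum fun k _ => (hP k.1).mul (hQ k.2)

theorem pow (hP : HasCoeffDerivAt P P' u) (m : ℕ) :
    HasCoeffDerivAt (fun u => P u ^ m) (m * P u ^ (m - 1) * P') u := by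
  induction m with
  | zero => simpa only [pow_zero, Nat.cast_zero, zero_mul] using const 1
  | succ m ih =>
    simp only [pow_succ]
    convert ih.mul hP using 1
    rcases m with _ | m
    · simp
    · simp only [Nat.add_sub_cancel, pow_succ, Nat.cast_add, Nat.cast_one]
      ring

theorem prod {ι : Type*} [DecidableEq ι] {P : ι → ℝ → ℂ[X]} {P' : ι → ℂ[X]}
    (hP : ∀ i, HasCoeffDerivAt (P i) (P' i) u) (s : Finset ι) :
    HasCoeffDerivAt (fun u => ∏ i ∈ s, P i u) (∑ j ∈ s, P' j * ∏ k ∈ s.erase j, P k u) u := by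
  induction s using Finset.induction_on with
  | empty => simpa only [Finset.prod_empty, Finset.sum_empty] using const 1
  | insert a s ha ih =>
    simp only [Finset.prod_insert ha]
    convert (hP a).mul ih using 1
    rw [Finset.sum_insert ha, Finset.erase_insert ha, Finset.mul_sum]
    congr 1
    refine Finset.sum_congr rfl fun j hj => ?_
    have hja : a ≠ j := fun h => ha (h ▸ hj)
    rw [Finset.erase_insert_of_ne hja, Finset.prod_insert (by simp [ha])]
    ring

variable {ι : Type*} [Fintype ι] {μ : ι → ℕ} {x : ℝ → ι → ℂ} {δ : ι → ℂ}

theorem polePoly (hμ : ∀ j, 0 < μ j) (hx : ∀ j, HasDerivAt (fun u => x u j) (δ j) u) :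
    HasCoeffDerivAt (fun u => polePoly μ (x u))
      (-(FixedPointCount.polePoly (fun j => μ j - 1) (x u) * poleNumerator μ (x u) δ)) u := by
  classical
  convert prod (fun j => ((const X).sub (.C (hx j))).pow (μ j)) Finset.univ using 1
  · rfl
  · rw [polePoly_pred_mul_poleNumerator _ hμ, ← Finset.sum_neg_distrib]
    refine Finset.sum_congr rfl fun j _ => ?_
    simp only [C_mul, C_eq_natCast]
    ring

theorem levelTaylor {w : ℝ → ℂ} {ν : ℂ} (hμ : ∀ j, 0 < μ j)
    (hx : ∀ j, HasDerivAt (fun u => x u j) (δ j) u) (hw : HasDerivAt w ν u)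
    (hδ : (poleNumerator μ (x u) δ).eval 0 = 0) :
    HasCoeffDerivAt (fun u => levelTaylor μ 0 (x u) (w u)) (taylor (w u)
      (FixedPointCount.polePoly (fun j => μ j - 1) (x u) *
        poleNumerator μ (x u) fun j => ν - δ j)) u := by
  have hconst := (polePoly hμ hx) 0
  simp only [coeff_zero_eq_eval_zero, eval_neg, eval_mul, hδ, mul_zero, neg_zero] at hconst
  convert (polePoly hμ fun j => (hx j).fun_sub hw).sub (.C hconst) using 1
  · simp [levelTaylor_eq]
  · rw [taylor_mul, taylor_polePoly, taylor_poleNumerator, poleNumerator_sub_const, C_0, sub_zero,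
      mul_neg, neg_neg]

end HasCoeffDerivAt

end HasCoeffDerivAt

namespace LevelFactorization

variable {ι σ : Type*} [Fintype ι] [Fintype σ] {μ : ι → ℕ} {x : ι → ℂ} {L : ℂ[X]} {ω : σ → ℂ}
  {m : σ → ℕ}

theorem pole_ne (h : LevelFactorization μ x L ω m) (hμ : ∀ j, 0 < μ j) (j : ι) (i : σ) :
    x j ≠ ω i := by
  intro hxω
  refine h.eval_zero_ne ?_
  rw [← h.eval_eq i, eval_polePoly]
  exact Finset.prod_eq_zero (Finset.mem_univ j) (by rw [hxω, sub_self, zero_pow (hμ j).ne'])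

theorem exists_poleNumerator_dvd_add (h : LevelFactorization μ x L ω m) (hμ : ∀ j, 0 < μ j)
    (hx : Injective x) (hcard : ∑ i, m i + 1 = Fintype.card ι) (c : σ → ℂ[X]) :
    ∃ δ, (poleNumerator μ x δ).eval 0 = 0 ∧ ∀ i, (X - C (ω i)) ^ m i ∣
      polePoly (fun j => μ j - 1) x * poleNumerator μ x δ + c i := by
  have hcop : ∀ i, IsCoprime (X * polePoly (fun j => μ j - 1) x) ((X - C (ω i)) ^ m i) := by
    refine fun i =>
      (IsCoprime.mul_left ?_ (isCoprime_polePoly_of_ne _ (h.pole_ne hμ · i))).pow_right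
    simpa using isCoprime_X_sub_C_of_isUnit_sub (a := (0 : ℂ)) (b := ω i)
      (by simpa using h.ne_zero i)
  obtain ⟨M, hMdeg, hM⟩ := exists_forall_dvd_mul_sub (fun i => (monic_X_sub_C (ω i)).pow (m i))
    (fun i j hij => (isCoprime_X_sub_C_of_isUnit_sub
      (isUnit_iff_ne_zero.2 (sub_ne_zero.2 (h.injective.ne hij)))).pow) hcop (fun i => -c i)
  simp only [natDegree_pow, natDegree_X_sub_C, mul_one] at hMdeg
  obtain ⟨δ, hδ⟩ := exists_poleNumerator_eq (N := X * M) hμ hx <| by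
    rw [degree_lt_iff_coeff_zero] at hMdeg ⊢
    rintro (_ | k) hk
    · exact coeff_X_mul_zero M
    · rw [coeff_X_mul]
      exact hMdeg k (by omega)
  refine ⟨δ, by rw [hδ, eval_mul, eval_X, zero_mul], fun i => ?_⟩
  rw [hδ]
  convert hM i using 1
  ring

theorem exists_poleNumerator_dvd_sub (h : LevelFactorization μ x L ω m) (hμ : ∀ j, 0 < μ j)
    (hx : Injective x) (hcard : ∑ i, m i + 1 = Fintype.card ι) (c : σ → ℂ[X]) :
    ∃ (δ : ι → ℂ) (ν : σ → ℂ), (poleNumerator μ x δ).eval 0 = 0 ∧ ∀ i, (X - C (ω i)) ^ (m i + 1) ∣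
      polePoly (fun j => μ j - 1) x * poleNumerator μ x (fun j => ν i - δ j) - c i := by
  obtain ⟨δ, hδ0, hδ⟩ := h.exists_poleNumerator_dvd_add hμ hx hcard c
  have hder : ∀ i, ∃ A : ℂ[X], A.eval (ω i) ≠ 0 ∧
      derivative (polePoly μ x) = (X - C (ω i)) ^ m i * A := by
    intro i
    obtain ⟨B, hB0, hB⟩ := h.exists_eq_C_add_pow_mul i
    rw [hB]
    exact exists_derivative_C_add_pow_mul_eq hB0 _ _
  choose B hB using hδ
  choose A hA0 hA using hder
  refine ⟨δ, fun i => (B i).eval (ω i) / (A i).eval (ω i), hδ0, fun i => ?_⟩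
  obtain ⟨S, hS⟩ : X - C (ω i) ∣ C ((B i).eval (ω i) / (A i).eval (ω i)) * A i - B i := by
    rw [dvd_iff_isRoot, IsRoot, eval_sub, eval_mul, eval_C, div_mul_cancel₀ _ (hA0 i), sub_self]
  refine ⟨S, ?_⟩
  rw [poleNumerator_const_sub]
  linear_combination (X - C (ω i)) ^ m i * hS - hB i +
    C ((B i).eval (ω i) / (A i).eval (ω i)) * ((derivative_polePoly x hμ).symm.trans (hA i))

end LevelFactorization

/-! ### Deforming the level set while keeping it flat -/

theorem range_fderiv_fst_prodMk_eq_top {G E F : Type*} [NormedAddCommGroup G] [NormedSpace ℝ G]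
    [NormedAddCommGroup E] [NormedSpace ℝ E] [NormedAddCommGroup F] [NormedSpace ℝ F]
    {Φ : G × E → F} {P : G × E} (hΦ : DifferentiableAt ℝ Φ P)
    (hsurj : ∀ c, ∃ v, fderiv ℝ Φ P (0, v) = c) :
    (fderiv ℝ (fun Q => (Q.1, Φ Q)) P).range = ⊤ := by
  rw [LinearMap.range_eq_top]
  rintro ⟨s, c⟩
  obtain ⟨v, hv⟩ := hsurj (c - fderiv ℝ Φ P (s, 0))
  have hfst : fderiv ℝ (fun Q : G × E => (Q.1, Φ Q)) P =
      (ContinuousLinearMap.fst ℝ G E).prod (fderiv ℝ Φ P) :=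
    (hasFDerivAt_fst.prodMk hΦ.hasFDerivAt).fderiv
  have hsum : fderiv ℝ Φ P (s, v) = c := by
    rw [← add_zero s, ← zero_add v, ← Prod.mk_add_mk, map_add, hv, add_sub_cancel]
  exact ⟨(s, v), by simp [hfst, hsum]⟩

theorem exists_pos_zero_of_forall_exists_hasDerivAt {E F : Type*} [NormedAddCommGroup E]
    [NormedSpace ℝ E] [CompleteSpace E] [NormedAddCommGroup F] [NormedSpace ℝ F]
    [FiniteDimensional ℝ F] {Φ : ℝ × E → F} {e : E} (hΦ : ContDiff ℝ 1 Φ) (hzero : Φ (0, e) = 0)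
    (hsurj : ∀ c, ∃ v, HasDerivAt (fun u : ℝ => Φ (0, e + u • v)) c 0) {S : ℝ × E → Prop}
    (hS : ∀ᶠ P in 𝓝 (0, e), S P) : ∃ P, S P ∧ 0 < P.1 ∧ Φ P = 0 := by
  have : CompleteSpace F := FiniteDimensional.complete ℝ F
  have hstrict := (contDiff_fst.prodMk hΦ).contDiffAt (x := (0, e)) |>.hasStrictFDerivAt one_ne_zero
  have hpartial : ∀ c, ∃ v, fderiv ℝ Φ (0, e) (0, v) = c := by
    intro c
    obtain ⟨v, hv⟩ := hsurj c
    have hline : HasDerivAt (fun u : ℝ => ((0 : ℝ), e + u • v)) (0, v) 0 := by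
      simpa using (hasDerivAt_const (0 : ℝ) (0 : ℝ)).prodMk
        (((hasDerivAt_id (0 : ℝ)).smul_const v).const_add e)
    have hcomp := ((hΦ.differentiable one_ne_zero).differentiableAt.hasFDerivAt).comp_hasDerivAt
      0 hline
    rw [zero_smul, add_zero] at hcomp
    exact ⟨v, hcomp.unique hv⟩
  have hmap := hstrict.map_nhds_eq_of_surj
    (range_fderiv_fst_prodMk_eq_top (hΦ.differentiable one_ne_zero).differentiableAt hpartial)
  rw [hzero] at hmap
  have hlift : ∀ᶠ y in 𝓝 ((0, 0) : ℝ × F), ∃ P, S P ∧ (P.1, Φ P) = y := by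
    rw [← hmap, eventually_map]
    filter_upwards [hS] with P hP using ⟨P, hP, rfl⟩
  have hpos : Tendsto (fun t : ℝ => ((t, 0) : ℝ × F)) (𝓝[>] 0) (𝓝 (0, 0)) :=
    (Continuous.tendsto (by fun_prop) 0).mono_left nhdsWithin_le_nhds
  obtain ⟨t, ⟨P, hP, hPt⟩, ht⟩ := ((hpos.eventually hlift).and self_mem_nhdsWithin).exists
  obtain ⟨rfl, hΦP⟩ := Prod.mk.inj hPt
  exact ⟨P, hP, ht, hΦP⟩

namespace LevelFactorization

variable {ι σ : Type*} [Fintype ι] [Fintype σ] {μ : ι → ℕ} {x : ι → ℂ} {L : ℂ[X]} {ω : σ → ℂ}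
  {m : σ → ℕ}

theorem exists_hasDerivAt_coeff_levelTaylor (h : LevelFactorization μ x L ω m)
    (hμ : ∀ j, 0 < μ j) (hx : Injective x) (hcard : ∑ i, m i + 1 = Fintype.card ι)
    (c : ∀ i, Fin (m i + 1) → ℂ) :
    ∃ (δ : ι → ℂ) (ν : σ → ℂ), ∀ i, ∀ l : Fin (m i + 1), HasDerivAt
      (fun u : ℝ => (levelTaylor μ 0 (x + u • δ) (ω i + u • ν i)).coeff l) (c i l) 0 := by
  let cpoly (i : σ) : ℂ[X] := ∑ l : Fin (m i + 1), C (c i l) * X ^ (l : ℕ)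
  obtain ⟨δ, ν, hδ0, hdvd⟩ := h.exists_poleNumerator_dvd_sub hμ hx hcard
    fun i => taylor (-ω i) (cpoly i)
  refine ⟨δ, ν, fun i l => ?_⟩
  have hline : ∀ a b : ℂ, HasDerivAt (fun u : ℝ => a + u • b) b 0 := fun a b => by
    simpa using ((hasDerivAt_id (0 : ℝ)).smul_const b).const_add a
  have hder := HasCoeffDerivAt.levelTaylor (u := 0) hμ (x := fun u => x + u • δ)
    (fun j => hline (x j) (δ j)) (hline (ω i) (ν i)) (by simpa using hδ0) l
  simp only [zero_smul, add_zero] at hder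
  obtain ⟨S, hS⟩ := hdvd i
  rw [sub_eq_iff_eq_add] at hS
  have htaylor : taylor (ω i) ((X - C (ω i)) ^ (m i + 1)) = X ^ (m i + 1) := by
    rw [taylor_pow, map_sub, taylor_X, taylor_C, add_sub_cancel_right]
  rw [hS, map_add, taylor_mul, htaylor, taylor_taylor, add_neg_cancel, taylor_zero, coeff_add,
    coeff_X_pow_mul', if_neg (by omega), zero_add] at hder
  convert hder using 1
  simp [cpoly, coeff_X_pow, Fin.val_inj]

theorem exists_pos_forall_X_pow_dvd_levelTaylor (h : LevelFactorization μ x L ω m)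
    (hμ : ∀ j, 0 < μ j) (hx : Injective x) (hcard : ∑ i, m i + 1 = Fintype.card ι)
    {S : ℝ × (ι → ℂ) × (σ → ℂ) → Prop} (hS : ∀ᶠ P in 𝓝 (0, x, ω), S P) :
    ∃ P, S P ∧ 0 < P.1 ∧ ∀ i, X ^ (m i + 1) ∣ levelTaylor μ P.1 P.2.1 (P.2.2 i) := by
  let Φ : ℝ × (ι → ℂ) × (σ → ℂ) → ∀ i, Fin (m i + 1) → ℂ :=
    fun P i l => (levelTaylor μ P.1 P.2.1 (P.2.2 i)).coeff l
  have hΦ : ContDiff ℝ 1 Φ := contDiff_pi.2 fun i => contDiff_pi.2 fun l =>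
    coeffContDiff_levelTaylor μ (by fun_prop) (by fun_prop) (by fun_prop) l
  have hΦ_eq_zero : ∀ P, Φ P = 0 ↔ ∀ i, X ^ (m i + 1) ∣ levelTaylor μ P.1 P.2.1 (P.2.2 i) := by
    intro P
    simp only [X_pow_dvd_iff, funext_iff, Fin.forall_iff]
    rfl
  have hsurj : ∀ c, ∃ v, HasDerivAt (fun u : ℝ => Φ (0, (x, ω) + u • v)) c 0 := by
    intro c
    obtain ⟨δ, ν, hder⟩ := h.exists_hasDerivAt_coeff_levelTaylor hμ hx hcard c
    exact ⟨(δ, ν), hasDerivAt_pi.2 fun i => hasDerivAt_pi.2 (hder i)⟩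
  obtain ⟨P, hP, htP, hΦP⟩ := exists_pos_zero_of_forall_exists_hasDerivAt hΦ
    ((hΦ_eq_zero (0, x, ω)).2 h.X_pow_dvd_levelTaylor) hsurj hS
  exact ⟨P, hP, htP, (hΦ_eq_zero P).1 hΦP⟩

end LevelFactorization

/-! ### Rational functions with many nondegenerate fixed points -/

/-- The function `p(z) - conj(z) q(z)`. If `p` and `q` are coprime, then its zeros are the solutions
of `(p / q)(z) = conj z`. -/
noncomputable def fixedPtFun (p q : ℂ[X]) (z : ℂ) : ℂ :=
  p.eval z - (starRingEnd ℂ) z * q.eval z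

theorem contDiff_eval (f : ℂ[X]) : ContDiff ℝ 1 fun z : ℂ => f.eval z := by
  simpa only [coe_aeval_eq_eval] using (f.contDiff_aeval (𝕜 := ℂ) 1).restrict_scalars ℝ

theorem contDiff_fixedPtFun (p q : ℂ[X]) : ContDiff ℝ 1 (fixedPtFun p q) :=
  (contDiff_eval p).sub (Complex.conjCLE.contDiff.mul (contDiff_eval q))

theorem differentiable_fixedPtFun (p q : ℂ[X]) : Differentiable ℝ (fixedPtFun p q) :=
  (contDiff_fixedPtFun p q).differentiable one_ne_zero

theorem eventually_injective {ι Y : Type*} [Finite ι] [TopologicalSpace Y] [T2Space Y] {x : ι → Y}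
    (hx : Injective x) : ∀ᶠ y in 𝓝 x, Injective y := by
  have hne : ∀ᶠ y in 𝓝 x, ∀ i j, i ≠ j → y i ≠ y j :=
    eventually_all.2 fun i => eventually_all.2 fun j => eventually_imp_distrib_left.2 fun hij =>
      ((continuous_apply i).continuousAt.ne_iff_eventually_ne
        (continuous_apply j).continuousAt).1 (hx.ne hij)
  filter_upwards [hne] with y hy i j
  exact not_imp_not.1 (hy i j)

/-- The rational function with poles `x j` of multiplicities `μ j` and numerator `p` has exactly `N`
fixed points in the sense of `r(z) = conj z`, all of them nondegenerate. -/
structure RealizesCount {ι : Type*} [Fintype ι] (μ : ι → ℕ) (x : ι → ℂ) (p : ℂ[X]) (N : ℕ) :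
    Prop where
  injective : Injective x
  natDegree_le : p.natDegree ≤ ∑ j, μ j
  eval_ne_zero : ∀ j, p.eval (x j) ≠ 0
  hasZeroCount : HasZeroCount (fixedPtFun p (polePoly μ x)) Set.univ N

section LevelNumerator

variable {ι : Type*} [Fintype ι] (μ : ι → ℕ) {t : ℝ} (x : ι → ℂ)

/-- The numerator `(q - q(0)) / (t X)` of the rational function whose fixed points are the nonzero
zeros of `levelDeformation μ t x`, where `q = polePoly μ x`. -/
noncomputable def levelNumerator (t : ℝ) : ℂ[X] :=
  C (t : ℂ)⁻¹ * divX (polePoly μ x)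

theorem C_mul_X_mul_levelNumerator (ht : t ≠ 0) :
    C (t : ℂ) * X * levelNumerator μ x t = polePoly μ x - C ((polePoly μ x).eval 0) := by
  have htC : C (t : ℂ) * C (t : ℂ)⁻¹ = 1 := by
    rw [← C_mul, mul_inv_cancel₀ (Complex.ofReal_ne_zero.2 ht), C_1]
  rw [← coeff_zero_eq_eval_zero, levelNumerator]
  linear_combination (X * divX (polePoly μ x)) * htC + X_mul_divX_add (polePoly μ x)

theorem levelDeformation_eq_mul_fixedPtFun (ht : t ≠ 0) (v : ℂ) :
    levelDeformation μ t x v = t * v * fixedPtFun (levelNumerator μ x t) (polePoly μ x) v := by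
  have hnum := congrArg (Polynomial.eval v) (C_mul_X_mul_levelNumerator μ x ht)
  simp only [eval_mul, eval_C, eval_X, eval_sub] at hnum
  rw [levelDeformation, fixedPtFun, ← Complex.mul_conj]
  linear_combination -hnum

theorem natDegree_levelNumerator_le : (levelNumerator μ x t).natDegree ≤ ∑ j, μ j := by
  refine (natDegree_C_mul_le _ _).trans ?_
  rw [natDegree_divX_eq_natDegree_tsub_one, natDegree_polePoly]
  exact Nat.sub_le _ _

variable {μ x}

theorem eval_polePoly_pole {R : Type*} [CommRing R] (x : ι → R) {j : ι} (hμ : 0 < μ j) :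
    (polePoly μ x).eval (x j) = 0 := by
  rw [eval_polePoly]
  exact Finset.prod_eq_zero (Finset.mem_univ j) (by rw [sub_self, zero_pow hμ.ne'])

theorem eval_levelNumerator_pole_ne_zero (ht : t ≠ 0) (h0 : (polePoly μ x).eval 0 ≠ 0) {j : ι}
    (hμ : 0 < μ j) : (levelNumerator μ x t).eval (x j) ≠ 0 := by
  intro hj
  have hnum := congrArg (Polynomial.eval (x j)) (C_mul_X_mul_levelNumerator μ x ht)
  rw [eval_mul, hj, mul_zero, eval_sub, eval_C, eval_polePoly_pole x hμ, zero_sub] at hnum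
  exact h0 (neg_eq_zero.1 hnum.symm)

theorem NondegenerateAt.ne_zero_of_mul {a f : ℂ → ℂ} {z : ℂ}
    (h : NondegenerateAt (fun v => a v * f v) z) (ha0 : a z = 0) (ha : DifferentiableAt ℝ a z)
    (hf : DifferentiableAt ℝ f z) : f z ≠ 0 := by
  intro hf0
  obtain ⟨f', hf', hinj⟩ := h
  have hf'_eq := hf'.unique (ha.hasFDerivAt.mul hf.hasFDerivAt)
  rw [ha0, hf0, zero_smul, zero_smul, add_zero] at hf'_eq
  exact one_ne_zero (hinj (by simp [hf'_eq] : f' 1 = f' 0))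

theorem HasZeroCount.fixedPtFun_levelNumerator {N : ℕ} (ht : t ≠ 0)
    (h : HasZeroCount (levelDeformation μ t x) Set.univ (N + 1)) :
    HasZeroCount (fixedPtFun (levelNumerator μ x t) (polePoly μ x)) Set.univ N := by
  have hfactor := funext (levelDeformation_eq_mul_fixedPtFun μ x ht)
  have hzero : levelDeformation μ t x 0 = 0 := by simp [levelDeformation]
  have hne : fixedPtFun (levelNumerator μ x t) (polePoly μ x) 0 ≠ 0 :=
    (hfactor ▸ h.2 0 trivial hzero).ne_zero_of_mul (mul_zero _) (by fun_prop)
      (differentiable_fixedPtFun _ _ _)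
  have hcompl :
      HasZeroCount (fixedPtFun (levelNumerator μ x t) (polePoly μ x)) (Set.univ \ {0}) N :=
    (h.diff_singleton trivial hzero).transfer (fun v => t * v) id (Set.injOn_id _)
      (fun z hz => hz.1) (fun z hz => ⟨z, hz.1, rfl⟩)
      (fun z hz => mul_ne_zero (Complex.ofReal_ne_zero.2 ht) hz.2) (fun z _ => by fun_prop)
      (fun z _ => differentiableAt_id) (fun z _ => differentiable_fixedPtFun _ _ _)
      (fun z _ => .of_forall fun v => congrFun hfactor v)
  refine hcompl.congr_set fun z hz => iff_of_true ⟨trivial, ?_⟩ trivial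
  rintro rfl
  exact hne hz

theorem rootMultiplicity_levelNumerator_sub (ht : t ≠ 0) {w : ℂ} (hw : w ≠ 0) {k : ℕ}
    (hdvd : X ^ k ∣ levelTaylor μ t x w) (hcoeff : (levelTaylor μ t x w).coeff k ≠ 0) :
    (levelNumerator μ x t - C ((starRingEnd ℂ) w) * polePoly μ x).rootMultiplicity w = k := by
  set T := levelNumerator μ x t - C ((starRingEnd ℂ) w) * polePoly μ x with hT
  have hlevel : levelTaylor μ t x w = taylor w (C (t : ℂ) * X * T) := by
    rw [levelTaylor, hT, C_mul]
    congr 1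
    linear_combination -C_mul_X_mul_levelNumerator μ x ht
  have hne : levelTaylor μ t x w ≠ 0 := fun h => hcoeff (by rw [h, coeff_zero])
  have hprod : C (t : ℂ) * X * T ≠ 0 := fun h => hne (by rw [hlevel, h, map_zero])
  have hunit : (C (t : ℂ) * X).rootMultiplicity w = 0 :=
    rootMultiplicity_eq_zero (by simp [ht, hw])
  have htrailing : (levelTaylor μ t x w).natTrailingDegree = k :=
    le_antisymm (natTrailingDegree_le_of_ne_zero hcoeff)
      (le_natTrailingDegree hne (X_pow_dvd_iff.1 hdvd))
  rw [← htrailing, ← rootMultiplicity_eq_natTrailingDegree', hlevel, taylor_apply,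
    ← rootMultiplicity_eq_rootMultiplicity, rootMultiplicity_mul hprod, hunit, zero_add]

end LevelNumerator

theorem LevelFactorization.exists_realizesCount {ι σ : Type*} [Fintype ι] [Fintype σ] {μ : ι → ℕ}
    {x : ι → ℂ} {L : ℂ[X]} {ω : σ → ℂ} {m : σ → ℕ} (h : LevelFactorization μ x L ω m)
    (hμ : ∀ j, 0 < μ j) (hx : Injective x) (hcard : ∑ i, m i + 1 = Fintype.card ι) {N : ℕ}
    (hN : 2 * ∑ j, μ j + ∑ i, (m i + 3) + L.natDegree = N + 1) :
    ∃ x' p, RealizesCount μ x' p N ∧ ∀ i, ∃ w,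
      (p - C ((starRingEnd ℂ) w) * polePoly μ x').rootMultiplicity w = m i + 1 := by
  have hι : Nonempty ι := Fintype.card_pos_iff.1 (by omega)
  have hsum : ∑ j, μ j ≠ 0 :=
    (Finset.sum_pos (fun j _ => hμ j) Finset.univ_nonempty).ne'
  have hinj : ∀ᶠ P : ℝ × (ι → ℂ) × (σ → ℂ) in 𝓝 (0, x, ω), Injective P.2.1 :=
    (continuous_fst.comp continuous_snd).continuousAt.eventually (eventually_injective hx)
  have hlevel : ∀ᶠ P : ℝ × (ι → ℂ) × (σ → ℂ) in 𝓝 (0, x, ω), (polePoly μ P.2.1).eval 0 ≠ 0 :=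
    ((contDiff_eval_polePoly μ).continuous.comp (by fun_prop : Continuous
      fun P : ℝ × (ι → ℂ) × (σ → ℂ) => (P.2.1, (0 : ℂ)))).continuousAt.eventually_ne h.eval_zero_ne
  have hω : ∀ᶠ P : ℝ × (ι → ℂ) × (σ → ℂ) in 𝓝 (0, x, ω), ∀ i, P.2.2 i ≠ 0 :=
    eventually_all.2 fun i => (by fun_prop : Continuous
      fun P : ℝ × (ι → ℂ) × (σ → ℂ) => P.2.2 i).continuousAt.eventually_ne (h.ne_zero i)
  have hcoeff : ∀ᶠ P : ℝ × (ι → ℂ) × (σ → ℂ) in 𝓝 (0, x, ω),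
      ∀ i, (levelTaylor μ P.1 P.2.1 (P.2.2 i)).coeff (m i + 1) ≠ 0 :=
    eventually_all.2 fun i => (coeffContDiff_levelTaylor μ (by fun_prop) (by fun_prop)
      (by fun_prop) (m i + 1)).continuous.continuousAt.eventually_ne (h.coeff_levelTaylor_ne_zero i)
  obtain ⟨⟨t, x', ω'⟩, ⟨hcount, hx', h0, hω', hcoeff'⟩, ht, hdvd⟩ :=
    h.exists_pos_forall_X_pow_dvd_levelTaylor hμ hx hcard
      ((h.eventually_hasZeroCount_univ hsum).and (hinj.and (hlevel.and (hω.and hcoeff))))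
  have hcount' := hcount ht hdvd
  rw [hN] at hcount'
  exact ⟨x', levelNumerator μ x' t, ⟨hx', natDegree_levelNumerator_le μ x',
    fun j => eval_levelNumerator_pole_ne_zero ht.ne' h0 (hμ j),
    hcount'.fixedPtFun_levelNumerator ht.ne'⟩,
    fun i => ⟨ω' i, rootMultiplicity_levelNumerator_sub ht.ne' (hω' i) (hdvd i) (hcoeff' i)⟩⟩

/-! ### Underdetermined polynomial systems -/

section PolynomialSystem

variable {s K : Type*} [Field K]

theorem height_vanishingIdeal_singleton_eq (a b : s → K) :
    (MvPolynomial.vanishingIdeal K {a}).height = (MvPolynomial.vanishingIdeal K {b}).height := by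
  let e : MvPolynomial s K ≃ₐ[K] MvPolynomial s K := AlgEquiv.ofAlgHom
    (MvPolynomial.aeval fun i => MvPolynomial.X i + MvPolynomial.C (b i - a i))
    (MvPolynomial.aeval fun i => MvPolynomial.X i - MvPolynomial.C (b i - a i))
    (by ext i; simp) (by ext i; simp)
  have heval : (MvPolynomial.aeval a).comp (e : MvPolynomial s K →ₐ[K] MvPolynomial s K) =
      MvPolynomial.aeval b := by
    ext i
    simp [e]
  have hcomap : (MvPolynomial.vanishingIdeal K {a}).comap (e : MvPolynomial s K ≃+* _) =
      MvPolynomial.vanishingIdeal K {b} := by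
    ext p
    rw [Ideal.mem_comap, MvPolynomial.mem_vanishingIdeal_singleton_iff,
      MvPolynomial.mem_vanishingIdeal_singleton_iff, ← heval]
    rfl
  rw [← hcomap, RingEquiv.height_comap]

variable [IsAlgClosed K]

theorem card_le_height_vanishingIdeal_singleton [Fintype s] (a : s → K) :
    (Fintype.card s : ℕ∞) ≤ (MvPolynomial.vanishingIdeal K {a}).height := by
  have hdim : ringKrullDim (MvPolynomial s K) ≤
      (MvPolynomial.vanishingIdeal K {a}).height := by
    rw [ringKrullDim_le_iff_isMaximal_height_le]
    intro M hM
    obtain ⟨b, rfl⟩ := MvPolynomial.isMaximal_iff_eq_vanishingIdeal_singleton.1 hM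
    exact WithBot.coe_le_coe.2 (height_vanishingIdeal_singleton_eq b a).le
  rw [MvPolynomial.ringKrullDim_of_isNoetherianRing, ringKrullDim_eq_zero_of_field, zero_add,
    Nat.card_eq_fintype_card] at hdim
  exact_mod_cast hdim

theorem mem_minimalPrimes_span_of_unique_zero [Finite s] {f : Set (MvPolynomial s K)} {a : s → K}
    (ha : ∀ b, (∀ p ∈ f, MvPolynomial.eval b p = 0) ↔ b = a) :
    MvPolynomial.vanishingIdeal K {a} ∈ (Ideal.span f).minimalPrimes := by
  have hlocus : MvPolynomial.zeroLocus K (Ideal.span f) = {a} := by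
    rw [MvPolynomial.zeroLocus_span]
    ext b
    simpa [MvPolynomial.aeval_eq_eval] using ha b
  have hradical : (Ideal.span f).radical = MvPolynomial.vanishingIdeal K {a} := by
    rw [← MvPolynomial.vanishingIdeal_zeroLocus_eq_radical (K := K), hlocus]
  have hmax : (MvPolynomial.vanishingIdeal K {a}).IsMaximal :=
    MvPolynomial.isMaximal_iff_eq_vanishingIdeal_singleton.2 ⟨a, rfl⟩
  rw [← hradical] at hmax ⊢
  exact ⟨⟨hmax.isPrime, Ideal.le_radical⟩, fun P hP _ => hP.1.radical_le_iff.2 hP.2⟩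

theorem exists_ne_forall_eval_eq_zero [Fintype s] {τ : Type*} [Fintype τ]
    {f : τ → MvPolynomial s K} {a : s → K} (ha : ∀ i, MvPolynomial.eval a (f i) = 0)
    (hcard : Fintype.card τ < Fintype.card s) :
    ∃ b, b ≠ a ∧ ∀ i, MvPolynomial.eval b (f i) = 0 := by
  by_contra! hunique
  have hmin : MvPolynomial.vanishingIdeal K {a} ∈ (Ideal.span (Set.range f)).minimalPrimes := by
    refine mem_minimalPrimes_span_of_unique_zero fun b => ?_
    rw [Set.forall_mem_range]
    refine ⟨fun hb => by_contra fun hba => ?_, fun hb => hb ▸ ha⟩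
    obtain ⟨i, hi⟩ := hunique b hba
    exact hi (hb i)
  have hheight := (card_le_height_vanishingIdeal_singleton a).trans
    (Ideal.height_le_card_of_mem_minimalPrimes_span (Set.finite_range f) hmin)
  have hrange := Set.ncard_image_le (f := f) Set.finite_univ
  rw [Set.image_univ, Set.ncard_univ, Nat.card_eq_fintype_card] at hrange
  exact absurd (Nat.cast_le.1 hheight) (by omega)

end PolynomialSystem

/-! ### Critical points of the denominator -/

section CriticalPoly

variable {ι : Type*} [Fintype ι]

theorem map_polePoly {A B : Type*} [CommRing A] [CommRing B] (φ : A →+* B) (μ : ι → ℕ)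
    (x : ι → A) : (polePoly μ x).map φ = polePoly μ fun j => φ (x j) := by
  simp [polePoly, Polynomial.map_prod]

theorem polePoly_zero {A : Type*} [CommRing A] (μ : ι → ℕ) :
    polePoly μ (fun _ => (0 : A)) = X ^ ∑ j, μ j := by
  simp [polePoly, Finset.prod_pow_eq_pow_sum]

variable {A : Type*} [CommRing A] [Algebra ℚ A] (μ : ι → ℕ)

/-- The monic polynomial of degree `n - 1` whose roots are the critical points of
`q = polePoly μ x` besides the multiple poles, `n` being the number of poles; see
`derivative_polePoly_eq_criticalPoly_mul`. -/
noncomputable def criticalPoly (x : ι → A) : A[X] :=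
  poleNumerator μ x fun _ => algebraMap ℚ A (∑ j, μ j : ℕ)⁻¹

theorem map_criticalPoly {B : Type*} [CommRing B] [Algebra ℚ B] (φ : A →+* B) (x : ι → A) :
    (criticalPoly μ x).map φ = criticalPoly μ fun j => φ (x j) := by
  simp only [criticalPoly, poleNumerator, Lagrange.nodal, Polynomial.map_sum, Polynomial.map_prod,
    Polynomial.map_mul, Polynomial.map_sub, map_X, map_C, map_mul φ, map_natCast φ,
    RingHom.map_rat_algebraMap φ]

variable {μ}

theorem C_mul_criticalPoly (hμ : ∑ j, μ j ≠ 0) (x : ι → A) :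
    C ((∑ j, μ j : ℕ) : A) * criticalPoly μ x = poleNumerator μ x fun _ => 1 := by
  have hinv : ((∑ j, μ j : ℕ) : A) * algebraMap ℚ A (∑ j, μ j : ℕ)⁻¹ = 1 := by
    rw [← map_natCast (algebraMap ℚ A), ← map_mul, mul_inv_cancel₀ (Nat.cast_ne_zero.2 hμ), map_one]
  rw [criticalPoly, poleNumerator, poleNumerator, Finset.mul_sum]
  refine Finset.sum_congr rfl fun j _ => ?_
  rw [← mul_assoc, ← C_mul, mul_left_comm, hinv]

theorem derivative_polePoly_eq_criticalPoly_mul (hμ : ∀ j, 0 < μ j) (hsum : ∑ j, μ j ≠ 0)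
    (x : ι → A) : derivative (polePoly μ x) =
      C ((∑ j, μ j : ℕ) : A) * criticalPoly μ x * polePoly (fun j => μ j - 1) x := by
  rw [derivative_polePoly x hμ, C_mul_criticalPoly hsum, mul_comm]

theorem sum_mul_algebraMap_inv (hμ : ∑ j, μ j ≠ 0) :
    ∑ j, (μ j : A) * algebraMap ℚ A (∑ j, μ j : ℕ)⁻¹ = 1 := by
  rw [← Finset.sum_mul, ← Nat.cast_sum, ← map_natCast (algebraMap ℚ A), ← map_mul,
    mul_inv_cancel₀ (Nat.cast_ne_zero.2 hμ), map_one]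

theorem criticalPoly_zero (hμ : ∑ j, μ j ≠ 0) :
    criticalPoly μ (fun _ => (0 : A)) = X ^ (Fintype.card ι - 1) := by
  simp only [criticalPoly, poleNumerator, Lagrange.nodal, C_0, sub_zero, Finset.prod_const,
    Finset.card_erase_of_mem (Finset.mem_univ _), Finset.card_univ]
  rw [← Finset.sum_mul, ← map_sum, sum_mul_algebraMap_inv hμ, C_1, one_mul]

theorem natDegree_criticalPoly_le (x : ι → A) :
    (criticalPoly μ x).natDegree ≤ Fintype.card ι - 1 := by
  classical
  nontriviality A
  refine natDegree_sum_le_of_forall_le _ _ fun j _ => (natDegree_C_mul_le _ _).trans ?_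
  rw [Lagrange.natDegree_nodal, Finset.card_erase_of_mem (Finset.mem_univ _), Finset.card_univ]

theorem coeff_criticalPoly (hμ : ∑ j, μ j ≠ 0) (x : ι → A) :
    (criticalPoly μ x).coeff (Fintype.card ι - 1) = 1 := by
  classical
  nontriviality A
  rw [criticalPoly, poleNumerator, finsetSum_coeff, ← sum_mul_algebraMap_inv hμ]
  refine Finset.sum_congr rfl fun j _ => ?_
  have hcard : Fintype.card ι - 1 = (Finset.univ.erase j).card := by
    rw [Finset.card_erase_of_mem (Finset.mem_univ _), Finset.card_univ]
  rw [coeff_C_mul, hcard, ← Lagrange.natDegree_nodal (v := x), coeff_natDegree,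
    (Lagrange.nodal_monic ..).leadingCoeff, mul_one]

theorem monic_criticalPoly (hμ : ∑ j, μ j ≠ 0) (x : ι → A) : (criticalPoly μ x).Monic :=
  monic_of_natDegree_le_of_coeff_eq_one _ (natDegree_criticalPoly_le x) (coeff_criticalPoly hμ x)

theorem natDegree_criticalPoly [Nontrivial A] (hμ : ∑ j, μ j ≠ 0) (x : ι → A) :
    (criticalPoly μ x).natDegree = Fintype.card ι - 1 :=
  natDegree_eq_of_le_of_coeff_ne_zero (natDegree_criticalPoly_le x)
    (by rw [coeff_criticalPoly hμ]; exact one_ne_zero)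

theorem eval_criticalPoly_of_eq (x : ι → A) {i j : ι} (hij : i ≠ j) (h : x i = x j) :
    (criticalPoly μ x).eval (x i) = 0 := by
  rw [criticalPoly, poleNumerator, eval_finsetSum]
  refine Finset.sum_eq_zero fun k _ => ?_
  rw [eval_C_mul]
  rcases eq_or_ne k i with rfl | hki
  · rw [h, Lagrange.eval_nodal_at_node (by simpa using hij.symm), mul_zero]
  · rw [Lagrange.eval_nodal_at_node (by simpa using hki.symm), mul_zero]

end CriticalPoly

section CriticalLevel

variable {ι : Type*} [Fintype ι] {μ : ι → ℕ} {x : ι → ℂ} {κ : ℂ}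

theorem eval_polePoly_pred_ne_zero (hμ : ∀ j, 0 < μ j) {a : ℂ} (ha : (polePoly μ x).eval a ≠ 0) :
    (polePoly (fun j => μ j - 1) x).eval a ≠ 0 := by
  rw [eval_polePoly, Finset.prod_ne_zero_iff] at ha ⊢
  exact fun j hj => pow_ne_zero _ (ne_zero_pow (hμ j).ne' (ha j hj))

theorem card_toFinset_roots_eq_one_of_derivative {K : Type*} [Field K] [CharZero K]
    [IsAlgClosed K] [DecidableEq K] {f : K[X]} (hf : f.natDegree ≠ 0)
    (hroot : ∀ a, (derivative f).IsRoot a → f.IsRoot a) : f.roots.toFinset.card = 1 := by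
  have hf0 : f ≠ 0 := by rintro rfl; exact hf natDegree_zero
  have hsubset : ∀ a ∈ (derivative f).roots, a ∈ f.roots.toFinset := fun a ha => by
    rw [Multiset.mem_toFinset, mem_roots hf0]
    exact hroot a (isRoot_of_mem_roots ha)
  have hcount : ∀ a ∈ f.roots.toFinset, f.roots.count a = (derivative f).roots.count a + 1 := by
    intro a ha
    have hmem := Multiset.mem_toFinset.1 ha
    rw [count_roots, count_roots, derivative_rootMultiplicity_of_root (isRoot_of_mem_roots hmem),
      Nat.sub_add_cancel ((rootMultiplicity_pos hf0).2 (isRoot_of_mem_roots hmem))]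
  have hcard := Multiset.toFinset_sum_count_eq f.roots
  rw [Finset.sum_congr rfl hcount, Finset.sum_add_distrib, Multiset.sum_count_eq_card hsubset,
    IsAlgClosed.card_roots_eq_natDegree, IsAlgClosed.card_roots_eq_natDegree,
    natDegree_derivative, Finset.sum_const, smul_eq_mul, mul_one] at hcard
  omega

theorem ne_zero_of_forall_eval_eq (hμ : ∀ j, 0 < μ j)
    (hcrit : ∀ a, (criticalPoly μ x).IsRoot a → (polePoly μ x).eval a = κ) {i j : ι}
    (hij : x i ≠ x j) : κ ≠ 0 := by
  classical
  rintro rfl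
  have hsum : ∑ j, μ j ≠ 0 := (Finset.sum_pos (fun j _ => hμ j) ⟨i, Finset.mem_univ i⟩).ne'
  have hroot : ∀ a, (derivative (polePoly μ x)).IsRoot a → (polePoly μ x).IsRoot a := by
    intro a ha
    rw [derivative_polePoly_eq_criticalPoly_mul hμ hsum, IsRoot, eval_mul, eval_mul, eval_C,
      mul_eq_zero, mul_eq_zero, or_iff_right (Nat.cast_ne_zero.2 hsum)] at ha
    exact ha.elim (hcrit a) fun hpred => not_imp_not.1 (eval_polePoly_pred_ne_zero hμ) hpred
  have hcard := card_toFinset_roots_eq_one_of_derivative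
    ((natDegree_polePoly μ x).trans_ne hsum) hroot
  have hmem (k : ι) : x k ∈ (polePoly μ x).roots.toFinset := by
    rw [Multiset.mem_toFinset, mem_roots (monic_polePoly μ x).ne_zero]
    exact eval_polePoly_pole x (hμ k)
  exact hij (Finset.card_le_one.1 hcard.le _ (hmem i) _ (hmem j))

theorem injective_of_forall_eval_eq (hμ : ∀ j, 0 < μ j) (hκ : κ ≠ 0)
    (hcrit : ∀ a, (criticalPoly μ x).IsRoot a → (polePoly μ x).eval a = κ) : Injective x := by
  intro i j h
  by_contra hij
  have heval := hcrit _ (eval_criticalPoly_of_eq x hij h)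
  rw [eval_polePoly_pole x (hμ i)] at heval
  exact hκ heval.symm

theorem rootMultiplicity_polePoly_sub_C (hμ : ∀ j, 0 < μ j) (hsum : ∑ j, μ j ≠ 0) (hκ : κ ≠ 0)
    {a : ℂ} (ha : (polePoly μ x).eval a = κ) :
    (polePoly μ x - C κ).rootMultiplicity a = (criticalPoly μ x).rootMultiplicity a + 1 := by
  have hroot : (polePoly μ x - C κ).IsRoot a := by simp [ha]
  have hne : polePoly μ x - C κ ≠ 0 := ne_zero_of_natDegree_gt
    (n := 0) (by rw [natDegree_sub_C, natDegree_polePoly]; exact hsum.bot_lt)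
  have hC : C ((∑ j, μ j : ℕ) : ℂ) ≠ 0 := C_ne_zero.2 (Nat.cast_ne_zero.2 hsum)
  have hcrit := (monic_criticalPoly hsum x).ne_zero
  have hpred := (monic_polePoly (fun j => μ j - 1) x).ne_zero
  have hderiv := derivative_rootMultiplicity_of_root hroot
  rw [derivative_sub, derivative_C, sub_zero, derivative_polePoly_eq_criticalPoly_mul hμ hsum,
    rootMultiplicity_mul (mul_ne_zero (mul_ne_zero hC hcrit) hpred),
    rootMultiplicity_mul (mul_ne_zero hC hcrit), rootMultiplicity_C, zero_add,
    rootMultiplicity_eq_zero (eval_polePoly_pred_ne_zero hμ (ha.trans_ne hκ)), add_zero] at hderiv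
  have hpos := (rootMultiplicity_pos hne).2 hroot
  omega

theorem exists_polePoly_sub_C_eq (hμ : ∀ j, 0 < μ j) (hsum : ∑ j, μ j ≠ 0) (hκ : κ ≠ 0)
    (hcrit : ∀ a, (criticalPoly μ x).IsRoot a → (polePoly μ x).eval a = κ) :
    ∃ T : Finset ℂ, Disjoint T (criticalPoly μ x).roots.toFinset ∧
      polePoly μ x - C κ = (∏ a ∈ T, (X - C a)) * ∏ a ∈ (criticalPoly μ x).roots.toFinset,
        (X - C a) ^ ((criticalPoly μ x).rootMultiplicity a + 1) := by
  have hdeg : degree (C κ) < degree (polePoly μ x) := by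
    rw [degree_eq_natDegree (monic_polePoly μ x).ne_zero, natDegree_polePoly, degree_C hκ]
    exact_mod_cast hsum.bot_lt
  have hmonic : (polePoly μ x - C κ).Monic := (monic_polePoly μ x).sub_of_left hdeg
  have heval {a : ℂ} : a ∈ (polePoly μ x - C κ).roots.toFinset ↔ (polePoly μ x).eval a = κ := by
    rw [Multiset.mem_toFinset, mem_roots hmonic.ne_zero, IsRoot, eval_sub, eval_C, sub_eq_zero]
  have hmem {a : ℂ} : a ∈ (criticalPoly μ x).roots.toFinset ↔ (criticalPoly μ x).IsRoot a := by
    rw [Multiset.mem_toFinset, mem_roots (monic_criticalPoly hsum x).ne_zero]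
  have hsubset : (criticalPoly μ x).roots.toFinset ⊆ (polePoly μ x - C κ).roots.toFinset :=
    fun a ha => heval.2 (hcrit a (hmem.1 ha))
  have hsplit := (IsAlgClosed.splits (polePoly μ x - C κ)).eq_prod_roots_of_monic hmonic
  rw [prod_multiset_root_eq_finset_root, ← Finset.prod_sdiff hsubset] at hsplit
  refine ⟨(polePoly μ x - C κ).roots.toFinset \ (criticalPoly μ x).roots.toFinset,
    Finset.sdiff_disjoint, hsplit.trans (congrArg₂ _ ?_ ?_)⟩
  · refine Finset.prod_congr rfl fun a ha => ?_
    obtain ⟨hroot, hnot⟩ := Finset.mem_sdiff.1 ha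
    rw [rootMultiplicity_polePoly_sub_C hμ hsum hκ (heval.1 hroot),
      rootMultiplicity_eq_zero fun h => hnot (hmem.2 h), zero_add, pow_one]
  · refine Finset.prod_congr rfl fun a ha => ?_
    rw [rootMultiplicity_polePoly_sub_C hμ hsum hκ (hcrit a (hmem.1 ha))]

theorem levelFactorization_sub {S T : Finset ℂ} {m : ℂ → ℕ} (hκ : κ ≠ 0)
    (hTS : Disjoint T S) (hm : ∀ a ∈ S, m a ≠ 0)
    (hfactor : polePoly μ x - C κ = (∏ a ∈ T, (X - C a)) * ∏ a ∈ S, (X - C a) ^ (m a + 1))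
    {l : ℂ} (hl : l ∈ T) :
    LevelFactorization μ (fun j => x j - l) (∏ a ∈ T, (X - C (a - l))) (fun a : S => (a : ℂ) - l)
      fun a => m a := by
  have hlevel : (polePoly μ fun j => x j - l).eval 0 = κ := by
    have hzero := congrArg (Polynomial.eval l) hfactor
    rw [eval_mul, eval_prod, Finset.prod_eq_zero hl (by simp), zero_mul, eval_sub, eval_C,
      sub_eq_zero] at hzero
    rw [← taylor_polePoly, taylor_eval, zero_add, hzero]
  refine ⟨hlevel.trans_ne hκ, ?_, ?_, fun a => ?_, ?_, fun a => ?_, fun a => hm a a.2⟩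
  · have htaylor (a : ℂ) : taylor l (X - C a) = X - C (a - l) := by
      rw [map_sub, taylor_X, taylor_C, C_sub]; ring
    have hshift := congrArg (taylorAlgHom l) hfactor
    simp only [map_mul, map_prod, map_pow, taylorAlgHom_apply, htaylor,
      map_sub (taylor l) (polePoly μ x), taylor_polePoly, taylor_C] at hshift
    rw [hlevel, hshift, ← Finset.prod_coe_sort S]
  · exact separable_prod_X_sub_C_iff'.2 fun a _ b _ h => sub_left_injective h
  · rw [eval_prod, Finset.prod_ne_zero_iff]
    intro b hb
    rw [eval_sub, eval_X, eval_C, sub_sub_sub_cancel_right, sub_ne_zero]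
    exact (hTS.forall_ne_finset hb a.2).symm
  · exact sub_left_injective.comp Subtype.val_injective
  · exact sub_ne_zero.2 (hTS.forall_ne_finset hl a.2).symm

theorem sum_rootMultiplicity_criticalPoly (hsum : ∑ j, μ j ≠ 0) :
    ∑ a ∈ (criticalPoly μ x).roots.toFinset, (criticalPoly μ x).rootMultiplicity a =
      Fintype.card ι - 1 := by
  simp only [← count_roots]
  rw [Multiset.toFinset_sum_count_eq, IsAlgClosed.card_roots_eq_natDegree,
    natDegree_criticalPoly hsum]

theorem card_add_sum_eq_of_polePoly_sub_C_eq {S T : Finset ℂ} {m : ℂ → ℕ}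
    (hfactor : polePoly μ x - C κ = (∏ a ∈ T, (X - C a)) * ∏ a ∈ S, (X - C a) ^ (m a + 1)) :
    T.card + ∑ a ∈ S, (m a + 1) = ∑ j, μ j := by
  have hmonic : ∀ a ∈ S, ((X - C a) ^ (m a + 1)).Monic := fun a _ => (monic_X_sub_C a).pow _
  have hdeg := congrArg natDegree hfactor
  rw [natDegree_sub_C, natDegree_polePoly, (monic_prod_of_monic _ _ fun a _ =>
    monic_X_sub_C a).natDegree_mul (monic_prod_of_monic _ _ hmonic),
    natDegree_prod_of_monic _ _ hmonic, natDegree_prod_of_monic _ _ fun a _ => monic_X_sub_C a]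
    at hdeg
  simpa using hdeg.symm

theorem exists_realizesCount_of_criticalPoly [Nonempty ι] (hμ : ∀ j, 0 < μ j) (hκ : κ ≠ 0)
    (hcrit : ∀ a, (criticalPoly μ x).IsRoot a → (polePoly μ x).eval a = κ)
    (hlt : Fintype.card ι - 1 + (criticalPoly μ x).roots.toFinset.card < ∑ j, μ j) {N : ℕ}
    (hN : 3 * ∑ j, μ j + 2 * (criticalPoly μ x).roots.toFinset.card = N + 1) :
    ∃ x' p, RealizesCount μ x' p N ∧ ∀ a, (criticalPoly μ x).IsRoot a → ∃ w,
      (p - C ((starRingEnd ℂ) w) * polePoly μ x').rootMultiplicity w =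
        (criticalPoly μ x).rootMultiplicity a + 1 := by
  have hsum : ∑ j, μ j ≠ 0 := by omega
  have hne := (monic_criticalPoly hsum x).ne_zero
  obtain ⟨T, hTS, hfactor⟩ := exists_polePoly_sub_C_eq hμ hsum hκ hcrit
  have hcard := sum_rootMultiplicity_criticalPoly (x := x) hsum
  set S := (criticalPoly μ x).roots.toFinset
  have hm : ∀ a ∈ S, (criticalPoly μ x).rootMultiplicity a ≠ 0 := fun a ha =>
    ((rootMultiplicity_pos hne).2 (isRoot_of_mem_roots (Multiset.mem_toFinset.1 ha))).ne'
  have hT := card_add_sum_eq_of_polePoly_sub_C_eq hfactor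
  rw [Finset.sum_add_distrib, hcard, Finset.sum_const, smul_eq_mul, mul_one] at hT
  obtain ⟨l, hl⟩ := Finset.card_pos.1 (show 0 < T.card by omega)
  have hinj : Injective fun j => x j - l :=
    sub_left_injective.comp (injective_of_forall_eval_eq hμ hκ hcrit)
  have hmult : ∑ a : S, (criticalPoly μ x).rootMultiplicity (a : ℂ) + 1 = Fintype.card ι := by
    rw [Finset.sum_coe_sort S fun a => (criticalPoly μ x).rootMultiplicity a, hcard]
    exact Nat.sub_add_cancel Fintype.card_pos
  have hcount : 2 * ∑ j, μ j + ∑ a : S, ((criticalPoly μ x).rootMultiplicity (a : ℂ) + 3) +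
      (∏ a ∈ T, (X - C (a - l))).natDegree = N + 1 := by
    rw [Finset.sum_coe_sort S fun a => (criticalPoly μ x).rootMultiplicity a + 3,
      Finset.sum_add_distrib, hcard, Finset.sum_const, smul_eq_mul,
      natDegree_prod_of_monic _ _ fun a _ => monic_X_sub_C _]
    simp only [natDegree_X_sub_C, Finset.sum_const, smul_eq_mul, mul_one]
    omega
  obtain ⟨x', p, hp, hflat⟩ :=
    (levelFactorization_sub hκ hTS hm hfactor hl).exists_realizesCount hμ hinj hmult hcount
  exact ⟨x', p, hp, fun a ha => hflat ⟨a, Multiset.mem_toFinset.2 ((mem_roots hne).2 ha)⟩⟩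

end CriticalLevel

/-! ### Poles with a common critical value -/

section CommonCriticalValue

theorem dvd_derivative_modByMonic_sq {A : Type*} [CommRing A] {Q R : A[X]}
    (hQ : R ∣ derivative Q) : R ∣ derivative (Q %ₘ R ^ 2) := by
  have hderiv : derivative (Q %ₘ R ^ 2) = derivative Q -
      R * (2 * derivative R * (Q /ₘ R ^ 2) + R * derivative (Q /ₘ R ^ 2)) := by
    have hdiv := congrArg derivative (modByMonic_add_div Q (R ^ 2))
    rw [derivative_add, derivative_mul, derivative_sq, C_ofNat] at hdiv
    linear_combination hdiv
  rw [hderiv]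
  exact dvd_sub hQ (dvd_mul_right _ _)

theorem derivative_modByMonic_sq_eq_zero {K : Type*} [Field K] [CharZero K] {Q R : K[X]}
    (hR : R.Monic) (hR0 : R.natDegree ≠ 0) (hQ : R ∣ derivative Q)
    (hcoeff : ∀ l < R.natDegree - 1, (derivative (Q %ₘ R ^ 2) /ₘ R).coeff l = 0) :
    derivative (Q %ₘ R ^ 2) = 0 := by
  by_contra hne
  have hquot : R * (derivative (Q %ₘ R ^ 2) /ₘ R) = derivative (Q %ₘ R ^ 2) := by
    have hdiv := modByMonic_add_div (derivative (Q %ₘ R ^ 2)) R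
    rwa [(modByMonic_eq_zero_iff_dvd hR).2 (dvd_derivative_modByMonic_sq hQ), zero_add] at hdiv
  have hquot0 : derivative (Q %ₘ R ^ 2) /ₘ R ≠ 0 := fun h => hne (by rw [← hquot, h, mul_zero])
  have hdeg := congrArg natDegree hquot
  rw [hR.natDegree_mul' hquot0, natDegree_derivative] at hdeg
  have hrem := natDegree_modByMonic_lt Q (hR.pow 2) fun h => hR0 (by
    simpa using congrArg natDegree h)
  rw [natDegree_pow] at hrem
  exact hquot0 (leadingCoeff_eq_zero.1 (hcoeff _ (by omega)))

variable {ι : Type*} [Fintype ι] {μ : ι → ℕ}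

theorem exists_derivative_modByMonic_eq_zero (hμ : ∀ j, 0 < μ j) (hcard : 2 ≤ Fintype.card ι)
    (hsum : 2 * Fintype.card ι ≤ ∑ j, μ j + 1) :
    ∃ x : ι → ℂ, (∃ i j, x i ≠ x j) ∧
      derivative (polePoly μ x %ₘ criticalPoly μ x ^ 2) = 0 := by
  have hsum0 : ∑ j, μ j ≠ 0 := by omega
  obtain ⟨j₀⟩ : Nonempty ι := Fintype.card_pos_iff.1 (by omega)
  let G : (MvPolynomial ι ℂ)[X] :=
    derivative (polePoly μ MvPolynomial.X %ₘ criticalPoly μ MvPolynomial.X ^ 2) /ₘ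
      criticalPoly μ MvPolynomial.X
  have hG (x : ι → ℂ) : G.map (MvPolynomial.eval x) =
      derivative (polePoly μ x %ₘ criticalPoly μ x ^ 2) /ₘ criticalPoly μ x := by
    have hmonic := monic_criticalPoly hsum0 (MvPolynomial.X : ι → MvPolynomial ι ℂ)
    rw [map_divByMonic _ hmonic, ← derivative_map, map_modByMonic _ (hmonic.pow 2),
      Polynomial.map_pow, map_polePoly, map_criticalPoly]
    simp only [MvPolynomial.eval_X]
  let system : Option (Fin (Fintype.card ι - 2)) → MvPolynomial ι ℂ :=
    fun o => o.elim (MvPolynomial.X j₀) fun l => G.coeff l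
  have hzero : ∀ o, MvPolynomial.eval (fun _ => 0) (system o) = 0 := by
    rintro (_ | l)
    · exact MvPolynomial.eval_X j₀
    · change MvPolynomial.eval (fun _ => 0) (G.coeff l) = 0
      rw [← coeff_map, hG, criticalPoly_zero hsum0, polePoly_zero, ← pow_mul,
        (modByMonic_eq_zero_iff_dvd (monic_X_pow _)).2 (pow_dvd_pow _ (by omega)),
        derivative_zero, zero_divByMonic, coeff_zero]
  obtain ⟨x, hx, hsystem⟩ := exists_ne_forall_eval_eq_zero hzero
    (by rw [Fintype.card_option, Fintype.card_fin]; omega)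
  have hxj : x j₀ = 0 := (MvPolynomial.eval_X j₀).symm.trans (hsystem none)
  obtain ⟨i, hi⟩ := Function.ne_iff.1 hx
  refine ⟨x, ⟨i, j₀, by rwa [hxj]⟩, derivative_modByMonic_sq_eq_zero (monic_criticalPoly hsum0 x)
    (by rw [natDegree_criticalPoly hsum0]; omega)
    (by rw [derivative_polePoly_eq_criticalPoly_mul hμ hsum0]
        exact dvd_mul_of_dvd_left (dvd_mul_left _ _) _) fun l hl => ?_⟩
  rw [natDegree_criticalPoly hsum0] at hl
  rw [← hG, coeff_map]
  exact hsystem (some ⟨l, by omega⟩)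

theorem exists_polePoly_eq_C_add_sq_mul (hμ : ∀ j, 0 < μ j) (hcard : 2 ≤ Fintype.card ι)
    (hsum : 2 * Fintype.card ι ≤ ∑ j, μ j + 1) :
    ∃ (x : ι → ℂ) (κ : ℂ) (V : ℂ[X]), (∃ i j, x i ≠ x j) ∧
      polePoly μ x = C κ + criticalPoly μ x ^ 2 * V := by
  obtain ⟨x, hx, hderiv⟩ := exists_derivative_modByMonic_eq_zero hμ hcard hsum
  obtain ⟨κ, hκ⟩ := natDegree_eq_zero.1 (derivative_eq_zero.1 hderiv)
  exact ⟨x, κ, _, hx, by rw [hκ]; exact (modByMonic_add_div _ _).symm⟩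

theorem card_roots_criticalPoly_of_sq_dvd {x : ι → ℂ} {κ : ℂ} {V : ℂ[X]} (hμ : ∀ j, 0 < μ j)
    (hsum : ∑ j, μ j ≠ 0) (hκ : κ ≠ 0) (hV : polePoly μ x = C κ + criticalPoly μ x ^ 2 * V) :
    (criticalPoly μ x).roots.toFinset.card = Fintype.card ι - 1 := by
  have hne := (monic_criticalPoly hsum x).ne_zero
  rw [← sum_rootMultiplicity_criticalPoly (x := x) hsum, Finset.card_eq_sum_ones]
  refine Finset.sum_congr rfl fun a ha => ?_
  have hroot := isRoot_of_mem_roots (Multiset.mem_toFinset.1 ha)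
  have heval : (polePoly μ x).eval a = κ := by
    rw [hV, eval_add, eval_C, eval_mul, eval_pow, hroot.eq_zero]
    ring
  have hsub : polePoly μ x - C κ = criticalPoly μ x ^ 2 * V := by rw [hV]; ring
  have hne' : polePoly μ x - C κ ≠ 0 := fun h =>
    hsum (by rw [← natDegree_polePoly μ x, ← natDegree_sub_C (a := κ), h, natDegree_zero])
  have hmult := rootMultiplicity_polePoly_sub_C hμ hsum hκ heval
  rw [hsub, sq, mul_assoc] at hne' hmult
  rw [rootMultiplicity_mul hne', rootMultiplicity_mul (right_ne_zero_of_mul hne')] at hmult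
  have hpos := (rootMultiplicity_pos hne).2 hroot
  omega

theorem exists_realizesCount_of_two_mul_card_le (hμ : ∀ j, 0 < μ j) [Nonempty ι]
    (hsum : 2 * Fintype.card ι ≤ ∑ j, μ j + 1) :
    ∃ x p, RealizesCount μ x p (3 * ∑ j, μ j + 2 * Fintype.card ι - 3) := by
  have hι : 0 < Fintype.card ι := Fintype.card_pos
  have hsum0 : ∑ j, μ j ≠ 0 := by omega
  obtain ⟨x, κ, hκ, hcrit, hroots⟩ : ∃ (x : ι → ℂ) (κ : ℂ), κ ≠ 0 ∧
      (∀ a, (criticalPoly μ x).IsRoot a → (polePoly μ x).eval a = κ) ∧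
      (criticalPoly μ x).roots.toFinset.card = Fintype.card ι - 1 := by
    rcases Nat.lt_or_ge 1 (Fintype.card ι) with hcard | hcard
    · obtain ⟨x, κ, V, ⟨i, j, hij⟩, hV⟩ := exists_polePoly_eq_C_add_sq_mul hμ hcard hsum
      have hcrit : ∀ a, (criticalPoly μ x).IsRoot a → (polePoly μ x).eval a = κ := fun a ha => by
        rw [hV, eval_add, eval_C, eval_mul, eval_pow, ha.eq_zero]
        ring
      have hκ := ne_zero_of_forall_eval_eq hμ hcrit hij
      exact ⟨x, κ, hκ, hcrit, card_roots_criticalPoly_of_sq_dvd hμ hsum0 hκ hV⟩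
    · have hone : criticalPoly μ (fun _ => (0 : ℂ)) = 1 := by
        rw [criticalPoly_zero hsum0, Nat.sub_eq_zero_of_le hcard, pow_zero]
      refine ⟨fun _ => 0, 1, one_ne_zero, fun a ha => ?_, ?_⟩
      · simp [hone] at ha
      · rw [hone, roots_one, Multiset.empty_eq_zero, Multiset.toFinset_zero, Finset.card_empty,
          Nat.sub_eq_zero_of_le hcard]
  obtain ⟨x', p, hp, -⟩ := exists_realizesCount_of_criticalPoly
    (N := 3 * ∑ j, μ j + 2 * Fintype.card ι - 3) hμ hκ hcrit (by omega) (by omega)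
  exact ⟨x', p, hp⟩

theorem exists_criticalPoly_eq_X_pow (hsum : ∑ j, μ j ≠ 0) [Nonempty ι] :
    ∃ x : ι → ℂ, (∃ j, x j ≠ 0) ∧ criticalPoly μ x = X ^ (Fintype.card ι - 1) := by
  have hmap (x : ι → ℂ) (l : ℕ) : MvPolynomial.eval x ((criticalPoly μ MvPolynomial.X).coeff l) =
      (criticalPoly μ x).coeff l := by
    rw [← coeff_map, map_criticalPoly]
    simp only [MvPolynomial.eval_X]
  have hzero : ∀ l : Fin (Fintype.card ι - 1), MvPolynomial.eval (fun _ => (0 : ℂ))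
      ((criticalPoly μ MvPolynomial.X).coeff l) = 0 := fun l => by
    rw [hmap, criticalPoly_zero hsum, coeff_X_pow, if_neg l.2.ne]
  obtain ⟨x, hx, hsystem⟩ := exists_ne_forall_eval_eq_zero hzero
    (by rw [Fintype.card_fin]; exact Nat.sub_lt Fintype.card_pos one_pos)
  refine ⟨x, Function.ne_iff.1 hx, ?_⟩
  ext l
  rw [coeff_X_pow]
  rcases lt_trichotomy l (Fintype.card ι - 1) with hl | rfl | hl
  · rw [if_neg hl.ne, ← hmap]
    exact hsystem ⟨l, hl⟩
  · rw [if_pos rfl, coeff_criticalPoly hsum]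
  · rw [if_neg hl.ne', coeff_eq_zero_of_natDegree_lt ((natDegree_criticalPoly hsum x).trans_lt hl)]

theorem exists_realizesCount_of_card_lt (hμ : ∀ j, 0 < μ j) (hcard : 2 ≤ Fintype.card ι)
    (hsum : Fintype.card ι < ∑ j, μ j) :
    ∃ x p w, RealizesCount μ x p (3 * ∑ j, μ j + 1) ∧
      (p - C ((starRingEnd ℂ) w) * polePoly μ x).rootMultiplicity w = Fintype.card ι := by
  have hι : Nonempty ι := Fintype.card_pos_iff.1 (by omega)
  have hsum0 : ∑ j, μ j ≠ 0 := by omega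
  obtain ⟨x, ⟨j, hj⟩, hcritical⟩ := exists_criticalPoly_eq_X_pow (μ := μ) hsum0
  have hisRoot {a : ℂ} : (criticalPoly μ x).IsRoot a ↔ a = 0 := by
    rw [hcritical, IsRoot, eval_pow, eval_X, pow_eq_zero_iff (by omega)]
  have hcrit : ∀ a, (criticalPoly μ x).IsRoot a →
      (polePoly μ x).eval a = (polePoly μ x).eval 0 := fun a ha => by rw [hisRoot.1 ha]
  have hκ : (polePoly μ x).eval 0 ≠ 0 := by
    obtain ⟨i, hij⟩ := Fintype.exists_ne_of_one_lt_card hcard j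
    refine ne_zero_of_forall_eval_eq hμ hcrit (i := i) (j := j) fun h => hj ?_
    rw [← h, hisRoot.1 (eval_criticalPoly_of_eq x hij h)]
  have hroots : (criticalPoly μ x).roots.toFinset = {0} := by
    ext a
    rw [Multiset.mem_toFinset, mem_roots (monic_criticalPoly hsum0 x).ne_zero, hisRoot,
      Finset.mem_singleton]
  obtain ⟨x', p, hp, hflat⟩ := exists_realizesCount_of_criticalPoly (N := 3 * ∑ j, μ j + 1)
    hμ hκ hcrit (by rw [hroots, Finset.card_singleton]; omega)
    (by rw [hroots, Finset.card_singleton])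
  obtain ⟨w, hw⟩ := hflat 0 (hisRoot.2 rfl)
  refine ⟨x', p, w, hp, hw.trans ?_⟩
  rw [hcritical, ← sub_zero (X : ℂ[X]), ← C_0, rootMultiplicity_X_sub_C_pow]
  omega

end CommonCriticalValue

/-! ### Zeros stay in a bounded region -/

theorem exists_forall_norm_eval_le {p : ℂ[X]} {D : ℕ} (hp : p.natDegree ≤ D) :
    ∃ B : ℝ, 0 ≤ B ∧ ∀ z : ℂ, 1 ≤ ‖z‖ → ‖p.eval z‖ ≤ B * ‖z‖ ^ D := by
  refine ⟨∑ i ∈ Finset.range (D + 1), ‖p.coeff i‖, by positivity, fun z hz => ?_⟩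
  rw [eval_eq_sum_range' (Nat.lt_succ_of_le hp), Finset.sum_mul]
  refine (norm_sum_le _ _).trans (Finset.sum_le_sum fun i hi => ?_)
  rw [norm_mul, norm_pow]
  gcongr
  exact Nat.lt_succ_iff.1 (Finset.mem_range.1 hi)

section Bounded

variable {ι : Type*} [Fintype ι] {μ : ι → ℕ} {x : ι → ℂ} {p : ℂ[X]} {N : ℕ}

theorem exists_forall_two_mul_norm_le_norm_fixedPtFun (hp : p.natDegree ≤ ∑ j, μ j) (r : ℝ) :
    ∃ R : ℝ, ∀ x : ι → ℂ, (∀ j, ‖x j‖ ≤ r) → ∀ z : ℂ, R ≤ ‖z‖ →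
      0 < ‖(polePoly μ x).eval z‖ ∧
      2 * ‖(polePoly μ x).eval z‖ ≤ ‖fixedPtFun p (polePoly μ x) z‖ := by
  obtain ⟨B, hB, hpB⟩ := exists_forall_norm_eval_le hp
  set D := ∑ j, μ j
  refine ⟨max (max 1 (2 * r)) (B * 2 ^ D + 2), fun x hx z hz => ?_⟩
  obtain ⟨hz₁, hzB⟩ := max_le_iff.1 hz
  obtain ⟨hz₁, hzr⟩ := max_le_iff.1 hz₁
  have hlower : (‖z‖ / 2) ^ D ≤ ‖(polePoly μ x).eval z‖ :=
    (pow_le_pow_left₀ (by positivity) (by linarith) D).trans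
      (pow_le_norm_eval_polePoly μ hx (by linarith))
  have hpos : 0 < ‖(polePoly μ x).eval z‖ := (by positivity : 0 < (‖z‖ / 2) ^ D).trans_le hlower
  have hpq : ‖p.eval z‖ ≤ B * 2 ^ D * ‖(polePoly μ x).eval z‖ :=
    calc ‖p.eval z‖ ≤ B * ‖z‖ ^ D := hpB z hz₁
      _ = B * 2 ^ D * (‖z‖ / 2) ^ D := by rw [mul_assoc, ← mul_pow, mul_div_cancel₀ _ two_ne_zero]
      _ ≤ _ := by gcongr
  have hsub := norm_sub_norm_le ((starRingEnd ℂ) z * (polePoly μ x).eval z) (p.eval z)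
  rw [norm_sub_rev, norm_mul, RCLike.norm_conj] at hsub
  refine ⟨hpos, le_trans ?_ hsub⟩
  linarith [mul_le_mul_of_nonneg_right hzB hpos.le]

theorem HasZeroCount.eventually_fixedPtFun_polePoly (hp : p.natDegree ≤ ∑ j, μ j)
    (h : HasZeroCount (fixedPtFun p (polePoly μ x)) Set.univ N) :
    ∀ᶠ y in 𝓝 x, HasZeroCount (fixedPtFun p (polePoly μ y)) Set.univ N := by
  obtain ⟨R, hR⟩ := exists_forall_two_mul_norm_le_norm_fixedPtFun hp (∑ j, ‖x j‖ + 1)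
  have hfar : ∀ᶠ y in 𝓝 x, ∀ z, fixedPtFun p (polePoly μ y) z = 0 → ‖z‖ < R := by
    filter_upwards [eventually_norm_le_sum_add_one x] with y hy z hz
    by_contra! hRz
    obtain ⟨hpos, hle⟩ := hR y hy z hRz
    rw [hz, norm_zero] at hle
    linarith
  have hcont : ContDiff ℝ 1 fun u : (ι → ℂ) × ℂ => fixedPtFun p (polePoly μ u.1) u.2 :=
    ((contDiff_eval p).comp contDiff_snd).sub
      ((Complex.conjCLE.contDiff.comp contDiff_snd).mul (contDiff_eval_polePoly μ))
  have hball : HasZeroCount (fixedPtFun p (polePoly μ x)) (Metric.closedBall 0 R) N :=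
    h.congr_set fun z hz =>
      iff_of_true trivial (mem_closedBall_zero_iff.2 (hfar.self_of_nhds z hz).le)
  filter_upwards [hfar, HasZeroCount.eventually_nhds (isCompact_closedBall 0 R)
    (fun z _ => hcont.continuous.continuousAt) (fun z _ hz => ⟨hcont.contDiffAt,
      Metric.ball_subset_interior_closedBall
        (mem_ball_zero_iff.2 (hfar.self_of_nhds z hz))⟩) hball] with y hy hcount
  exact hcount.1.congr_set fun z hz =>
    iff_of_true (mem_closedBall_zero_iff.2 (hy z hz).le) trivial

end Bounded

/-! ### Inserting a simple pole at a flat fixed point -/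

section Insertion

variable {p q H : ℂ[X]} {z₀ : ℂ} {k : ℕ}

/-- The fixed point function, with denominators cleared, of `p / q + ε / (z - z₀)`. -/
noncomputable def insertPole (p q : ℂ[X]) (z₀ : ℂ) (ε : ℝ) (z : ℂ) : ℂ :=
  (z - z₀) * fixedPtFun p q z + ε * q.eval z

theorem fixedPtFun_insertPole (p q : ℂ[X]) (z₀ : ℂ) (ε : ℝ) :
    fixedPtFun ((X - C z₀) * p + C (ε : ℂ) * q) ((X - C z₀) * q) = insertPole p q z₀ ε := by
  funext z
  simp only [fixedPtFun, insertPole, eval_add, eval_mul, eval_sub, eval_X, eval_C]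
  ring

theorem contDiff_insertPole (p q : ℂ[X]) (z₀ : ℂ) :
    ContDiff ℝ 1 fun u : ℝ × ℂ => insertPole p q z₀ u.1 u.2 :=
  ((contDiff_snd.sub contDiff_const).mul ((contDiff_fixedPtFun p q).comp contDiff_snd)).add
    ((Complex.ofRealCLM.contDiff.comp contDiff_fst).mul ((contDiff_eval q).comp contDiff_snd))

theorem differentiable_insertPole (p q : ℂ[X]) (z₀ : ℂ) (ε : ℝ) :
    Differentiable ℝ (insertPole p q z₀ ε) := fun z =>
  ((contDiff_insertPole p q z₀).differentiable one_ne_zero (ε, z)).comp z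
    (hasFDerivAt_prodMk_right ε z).differentiableAt

theorem insertPole_zero (p q : ℂ[X]) (z₀ z : ℂ) :
    insertPole p q z₀ 0 z = (z - z₀) * fixedPtFun p q z := by
  simp [insertPole]

theorem insertPole_ne_zero_of_far {ε : ℝ} {z : ℂ} (hε : |ε| ≤ 1) (hz : 1 ≤ ‖z - z₀‖)
    (hq : 0 < ‖q.eval z‖) (hfar : 2 * ‖q.eval z‖ ≤ ‖fixedPtFun p q z‖) :
    insertPole p q z₀ ε z ≠ 0 := by
  intro h0
  have hnorm := congrArg norm (eq_neg_of_add_eq_zero_left h0)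
  rw [norm_neg, norm_mul, norm_mul, Complex.norm_real, Real.norm_eq_abs] at hnorm
  nlinarith [norm_nonneg (fixedPtFun p q z)]

theorem insertPole_eq (hfac : p - C ((starRingEnd ℂ) z₀) * q = (X - C z₀) ^ k * H) (ε : ℝ) (z : ℂ) :
    insertPole p q z₀ ε z = (z - z₀) ^ (k + 1) * H.eval z -
      ((Complex.normSq (z - z₀) - ε : ℝ) : ℂ) * q.eval z := by
  have heval := congrArg (Polynomial.eval z) hfac
  simp only [eval_sub, eval_mul, eval_C, eval_pow, eval_X] at heval
  rw [insertPole, fixedPtFun, Complex.ofReal_sub, ← Complex.mul_conj, map_sub]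
  linear_combination (z - z₀) * heval

theorem abs_normSq_sub_le_of_insertPole_eq_zero
    (hfac : p - C ((starRingEnd ℂ) z₀) * q = (X - C z₀) ^ k * H) (hk : 1 ≤ k) {ε : ℝ} {z : ℂ}
    (hz : 4 * (‖z - z₀‖ ^ (k - 1) * ‖H.eval z‖) < ‖q.eval z‖) (h0 : insertPole p q z₀ ε z = 0) :
    |Complex.normSq (z - z₀) - ε| ≤ Complex.normSq (z - z₀) / 4 := by
  rw [insertPole_eq hfac, sub_eq_zero] at h0
  have hnorm := congrArg norm h0
  rw [norm_mul, norm_mul, norm_pow, Complex.norm_real, Real.norm_eq_abs,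
    show k + 1 = 2 + (k - 1) by omega, pow_add, ← Complex.normSq_eq_norm_sq] at hnorm
  have hpos : 0 < ‖q.eval z‖ := lt_of_le_of_lt (by positivity) hz
  refine le_of_mul_le_mul_right ?_ hpos
  nlinarith [Complex.normSq_nonneg (z - z₀)]

theorem exists_ball_abs_normSq_sub_le
    (hfac : p - C ((starRingEnd ℂ) z₀) * q = (X - C z₀) ^ k * H) (hk : 2 ≤ k)
    (hq : q.eval z₀ ≠ 0) :
    ∃ ρ > 0, ∀ z, ‖z - z₀‖ ≤ ρ → ∀ ε : ℝ, insertPole p q z₀ ε z = 0 →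
      |Complex.normSq (z - z₀) - ε| ≤ Complex.normSq (z - z₀) / 4 := by
  have hnear : ∀ᶠ z in 𝓝 z₀, 4 * (‖z - z₀‖ ^ (k - 1) * ‖H.eval z‖) < ‖q.eval z‖ := by
    refine ContinuousAt.eventually_lt (by have := H.continuous; fun_prop)
      q.continuous.norm.continuousAt ?_
    simpa [show k - 1 ≠ 0 by omega] using hq
  obtain ⟨ρ, hρ, hball⟩ := Metric.nhds_basis_closedBall.eventually_iff.1 hnear
  exact ⟨ρ, hρ, fun z hz ε => abs_normSq_sub_le_of_insertPole_eq_zero hfac (by omega)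
    (hball (mem_closedBall_iff_norm.2 hz))⟩

theorem contDiff_const_add_ofReal_mul (z₀ : ℂ) : ContDiff ℝ 1 fun u : ℝ × ℂ => z₀ + u.1 * u.2 :=
  contDiff_const.add ((Complex.ofRealCLM.contDiff.comp contDiff_fst).mul contDiff_snd)

theorem eventually_hasZeroCount_rescaled (hk : 2 ≤ k) (hH : H.eval z₀ ≠ 0) (hq : q.eval z₀ ≠ 0) :
    ∀ᶠ σ : ℝ in 𝓝 0, 0 < σ ^ (k - 1) → HasZeroCount (fun ζ => (Complex.normSq ζ : ℂ) - 1 -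
      (σ ^ (k - 1) : ℝ) * (H.eval (z₀ + σ * ζ) * ζ ^ (k + 1) * (q.eval (z₀ + σ * ζ))⁻¹))
      unitAnnulus (2 * (k + 1)) := by
  have haffine := contDiff_const_add_ofReal_mul z₀
  refine eventually_hasZeroCount_unitAnnulus (b := H.eval z₀ * (q.eval z₀)⁻¹)
    (A := fun u : ℝ × ℂ => H.eval (z₀ + u.1 * u.2) * u.2 ^ (k + 1) * (q.eval (z₀ + u.1 * u.2))⁻¹)
    (contDiff_id.pow _).contDiffAt (zero_pow (by omega)) k.succ_ne_zero
    (mul_ne_zero hH (inv_ne_zero hq)) (fun ζ _ => ?_) (fun ζ _ => ?_)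
  · exact (((contDiff_eval H).comp haffine).mul (contDiff_snd.pow _)).contDiffAt.mul
      (((contDiff_eval q).comp haffine).contDiffAt.inv (by simpa using hq))
  · simp only [Complex.ofReal_zero, zero_mul, add_zero, mul_right_comm]

theorem eventually_hasZeroCount_insertPole_annulus
    (hfac : p - C ((starRingEnd ℂ) z₀) * q = (X - C z₀) ^ k * H) (hk : 2 ≤ k)
    (hH : H.eval z₀ ≠ 0) (hq : q.eval z₀ ≠ 0) :
    ∀ᶠ σ : ℝ in 𝓝[>] 0, HasZeroCount (insertPole p q z₀ (σ ^ 2))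
      ((fun ζ => z₀ + σ * ζ) '' unitAnnulus) (2 * (k + 1)) := by
  have hqne : ∀ᶠ σ : ℝ in 𝓝 0, ∀ ζ ∈ unitAnnulus, q.eval (z₀ + σ * ζ) ≠ 0 :=
    isCompact_unitAnnulus.eventually_forall_of_forall_eventually fun ζ _ =>
      (q.continuous.comp (contDiff_const_add_ofReal_mul z₀).continuous).continuousAt.eventually_ne
        (by simpa using hq)
  filter_upwards [nhdsWithin_le_nhds (eventually_hasZeroCount_rescaled hk hH hq),
    nhdsWithin_le_nhds hqne, self_mem_nhdsWithin] with σ hcount hqne (hσ : 0 < σ)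
  have hσ' : (σ : ℂ) ≠ 0 := Complex.ofReal_ne_zero.2 hσ.ne'
  have hdiff : Differentiable ℝ fun ζ : ℂ => z₀ + σ * ζ := by fun_prop
  have hqdiff : Differentiable ℝ fun ζ : ℂ => q.eval (z₀ + σ * ζ) :=
    ((contDiff_eval q).differentiable one_ne_zero).comp hdiff
  refine (hcount (pow_pos hσ _)).transfer (fun ζ => -((σ : ℂ) ^ 2)⁻¹ * (q.eval (z₀ + σ * ζ))⁻¹)
    (fun ζ => z₀ + σ * ζ) (fun z _ w _ h => mul_left_cancel₀ hσ' (add_left_cancel h))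
    (fun ζ hζ => Set.mem_image_of_mem _ hζ.1) (fun w hw => hw.1)
    (fun ζ hζ => mul_ne_zero (neg_ne_zero.2 (inv_ne_zero (pow_ne_zero _ hσ')))
      (inv_ne_zero (hqne ζ hζ)))
    (fun ζ hζ => ((hqdiff ζ).fun_inv (hqne ζ hζ)).const_mul _) (fun ζ _ => hdiff ζ)
    (fun ζ _ => differentiable_insertPole p q z₀ _ _) (fun ζ hζ => ?_)
  filter_upwards [hqdiff.continuous.continuousAt.eventually_ne (hqne ζ hζ)] with w hw
  rw [insertPole_eq hfac, add_sub_cancel_left, Complex.normSq_mul, Complex.normSq_ofReal, mul_pow,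
    show k + 1 = 2 + (k - 1) by omega]
  push_cast
  field_simp
  ring

theorem HasZeroCount.eventually_insertPole {ρ R : ℝ} {M : ℕ} (hρ : 0 < ρ)
    (h : HasZeroCount (fixedPtFun p q) Set.univ (M + 1)) (h₀ : fixedPtFun p q z₀ = 0)
    (hnear : ∀ z, ‖z - z₀‖ ≤ ρ → insertPole p q z₀ 0 z = 0 → z = z₀)
    (hfar : ∀ z, insertPole p q z₀ 0 z = 0 → ‖z‖ < R) :
    ∀ᶠ ε in 𝓝 0,
      HasZeroCount (insertPole p q z₀ ε) (Metric.closedBall 0 R \ Metric.ball z₀ ρ) M := by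
  have hball : ∀ z, insertPole p q z₀ 0 z = 0 → z ≠ z₀ →
      z ∈ Metric.ball 0 R \ Metric.closedBall z₀ ρ :=
    fun z hz hne => ⟨mem_ball_zero_iff.2 (hfar z hz),
      fun hmem => hne (hnear z (mem_closedBall_iff_norm.1 hmem) hz)⟩
  have hsub : Metric.ball 0 R \ Metric.closedBall z₀ ρ ⊆
      Metric.closedBall 0 R \ Metric.ball z₀ ρ :=
    Set.sdiff_subset_sdiff Metric.ball_subset_closedBall Metric.ball_subset_closedBall
  have hne {z : ℂ} (hz : z ∈ Metric.closedBall 0 R \ Metric.ball z₀ ρ) : z ≠ z₀ := by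
    rintro rfl
    exact hz.2 (Metric.mem_ball_self hρ)
  have hpunctured : HasZeroCount (insertPole p q z₀ 0) (Set.univ \ {z₀}) M :=
    (h.diff_singleton trivial h₀).transfer (fun z => (z - z₀)⁻¹) id (Set.injOn_id _)
      (fun z hz => hz.1) (fun z hz => ⟨z, hz.1, rfl⟩)
      (fun z hz => inv_ne_zero (sub_ne_zero.2 hz.2))
      (fun z hz => (differentiableAt_id.sub_const z₀).fun_inv (sub_ne_zero.2 hz.2))
      (fun z _ => differentiableAt_id) (fun z _ => differentiable_insertPole p q z₀ 0 z)
      (fun z hz => (eventually_ne_nhds hz.2).mono fun w hw => by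
        simp only [id, insertPole_zero, inv_mul_cancel_left₀ (sub_ne_zero.2 hw)])
  have hbase : HasZeroCount (insertPole p q z₀ 0) (Metric.closedBall 0 R \ Metric.ball z₀ ρ) M :=
    hpunctured.congr_set fun z hz =>
      ⟨fun hmem => hsub (hball z hz hmem.2), fun hmem => ⟨trivial, hne hmem⟩⟩
  have hcont := contDiff_insertPole p q z₀
  refine (HasZeroCount.eventually_nhds ((isCompact_closedBall 0 R).diff Metric.isOpen_ball)
    (fun z _ => hcont.continuous.continuousAt) (fun z hmem hz => ⟨hcont.contDiffAt, ?_⟩)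
    hbase).mono fun ε hε => hε.1
  exact interior_maximal hsub (Metric.isOpen_ball.sdiff Metric.isClosed_closedBall)
    (hball z hz (hne hmem))

theorem mem_image_unitAnnulus {σ : ℝ} (hσ : 0 < σ) {z : ℂ}
    (h : |Complex.normSq (z - z₀) - σ ^ 2| ≤ Complex.normSq (z - z₀) / 4) :
    z ∈ (fun ζ => z₀ + σ * ζ) '' unitAnnulus := by
  have hσ' : (σ : ℂ) ≠ 0 := Complex.ofReal_ne_zero.2 hσ.ne'
  obtain ⟨hlo, hhi⟩ := abs_le.1 h
  refine ⟨(z - z₀) / σ, ?_, by field_simp; ring⟩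
  rw [unitAnnulus, Set.mem_ofPred_eq, Complex.normSq_div, Complex.normSq_ofReal,
    le_div_iff₀ (by positivity), div_le_iff₀ (by positivity)]
  constructor <;> nlinarith

theorem image_unitAnnulus_subset_ball {σ ρ : ℝ} (hσ : 0 < σ) (hσρ : 2 * σ < ρ) (z₀ : ℂ) :
    (fun ζ => z₀ + σ * ζ) '' unitAnnulus ⊆ Metric.ball z₀ ρ := by
  rintro _ ⟨ζ, hζ, rfl⟩
  rw [mem_ball_iff_norm, add_sub_cancel_left, norm_mul, Complex.norm_of_nonneg hσ.le]
  nlinarith [norm_lt_two_of_mem_unitAnnulus hζ]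

theorem HasZeroCount.exists_insertPole {R : ℝ} {M : ℕ}
    (h : HasZeroCount (fixedPtFun p q) Set.univ (M + 1))
    (hfac : p - C ((starRingEnd ℂ) z₀) * q = (X - C z₀) ^ k * H) (hk : 2 ≤ k)
    (hH : H.eval z₀ ≠ 0) (hq : q.eval z₀ ≠ 0)
    (hfar : ∀ ε : ℝ, |ε| ≤ 1 → ∀ z, insertPole p q z₀ ε z = 0 → ‖z‖ < R) :
    ∃ ε : ℝ, ε ≠ 0 ∧ HasZeroCount (insertPole p q z₀ ε) Set.univ (2 * (k + 1) + M) := by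
  obtain ⟨ρ, hρ, hloc⟩ := exists_ball_abs_normSq_sub_le hfac hk hq
  have hfix : fixedPtFun p q z₀ = 0 := by
    have heval := congrArg (Polynomial.eval z₀) hfac
    simpa [fixedPtFun, show k ≠ 0 by omega] using heval
  have hnear : ∀ z, ‖z - z₀‖ ≤ ρ → insertPole p q z₀ 0 z = 0 → z = z₀ := fun z hz h0 => by
    have hle := (le_abs_self _).trans (hloc z hz 0 h0)
    exact sub_eq_zero.1 (Complex.normSq_eq_zero.1
      (le_antisymm (by linarith) (Complex.normSq_nonneg _)))
  have hsq : Tendsto (fun σ : ℝ => σ ^ 2) (𝓝[>] 0) (𝓝 0) := by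
    simpa using ((continuous_pow 2).tendsto (0 : ℝ)).mono_left nhdsWithin_le_nhds
  have hsmall : ∀ᶠ σ : ℝ in 𝓝[>] 0, σ < 1 ∧ σ < ρ / 2 :=
    nhdsWithin_le_nhds ((gt_mem_nhds one_pos).and (gt_mem_nhds (by positivity)))
  obtain ⟨σ, hcircle, hrest, ⟨hσ₁, hσρ⟩, (hσ : 0 < σ)⟩ :=
    ((eventually_hasZeroCount_insertPole_annulus hfac hk hH hq).and
      ((hsq.eventually (h.eventually_insertPole hρ hfix hnear (hfar 0 (by simp)))).and
        (hsmall.and self_mem_nhdsWithin))).exists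
  refine ⟨σ ^ 2, by positivity, (hcircle.union hrest ?_).congr_set fun z hz => ?_⟩
  · exact Set.disjoint_sdiff_right.mono_left
      (image_unitAnnulus_subset_ball hσ (by linarith) z₀)
  · refine iff_of_true ?_ trivial
    by_cases hzρ : ‖z - z₀‖ ≤ ρ
    · exact Or.inl (mem_image_unitAnnulus hσ (hloc z hzρ _ hz))
    · have hR := hfar (σ ^ 2) (by rw [abs_of_pos (by positivity)]; nlinarith) z hz
      exact Or.inr ⟨mem_closedBall_zero_iff.2 hR.le,
        fun hmem => hzρ (mem_ball_iff_norm.1 hmem).le⟩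

end Insertion

/-! ### Inserting and splitting poles -/

section Combination

variable {ι κ : Type*} [Fintype ι] [Fintype κ] {μ : ι → ℕ} {ν : Option ι → ℕ} {x : ι → ℂ} {p : ℂ[X]}
  {M N k : ℕ}

theorem polePoly_comp_equiv (μ : ι → ℕ) (x : ι → ℂ) (e : κ ≃ ι) :
    polePoly (μ ∘ e) (x ∘ e) = polePoly μ x :=
  e.prod_comp fun j => (X - C (x j)) ^ μ j

theorem polePoly_option (ν : Option ι → ℕ) (x : Option ι → ℂ) :
    polePoly ν x = (X - C (x none)) ^ ν none * polePoly (ν ∘ some) (x ∘ some) :=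
  Fintype.prod_option _

theorem RealizesCount.of_comp_equiv {x : κ → ℂ} (e : κ ≃ ι) (h : RealizesCount (μ ∘ e) x p N) :
    RealizesCount μ (x ∘ e.symm) p N where
  injective := h.injective.comp e.symm.injective
  natDegree_le := h.natDegree_le.trans_eq (e.sum_comp μ)
  eval_ne_zero j := h.eval_ne_zero (e.symm j)
  hasZeroCount := by
    rw [← polePoly_comp_equiv μ _ e, comp_assoc, e.symm_comp_self, comp_id]
    exact h.hasZeroCount

theorem RealizesCount.eval_polePoly_ne_zero (h : RealizesCount μ x p N) {w : ℂ}
    (hw : fixedPtFun p (polePoly μ x) w = 0) : (polePoly μ x).eval w ≠ 0 := by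
  intro hq
  rw [fixedPtFun, hq, mul_zero, sub_zero] at hw
  rw [eval_polePoly] at hq
  obtain ⟨j, -, hj⟩ := Finset.prod_eq_zero_iff.1 hq
  exact h.eval_ne_zero j (by rwa [← sub_eq_zero.1 (eq_zero_of_pow_eq_zero hj)])

theorem RealizesCount.exists_hasZeroCount_insertPole {w : ℂ} (h : RealizesCount μ x p (M + 1))
    (hk : 2 ≤ k) (hw : (p - C ((starRingEnd ℂ) w) * polePoly μ x).rootMultiplicity w = k)
    (hq : (polePoly μ x).eval w ≠ 0) :
    ∃ ε : ℝ, ε ≠ 0 ∧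
      HasZeroCount (insertPole p (polePoly μ x) w ε) Set.univ (2 * (k + 1) + M) := by
  have hne : p - C ((starRingEnd ℂ) w) * polePoly μ x ≠ 0 := fun h0 => by
    rw [h0, rootMultiplicity_zero] at hw
    omega
  obtain ⟨H, hfac, hH⟩ := exists_eq_pow_rootMultiplicity_mul_and_not_dvd _ hne w
  rw [hw] at hfac
  obtain ⟨R, hR⟩ := exists_forall_two_mul_norm_le_norm_fixedPtFun h.natDegree_le (∑ j, ‖x j‖ + 1)
  refine h.hasZeroCount.exists_insertPole (R := max R (‖w‖ + 1)) hfac hk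
    (fun h0 => hH (dvd_iff_isRoot.2 h0)) hq fun ε hε z hz => ?_
  by_contra! hzR
  obtain ⟨hpos, hle⟩ := hR x (eventually_norm_le_sum_add_one x).self_of_nhds z
    (le_of_max_le_left hzR)
  exact insertPole_ne_zero_of_far hε
    (by linarith [norm_sub_norm_le z w, le_of_max_le_right hzR]) hpos hle hz

theorem RealizesCount.exists_insert {w : ℂ} (h : RealizesCount (ν ∘ some) x p (M + 1))
    (hν : ∀ j, 0 < ν j) (hnone : ν none = 1) (hk : 2 ≤ k)
    (hw : (p - C ((starRingEnd ℂ) w) * polePoly (ν ∘ some) x).rootMultiplicity w = k) :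
    ∃ x' p', RealizesCount ν x' p' (2 * (k + 1) + M) := by
  set q := polePoly (ν ∘ some) x with hq_def
  have hroot : fixedPtFun p q w = 0 := by
    have hpos : 0 < (p - C ((starRingEnd ℂ) w) * q).rootMultiplicity w := by omega
    simpa [fixedPtFun] using (rootMultiplicity_pos'.1 hpos).2
  have hq : q.eval w ≠ 0 := h.eval_polePoly_ne_zero hroot
  have hpole (j : ι) : q.eval (x j) = 0 := eval_polePoly_pole x (hν (some j))
  have hxw (j : ι) : x j ≠ w := fun hj => hq (hj ▸ hpole j)
  have hsum : ∑ j, ν j = 1 + ∑ j, (ν ∘ some) j := by rw [Fintype.sum_option, hnone]; rfl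
  obtain ⟨ε, hε, hcount⟩ := h.exists_hasZeroCount_insertPole hk hw hq
  refine ⟨fun o => o.elim w x, (X - C w) * p + C (ε : ℂ) * q,
    Option.injective_iff.2 ⟨h.injective, fun ⟨j, hj⟩ => hxw j hj⟩, ?_, ?_, ?_⟩
  · rw [hsum]
    refine natDegree_add_le_of_degree_le ?_ ?_
    · exact natDegree_mul_le.trans (by rw [natDegree_X_sub_C]; gcongr; exact h.natDegree_le)
    · refine (natDegree_C_mul_le _ _).trans ?_
      rw [hq_def, natDegree_polePoly]
      exact Nat.le_add_left _ _
  · rintro (_ | j)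
    · simp [hε, hq]
    · simpa [hpole] using ⟨sub_ne_zero.2 (hxw j), h.eval_ne_zero j⟩
  · rw [polePoly_option, hnone, pow_one]
    exact (fixedPtFun_insertPole p q w ε).symm ▸ hcount

theorem RealizesCount.exists_split {ν : Option (Option ι) → ℕ} {x : Option ι → ℂ}
    (h : RealizesCount (fun o => o.elim (ν none + ν (some none)) (ν ∘ some ∘ some)) x p N) :
    ∃ x', RealizesCount ν x' p N := by
  let y (a : ℂ) (o : Option (Option ι)) : ℂ := o.elim a x
  have hy : Continuous y := continuous_pi fun o => by
    cases o
    exacts [continuous_id, continuous_const]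
  have hpoly : polePoly ν (y (x none)) =
      polePoly (fun o => o.elim (ν none + ν (some none)) (ν ∘ some ∘ some)) x := by
    rw [polePoly_option, polePoly_option, polePoly_option, Option.elim_none, pow_add, mul_assoc]
    rfl
  have hdeg : p.natDegree ≤ ∑ o, ν o := by
    have := h.natDegree_le
    simp only [Fintype.sum_option] at this ⊢
    exact this.trans_eq (add_assoc _ _ _)
  have hcount : ∀ᶠ a in 𝓝 (x none), HasZeroCount (fixedPtFun p (polePoly ν (y a))) Set.univ N :=
    hy.continuousAt.eventually
      (HasZeroCount.eventually_fixedPtFun_polePoly hdeg (hpoly ▸ h.hasZeroCount))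
  have heval : ∀ᶠ a in 𝓝 (x none), p.eval a ≠ 0 :=
    p.continuous.continuousAt.eventually_ne (h.eval_ne_zero none)
  have hrange : ∀ᶠ a in 𝓝[≠] x none, a ∉ Set.range x :=
    mem_of_superset (nhdsNE_of_nhdsNE_sdiff_finite univ_mem (Set.finite_range x)) fun _ ha => ha.2
  obtain ⟨a, ⟨hcount, heval⟩, ha⟩ :=
    (((hcount.and heval).filter_mono nhdsWithin_le_nhds).and hrange).exists
  exact ⟨y a, Option.injective_iff.2 ⟨h.injective, ha⟩, hdeg,
    fun o => by cases o; exacts [heval, h.eval_ne_zero _], hcount⟩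

theorem exists_realizesCount_of_card_lt_sum (hμ : ∀ j, 0 < μ j) [Nonempty ι]
    (hsum : Fintype.card ι < ∑ j, μ j) :
    ∃ x p, RealizesCount μ x p (3 * ∑ j, μ j + 2 * Fintype.card ι - 3) := by
  classical
  by_cases hhalf : 2 * Fintype.card ι ≤ ∑ j, μ j + 1
  · exact exists_realizesCount_of_two_mul_card_le hμ hhalf
  obtain ⟨j₀, hj₀⟩ : ∃ j₀, μ j₀ = 1 := by
    by_contra! hne
    have htwo : ∑ _j : ι, 2 ≤ ∑ j, μ j :=
      Finset.sum_le_sum fun j _ => lt_of_le_of_ne (hμ j) (hne j).symm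
    rw [Finset.sum_const, Finset.card_univ, smul_eq_mul] at htwo
    omega
  set e := Equiv.optionSubtypeNe j₀
  have hcard : Fintype.card ι = Fintype.card {j // j ≠ j₀} + 1 := by
    rw [← Fintype.card_congr e, Fintype.card_option]
  have hsum' : ∑ j, μ j = 1 + ∑ j : {j // j ≠ j₀}, μ j := by
    rw [Fintype.sum_eq_add_sum_subtype_ne _ j₀, hj₀]
  obtain ⟨x, p, w, hp, hw⟩ := exists_realizesCount_of_card_lt (μ := fun j : {j // j ≠ j₀} => μ j)
    (fun j => hμ j) (by omega) (by omega)
  obtain ⟨x', p', hp'⟩ := RealizesCount.exists_insert (ν := μ ∘ e) hp (fun o => hμ (e o))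
    hj₀ (by omega) hw
  rw [show 3 * ∑ j, μ j + 2 * Fintype.card ι - 3 = 2 * (Fintype.card {j // j ≠ j₀} + 1) +
    3 * ∑ j : {j // j ≠ j₀}, μ j by omega]
  exact ⟨_, p', hp'.of_comp_equiv e⟩

theorem exists_realizesCount_one (hcard : 2 ≤ Fintype.card ι) :
    ∃ x p, RealizesCount (fun _ : ι => 1) x p (5 * Fintype.card ι - 5) := by
  obtain ⟨m, hm⟩ := Nat.exists_eq_add_of_le' hcard
  have e : Option (Option (Fin m)) ≃ ι := Fintype.equivOfCardEq (by simp [hm])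
  have hsum : ∑ o : Option (Fin m), o.elim 2 (fun _ => 1) = m + 2 := by
    simp [Fintype.sum_option, add_comm]
  obtain ⟨x, p, hp⟩ := exists_realizesCount_of_card_lt_sum
    (μ := fun o : Option (Fin m) => o.elim 2 fun _ => 1) (fun o => by cases o <;> simp)
    (by rw [hsum]; simp)
  obtain ⟨x', hx'⟩ := RealizesCount.exists_split (ν := fun _ => 1) hp
  rw [hsum, Fintype.card_option, Fintype.card_fin,
    show 3 * (m + 2) + 2 * (m + 1) - 3 = 5 * Fintype.card ι - 5 by omega] at hx'
  exact ⟨_, p, RealizesCount.of_comp_equiv e hx'⟩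

theorem RealizesCount.isCoprime (h : RealizesCount μ x p N) : IsCoprime p (polePoly μ x) :=
  IsCoprime.prod_right fun j _ => IsCoprime.pow_right <|
    ((irreducible_X_sub_C (x j)).coprime_iff_not_dvd.2 fun hdvd =>
      h.eval_ne_zero j (dvd_iff_isRoot.1 hdvd)).symm

theorem RealizesCount.encard_fixedPts (h : RealizesCount μ x p N) :
    (fixedPts p (polePoly μ x)).encard = N := by
  rw [← h.hasZeroCount.1]
  congr 1
  ext z
  exact ⟨fun hz => ⟨trivial, sub_eq_zero.2 hz.2⟩,
    fun hz => ⟨h.eval_polePoly_ne_zero hz.2, sub_eq_zero.1 hz.2⟩⟩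

end Combination

end FixedPointCount

/-- Sharpness of the fixed point bound: Given `d ≥ 2`, `1 ≤ n ≤ d` and a
partition `d = μ₁ + ⋯ + μ_n`, there is a rational function `r = p/q` with `deg p ≤ d`,
`q = ∏ (z − z_j)^{μ_j}` for distinct `z_j` (so `r` has degree `d`, `r(∞) ≠ ∞`, and
exactly `n` poles of multiplicities `μ₁, …, μ_n`), such that the equation
`r(z) = conj z` has exactly `min(3d + 2n − 3, 5d − 5)` solutions in `ℂ`. -/
theorem stmt_14 (d n : ℕ) (hd : 2 ≤ d) (hn1 : 1 ≤ n) (hnd : n ≤ d)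
    (μ : Fin n → ℕ) (hμ : ∀ j, 0 < μ j) (hsum : ∑ j, μ j = d) :
    ∃ (z : Fin n → ℂ) (p : Polynomial ℂ),
      Function.Injective z ∧
      p.natDegree ≤ d ∧
      IsCoprime p (∏ j, (X - C (z j)) ^ μ j) ∧
      (fixedPts p (∏ j, (X - C (z j)) ^ μ j)).Finite ∧
      (fixedPts p (∏ j, (X - C (z j)) ^ μ j)).ncard =
        min (3 * d + 2 * n - 3) (5 * d - 5) := by
  have hcard := Fintype.card_fin n
  obtain ⟨z, p, hp⟩ : ∃ z p,
      FixedPointCount.RealizesCount μ z p (min (3 * d + 2 * n - 3) (5 * d - 5)) := by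
    rcases hnd.lt_or_eq with hlt | rfl
    · have : Nonempty (Fin n) := ⟨⟨0, hn1⟩⟩
      rw [min_eq_left (by omega)]
      simpa only [hsum, hcard] using
        FixedPointCount.exists_realizesCount_of_card_lt_sum hμ (by omega)
    · have hones : ∑ _j : Fin n, 1 = ∑ j, μ j := by simp [hsum]
      obtain rfl : μ = fun _ => 1 := funext fun j =>
        ((Finset.sum_eq_sum_iff_of_le fun i _ => hμ i).1 hones j (Finset.mem_univ j)).symm
      rw [min_eq_right (by omega)]
      simpa only [hcard] using FixedPointCount.exists_realizesCount_one (ι := Fin n) (by omega)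
  have hencard := hp.encard_fixedPts
  exact ⟨z, p, hp.injective, hsum ▸ hp.natDegree_le, hp.isCoprime,
    Set.finite_of_encard_eq_coe hencard, congrArg ENat.toNat hencard⟩
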